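/- The set of pairs (α, β) ∈ ℝ² for which liminf_{n→∞} n · ‖nα‖ · ‖nβ‖ > 0 (i.e. the set of exceptions to Littlewood's conjecture) has Hausdorff dimension zero. -/

import Mathlib

open Filter

/-- The distance from a real number to the nearest integer. -/
noncomputable def distToInt (x : ℝ) : ℝ := |x - round x|

/-!
Attach to `(α, β)` the unimodular lattice of the vectors `(k + n α, n, l + n β)`. If `n‖nα‖‖nβ‖ ≥ ε`
for all `n ≥ 1`, the images of this lattice under `diag (σ⁻¹, σ², σ⁻¹)` accumulate, as `σ → 0`, on
lattices of norm gap `ε`: the norm form `|x₀ x₁ x₂|` is at least `ε` at all their nonzero vectors.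
By Minkowski's theorem these lattices form a compact set, which the diagonal group preserves, and
small squares around `(α, β)` become large squares of times of a planar unipotent flow. The set of
exceptions with a given `ε` therefore has dimension zero if, for every `d > 0`, the times in
`[0, L]` at which a one-parameter unipotent orbit has norm gap `ε` meet at most `L ^ d` unit
intervals for some large `L`.

Otherwise the tree of base `N` expansions of such times contains a ternary subtree whose branching
levels have positive density. The diagonal flow and the group of ternary digit sequences act on the
compact space of such trees of lattices, and averaging over a Følner sequence gives a nonzero finite
invariant measure for which almost every tree branches at infinitely many levels. By Poincaré
recurrence the diagonal flow carries a typical point `x` close to itself without fixing its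
unipotent orbit, since that would produce a nonzero algebraic integer in `ℚ` of absolute value less
than one. The unipotent flow makes `x` and its return diverge polynomially in time, and maximal
inequalities allow the times of the tree at which their displacement is of size one to be chosen so
that the displaced points are typical too. In the limit, two lattices differ by a nontrivial
unipotent matrix while having the same unipotent times, and a Hopf argument makes the set of times
at which a unipotent orbit has norm gap `ε` periodic. This is impossible: flowing along the period
shrinks a coordinate of a lattice vector given by Minkowski's theorem until the norm form drops
below `ε`.
-/

namespace LittlewoodExceptions

open Topology MeasureTheory Matrix
open scoped Finset NNReal ENNReal

/-! ### Lattices of positive norm gap -/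

section Lattices

variable {ι : Type*} [Fintype ι]

/-- The matrices `g` of covolume one for which the norm form `|∏ i, x i|` is at least `ε` at every
nonzero vector of the lattice `g ℤ^ι`. -/
def normGap [DecidableEq ι] (ε : ℝ) : Set (Matrix ι ι ℝ) :=
  {g | |g.det| = 1 ∧ ∀ v : ι → ℤ, v ≠ 0 → ε ≤ |∏ i, (g *ᵥ (Int.cast ∘ v)) i|}

/-- The matrices `g` of covolume one for which the norm form is at least `ε` at those nonzero
vectors of the lattice `g ℤ^ι` that have coordinates of absolute value at most `K`. -/
def localNormGap [DecidableEq ι] (ε K : ℝ) : Set (Matrix ι ι ℝ) :=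
  {g | |g.det| = 1 ∧ ∀ v : ι → ℤ, v ≠ 0 → (∀ i, |(g *ᵥ (Int.cast ∘ v)) i| ≤ K) →
    ε ≤ |∏ i, (g *ᵥ (Int.cast ∘ v)) i|}

/-- Two matrices of covolume one whose columns are bases of the same lattice: they differ by an
integer matrix of determinant `±1` acting on the right. -/
def SameLattice [DecidableEq ι] (g h : Matrix ι ι ℝ) : Prop :=
  |g.det| = 1 ∧ ∃ P : Matrix ι ι ℤ, |P.det| = 1 ∧ h = g * P.map Int.cast

lemma map_intCast_mulVec {m R : Type*} [NonAssocRing R] (P : Matrix m ι ℤ) (v : ι → ℤ) :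
    (P.map Int.cast : Matrix m ι R) *ᵥ (Int.cast ∘ v) = Int.cast ∘ (P *ᵥ v) :=
  funext fun i => (RingHom.map_mulVec (Int.castRingHom R) P v i).symm

variable [DecidableEq ι] {ε K : ℝ} {g h k : Matrix ι ι ℝ}

lemma mem_normGap_iff_forall_mem_localNormGap : g ∈ normGap ε ↔ ∀ K, g ∈ localNormGap ε K :=
  ⟨fun hg _ => ⟨hg.1, fun v hv _ => hg.2 v hv⟩, fun hg => ⟨(hg 0).1, fun v hv =>
    (hg (∑ i, |(g *ᵥ (Int.cast ∘ v)) i|)).2 v hv fun i =>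
      Finset.single_le_sum (fun i _ => abs_nonneg ((g *ᵥ (Int.cast ∘ v)) i)) (Finset.mem_univ i)⟩⟩

lemma isClosed_normGap : IsClosed (normGap ε : Set (Matrix ι ι ℝ)) := by
  have hcont (v : ι → ℤ) :
      Continuous fun g : Matrix ι ι ℝ => |∏ i, (g *ᵥ (Int.cast ∘ v)) i| :=
    (continuous_finsetProd _ fun i _ =>
      (continuous_apply i).comp (continuous_id.matrix_mulVec continuous_const)).abs
  simp only [normGap, Set.ofPred_and, Set.ofPred_forall]
  exact (isClosed_eq continuous_id.matrix_det.abs continuous_const).inter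
    (isClosed_iInter fun v => isClosed_iInter fun _ => isClosed_le continuous_const (hcont v))

lemma diagonal_mul_mem_normGap (hg : g ∈ normGap ε) {d : ι → ℝ} (hd : |∏ i, d i| = 1) :
    diagonal d * g ∈ normGap ε := by
  refine ⟨by rw [det_mul, det_diagonal, abs_mul, hd, hg.1, one_mul], fun v hv => ?_⟩
  rw [← mulVec_mulVec]
  simp only [mulVec_diagonal, Finset.prod_mul_distrib]
  rw [abs_mul, hd, one_mul]
  exact hg.2 v hv

lemma exists_inverse_of_abs_det_eq_one {P : Matrix ι ι ℤ} (hP : |P.det| = 1) :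
    ∃ Q : Matrix ι ι ℤ, |Q.det| = 1 ∧ P * Q = 1 ∧ Q * P = 1 := by
  have hu : IsUnit P.det := Int.isUnit_iff_abs_eq.2 hP
  refine ⟨P⁻¹, ?_, P.mul_nonsing_inv hu, P.nonsing_inv_mul hu⟩
  simpa [hP] using congrArg (|·|) (congrArg det (P.mul_nonsing_inv hu))

namespace SameLattice

lemma refl (hg : |g.det| = 1) : SameLattice g g := ⟨hg, 1, by simp, by simp⟩

lemma abs_det_right (hgh : SameLattice g h) : |h.det| = 1 := by
  obtain ⟨hg, P, hP, rfl⟩ := hgh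
  rw [det_mul, abs_mul, hg, ← Int.cast_det, ← Int.cast_abs, hP, Int.cast_one, one_mul]

lemma symm (hgh : SameLattice g h) : SameLattice h g := by
  refine ⟨hgh.abs_det_right, ?_⟩
  obtain ⟨-, P, hP, rfl⟩ := hgh
  obtain ⟨Q, hQ, hPQ, -⟩ := exists_inverse_of_abs_det_eq_one hP
  refine ⟨Q, hQ, ?_⟩
  rw [Matrix.mul_assoc, ← map_mul_intCast, hPQ]
  simp

lemma trans (hgh : SameLattice g h) (hhk : SameLattice h k) : SameLattice g k := by
  obtain ⟨hg, P, hP, rfl⟩ := hgh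
  obtain ⟨-, Q, hQ, rfl⟩ := hhk
  exact ⟨hg, P * Q, by rw [det_mul, abs_mul, hP, hQ, one_mul],
    by rw [map_mul_intCast, Matrix.mul_assoc]⟩

lemma mul_left (hgh : SameLattice g h) (hk : |k.det| = 1) : SameLattice (k * g) (k * h) := by
  obtain ⟨hg, P, hP, rfl⟩ := hgh
  exact ⟨by rw [det_mul, abs_mul, hk, hg, one_mul], P, hP, by rw [Matrix.mul_assoc]⟩

lemma mem_localNormGap (hgh : SameLattice g h) (hg : g ∈ localNormGap ε K) :
    h ∈ localNormGap ε K := by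
  refine ⟨hgh.abs_det_right, fun v hv => ?_⟩
  obtain ⟨-, P, hP, rfl⟩ := hgh
  obtain ⟨Q, -, -, hQP⟩ := exists_inverse_of_abs_det_eq_one hP
  rw [← mulVec_mulVec, map_intCast_mulVec]
  refine hg.2 _ fun hPv => hv ?_
  rw [← one_mulVec v, ← hQP, ← mulVec_mulVec, hPv, mulVec_zero]

lemma mem_normGap (hgh : SameLattice g h) (hg : g ∈ normGap ε) : h ∈ normGap ε := by
  rw [mem_normGap_iff_forall_mem_localNormGap] at hg ⊢
  exact fun K => hgh.mem_localNormGap (hg K)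

end SameLattice

lemma mem_normGap_of_tendsto {α : Type*} {u : Filter α} [u.NeBot] {y : α → Matrix ι ι ℝ}
    (hy : Tendsto y u (𝓝 g)) (hgap : ∀ K, ∀ᶠ a in u, y a ∈ localNormGap ε K) :
    g ∈ normGap ε := by
  have hmulVec (v : ι → ℤ) (i : ι) :
      Tendsto (fun a => (y a *ᵥ (Int.cast ∘ v)) i) u (𝓝 ((g *ᵥ (Int.cast ∘ v)) i)) :=
    (((continuous_apply i).comp (continuous_id.matrix_mulVec continuous_const)).tendsto g).comp hy
  refine ⟨?_, fun v hv => ?_⟩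
  · have hdet : Tendsto (fun a => |(y a).det|) u (𝓝 |g.det|) :=
      (continuous_id.matrix_det.abs.tendsto g).comp hy
    exact tendsto_nhds_unique hdet
      (tendsto_const_nhds.congr' ((hgap 0).mono fun a ha => ha.1.symm))
  · refine ge_of_tendsto (tendsto_finsetProd Finset.univ fun i _ => hmulVec v i).abs ?_
    set K := ∑ i, |(g *ᵥ (Int.cast ∘ v)) i| + 1
    have hle : ∀ᶠ a in u, ∀ i, |(y a *ᵥ (Int.cast ∘ v)) i| ≤ K := by
      refine eventually_all.2 fun i => (hmulVec v i).abs.eventually_le_const ?_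
      have := Finset.single_le_sum (fun i _ => abs_nonneg ((g *ᵥ (Int.cast ∘ v)) i))
        (Finset.mem_univ i)
      linarith
    filter_upwards [hgap K, hle] with a ha hale
    exact ha.2 v hv hale

lemma sameLattice_iff_adjugate_mul_integral : SameLattice g h ↔
    |g.det| = 1 ∧ |h.det| = 1 ∧ ∀ i j, (g.adjugate * h) i j ∈ Set.range (Int.cast : ℤ → ℝ) := by
  constructor
  · refine fun hgh => ⟨hgh.1, hgh.abs_det_right, fun i j => ?_⟩
    obtain ⟨hg, P, -, rfl⟩ := hgh
    rw [← Matrix.mul_assoc, adjugate_mul, Matrix.smul_mul, Matrix.one_mul]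
    rcases eq_or_eq_neg_of_abs_eq hg with hg | hg <;> rw [hg]
    · exact ⟨P i j, by simp⟩
    · exact ⟨-P i j, by simp⟩
  · rintro ⟨hg, hh, hint⟩
    choose Q hQ using hint
    have hgQ : g * (of Q).map Int.cast = g.det • h := by
      have hadj : (of Q).map Int.cast = g.adjugate * h := by ext i j; exact hQ i j
      rw [hadj, ← Matrix.mul_assoc, mul_adjugate, Matrix.smul_mul, Matrix.one_mul]
    obtain ⟨P, rfl⟩ : ∃ P : Matrix ι ι ℤ, h = g * P.map Int.cast := by
      rcases eq_or_eq_neg_of_abs_eq hg with hdet | hdet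
      · exact ⟨of Q, by rw [hgQ, hdet, one_smul]⟩
      · refine ⟨-of Q, ?_⟩
        have hneg : (-of Q).map Int.cast = -((of Q).map Int.cast : Matrix ι ι ℝ) := by ext; simp
        rw [hneg, Matrix.mul_neg, hgQ, hdet, neg_one_smul, neg_neg]
    refine ⟨hg, P, ?_, rfl⟩
    rw [det_mul, abs_mul, hg, one_mul, ← Int.cast_det] at hh
    exact_mod_cast hh

lemma isClosed_sameLattice :
    IsClosed {p : Matrix ι ι ℝ × Matrix ι ι ℝ | SameLattice p.1 p.2} := by
  simp only [sameLattice_iff_adjugate_mul_integral, Set.ofPred_and, Set.ofPred_forall]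
  refine (isClosed_eq continuous_fst.matrix_det.abs continuous_const).inter
    ((isClosed_eq continuous_snd.matrix_det.abs continuous_const).inter
      (isClosed_iInter fun i => isClosed_iInter fun j => ?_))
  exact Int.isClosedEmbedding_coe_real.isClosed_range.preimage
    ((continuous_fst.matrix_adjugate.matrix_mul continuous_snd).matrix_elem i j)

lemma sameLattice_of_tendsto {α : Type*} {u : Filter α} [u.NeBot] {a b : α → Matrix ι ι ℝ}
    (ha : Tendsto a u (𝓝 g)) (hb : Tendsto b u (𝓝 h)) (hab : ∀ᶠ n in u, SameLattice (a n) (b n)) :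
    SameLattice g h :=
  isClosed_sameLattice.mem_of_tendsto (ha.prodMk_nhds hb) hab

lemma exists_int_ne_zero_forall_abs_mulVec_le (hg : g.det ≠ 0) {r : ι → ℝ} (hr : ∀ i, 0 ≤ r i)
    (hgr : |g.det| < ∏ i, r i) :
    ∃ v : ι → ℤ, v ≠ 0 ∧ ∀ i, |(g *ᵥ (Int.cast ∘ v)) i| ≤ r i := by
  set b := Pi.basisFun ℝ ι
  set L := (Submodule.span ℤ (Set.range b)).toAddSubgroup
  have : Countable L := inferInstanceAs (Countable (Submodule.span ℤ (Set.range b)))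
  set s : Set (ι → ℝ) := toLin' g ⁻¹' Set.univ.pi fun i => Set.Icc (-r i) (r i)
  have hs_convex : Convex ℝ s := (convex_pi fun i _ => convex_Icc _ _).linear_preimage _
  have mem_s {x : ι → ℝ} : x ∈ s ↔ ∀ i, |(g *ᵥ x) i| ≤ r i := by
    simp only [s, Set.mem_preimage, Set.mem_univ_pi, Set.mem_Icc, toLin'_apply, abs_le]
  have hs_symm : ∀ x ∈ s, -x ∈ s := by
    simp only [mem_s, mulVec_neg, Pi.neg_apply, abs_neg, imp_self, implies_true]
  have volume_s : volume s = ENNReal.ofReal (|g.det|⁻¹ * ∏ i, (2 * r i)) := by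
    rw [Measure.addHaar_preimage_linearMap _ (by rwa [LinearMap.det_toLin']),
      LinearMap.det_toLin', volume_pi, Measure.pi_pi, ENNReal.ofReal_mul (by positivity), abs_inv,
      ENNReal.ofReal_prod_of_nonneg fun i _ => mul_nonneg zero_le_two (hr i)]
    simp only [Real.volume_Icc, sub_neg_eq_add, two_mul]
  have volume_fundamentalDomain : volume (ZSpan.fundamentalDomain b) = 1 := by
    have hb : (of b : Matrix ι ι ℝ) = 1 := by
      ext i j; simp [b, one_apply, Pi.single_apply, eq_comm]
    rw [ZSpan.volume_fundamentalDomain, hb]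
    simp
  have volume_lt : volume (ZSpan.fundamentalDomain b) * 2 ^ Module.finrank ℝ (ι → ℝ) <
      volume s := by
    have hdet : 0 < |g.det| := abs_pos.2 hg
    rw [volume_fundamentalDomain, volume_s, one_mul, Module.finrank_fintype_fun_eq_card,
      Finset.prod_mul_distrib, Finset.prod_const, Finset.card_univ, ← ENNReal.ofReal_ofNat 2,
      ← ENNReal.ofReal_pow zero_le_two, ENNReal.ofReal_lt_ofReal_iff_of_nonneg (by positivity),
      ← mul_assoc, mul_right_comm, lt_mul_iff_one_lt_left (by positivity), inv_mul_eq_div,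
      one_lt_div hdet]
    exact hgr
  obtain ⟨x, hx0, hxs⟩ := exists_ne_zero_mem_lattice_of_measure_mul_two_pow_lt_measure
    (L := L) (ZSpan.isAddFundamentalDomain b volume) hs_symm hs_convex volume_lt
  choose v hv using (b.mem_span_iff_repr_mem ℤ (x : ι → ℝ)).1 x.2
  have hxv : (x : ι → ℝ) = Int.cast ∘ v := funext fun i => (hv i).symm
  refine ⟨v, ?_, mem_s.1 (hxv ▸ hxs)⟩
  rintro rfl
  exact hx0 (Subtype.ext (hxv.trans (by ext; simp)))

lemma det_updateCol_mulVec {R : Type*} [CommRing R] (V : Matrix ι ι R) (c : ι → R) (k : ι) :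
    (V.updateCol k (V *ᵥ c)).det = V.det * c k := by
  rw [← cramer_apply, cramer_eq_adjugate_mulVec, mulVec_mulVec, adjugate_mul, smul_mulVec,
    one_mulVec, Pi.smul_apply, smul_eq_mul]

lemma exists_inv_apply_notMem_range_intCast {V : Matrix ι ι ℤ} (hV : V.det ≠ 0)
    (hV1 : V.det.natAbs ≠ 1) :
    ∃ k j, (V.map Int.cast : Matrix ι ι ℝ)⁻¹ k j ∉ Set.range (Int.cast : ℤ → ℝ) := by
  by_contra! hint
  choose Q hQ using hint
  have hu : IsUnit (V.map Int.cast : Matrix ι ι ℝ).det := by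
    rw [← Int.cast_det]; exact isUnit_iff_ne_zero.2 (by exact_mod_cast hV)
  have hVQ : V.map Int.cast * (of Q).map Int.cast = (1 : Matrix ι ι ℝ) := by
    rw [← mul_nonsing_inv _ hu]; congr 1; ext k j; exact hQ k j
  have hdet : V.det * (of Q).det = 1 := by
    have := congrArg det hVQ
    rw [det_mul, ← Int.cast_det, ← Int.cast_det, det_one] at this
    exact_mod_cast this
  exact hV1 (Int.natAbs_of_isUnit (.of_mul_eq_one _ hdet))

/- Reduce a standard basis vector outside the sublattice `V ℤ^ι` modulo that sublattice. -/
lemma exists_half_integral_combination {V : Matrix ι ι ℤ} (hV : V.det ≠ 0)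
    (hV1 : V.det.natAbs ≠ 1) :
    ∃ (c : ι → ℝ) (e : ι → ℤ) (k : ι), (∀ i, |c i| ≤ 1 / 2) ∧ c k ≠ 0 ∧
      V.map Int.cast *ᵥ c = Int.cast ∘ e := by
  obtain ⟨k, j, hkj⟩ := exists_inv_apply_notMem_range_intCast hV hV1
  have hu : IsUnit (V.map Int.cast : Matrix ι ι ℝ).det := by
    rw [← Int.cast_det]; exact isUnit_iff_ne_zero.2 (by exact_mod_cast hV)
  set q : ι → ℝ := (V.map Int.cast)⁻¹.col j
  have hq : V.map Int.cast *ᵥ q = Int.cast ∘ (Pi.single j 1 : ι → ℤ) := by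
    have hsingle : q = (V.map Int.cast)⁻¹ *ᵥ Pi.single j 1 := by simp [q]
    rw [hsingle, mulVec_mulVec, mul_nonsing_inv _ hu, one_mulVec]
    ext i; simp [Pi.single_apply]
  refine ⟨fun i => q i - round (q i), Pi.single j 1 - V *ᵥ fun i => round (q i), k,
    fun i => abs_sub_round _, fun h => hkj ⟨round (q k), (sub_eq_zero.1 h).symm⟩, ?_⟩
  change V.map Int.cast *ᵥ (q - Int.cast ∘ fun i => round (q i)) = _
  rw [mulVec_sub, hq, map_intCast_mulVec]
  ext i; simp

lemma abs_mul_updateCol_mulVec_le {W : Matrix ι ι ℝ} {B : ℝ} (hW : ∀ i j, |W i j| ≤ B)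
    {c : ι → ℝ} (hc : ∀ i, |c i| ≤ 1 / 2) (k i j : ι) :
    |W.updateCol k (W *ᵥ c) i j| ≤ B * Fintype.card ι := by
  have hB : 0 ≤ B := (abs_nonneg _).trans (hW i j)
  have hcard : (1 : ℝ) ≤ Fintype.card ι := by exact_mod_cast Fintype.card_pos_iff.2 ⟨i⟩
  rw [updateCol_apply]
  split_ifs with hj
  · calc |(W *ᵥ c) i| ≤ ∑ l, |W i l * c l| := Finset.abs_sum_le_sum_abs _ _
      _ ≤ ∑ _ : ι, B := Finset.sum_le_sum fun l _ => by
        rw [abs_mul]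
        exact (mul_le_mul (hW i l) (hc l) (abs_nonneg _) hB).trans (by linarith)
      _ = B * Fintype.card ι := by simp [mul_comm]
  · exact (hW i j).trans (le_mul_of_one_le_right hB hcard)

lemma exists_sameLattice_abs_le_of_sublattice (hg : |g.det| = 1) (V : Matrix ι ι ℤ)
    (hV : V.det ≠ 0) (B : ℝ) (hB : ∀ i j, |(g * (V.map Int.cast : Matrix ι ι ℝ)) i j| ≤ B) :
    ∃ x, SameLattice g x ∧ ∀ i j, |x i j| ≤ B * Fintype.card ι ^ V.det.natAbs := by
  induction hn : V.det.natAbs using Nat.strong_induction_on generalizing V B with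
  | _ n ih =>
  have hB0 (i : ι) : 0 ≤ B := (abs_nonneg _).trans (hB i i)
  have hcard (i : ι) : (1 : ℝ) ≤ Fintype.card ι := by exact_mod_cast Fintype.card_pos_iff.2 ⟨i⟩
  by_cases hV1 : V.det.natAbs = 1
  · refine ⟨g * V.map Int.cast, ⟨hg, V, by rw [Int.abs_eq_natAbs, hV1]; rfl, rfl⟩, fun i j => ?_⟩
    exact (hB i j).trans (le_mul_of_one_le_right (hB0 i) (one_le_pow₀ (hcard i)))
  · obtain ⟨c, e, k, hc, hck, he⟩ := exists_half_integral_combination hV hV1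
    have hmap : (V.updateCol k e).map Int.cast =
        (V.map Int.cast).updateCol k (V.map Int.cast *ᵥ c : ι → ℝ) := by
      rw [map_updateCol, he]
    have hdet : ((V.updateCol k e).det : ℝ) = V.det * c k := by
      rw [Int.cast_det, Int.cast_det, hmap, det_updateCol_mulVec]
    have hVpos : 0 < |(V.det : ℝ)| := abs_pos.2 (by exact_mod_cast hV)
    have hne : (V.updateCol k e).det ≠ 0 := by
      have : ((V.updateCol k e).det : ℝ) ≠ 0 := hdet ▸ mul_ne_zero (abs_pos.1 hVpos) hck
      exact_mod_cast this
    have hlt : (V.updateCol k e).det.natAbs < n := by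
      have : |((V.updateCol k e).det : ℝ)| < |(V.det : ℝ)| := by
        rw [hdet, abs_mul]; nlinarith [hc k]
      rw [← hn, Int.natAbs_lt_iff_sq_lt, sq_lt_sq]
      exact_mod_cast this
    have hcol : g * (V.updateCol k e).map Int.cast =
        (g * V.map Int.cast).updateCol k ((g * V.map Int.cast) *ᵥ c) := by
      rw [hmap, mul_updateCol, mulVec_mulVec]
    obtain ⟨x, hgx, hx⟩ := ih _ hlt (V.updateCol k e) hne (B * Fintype.card ι)
      (fun i j => hcol ▸ abs_mul_updateCol_mulVec_le hB hc k i j) rfl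
    refine ⟨x, hgx, fun i j => (hx i j).trans ?_⟩
    rw [mul_assoc, ← pow_succ']
    exact mul_le_mul_of_nonneg_left (pow_le_pow_right₀ (hcard i) hlt) (hB0 i)

end Lattices

/-! ### Reduction theory and unipotent orbits -/

section Reduction

lemma isCompact_setOf_forall_abs_le {m n : Type*} (C : ℝ) :
    IsCompact {g : Matrix m n ℝ | ∀ i j, |g i j| ≤ C} := by
  have hbox : {g : Matrix m n ℝ | ∀ i j, |g i j| ≤ C} =
      Set.univ.pi fun _ => Set.univ.pi fun _ => Set.Icc (-C) C := by
    refine Set.ext fun g => ⟨fun h i _ j _ => abs_le.1 (h i j), fun h i j => ?_⟩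
    exact abs_le.2 (h i trivial j trivial)
  rw [hbox]
  exact isCompact_univ_pi fun _ => isCompact_univ_pi fun _ => isCompact_Icc

variable {ι : Type*} [Fintype ι] [DecidableEq ι] {ε : ℝ} {g : Matrix ι ι ℝ}

lemma exists_int_matrix_of_minkowski (hg : |g.det| = 1) {k : ℝ} (hk : 0 < k) :
    ∃ V : Matrix ι ι ℤ, (∀ m, V.col m ≠ 0) ∧
      (∀ m, |(g *ᵥ (Int.cast ∘ V.col m)) m| ≤ 2 * k ^ (Fintype.card ι - 1)) ∧
      ∀ i m, i ≠ m → |(g *ᵥ (Int.cast ∘ V.col m)) i| ≤ k⁻¹ := by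
  have hcol (m : ι) : ∃ v : ι → ℤ, v ≠ 0 ∧ ∀ i, |(g *ᵥ (Int.cast ∘ v)) i| ≤
      if i = m then 2 * k ^ (Fintype.card ι - 1) else k⁻¹ := by
    refine exists_int_ne_zero_forall_abs_mulVec_le (abs_pos.1 (hg ▸ one_pos))
      (fun i => by split_ifs <;> positivity) ?_
    rw [← Finset.mul_prod_erase _ _ (Finset.mem_univ m), if_pos rfl,
      Finset.prod_congr rfl fun i hi => if_neg (Finset.ne_of_mem_erase hi), Finset.prod_const,
      Finset.card_erase_of_mem (Finset.mem_univ m), Finset.card_univ, inv_pow, mul_assoc,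
      mul_inv_cancel₀ (by positivity), hg]
    norm_num
  choose v hv0 hv using hcol
  exact ⟨of fun i m => v m i, hv0, fun m => (hv m m).trans_eq (if_pos rfl),
    fun i m him => (hv m i).trans_eq (if_neg him)⟩

lemma det_ne_zero_of_forall_le_abs_prod {W : Matrix ι ι ℝ} {k : ℝ} (hk : 1 ≤ k)
    (hεk : Fintype.card ι ≤ ε * k) (hprod : ∀ m, ε ≤ |∏ i, W i m|)
    (hoff : ∀ i m, i ≠ m → |W i m| ≤ k⁻¹) : W.det ≠ 0 := by
  set p := Fintype.card ι - 1
  have card_erase (m : ι) : (Finset.univ.erase m).card = p :=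
    Finset.card_erase_of_mem (Finset.mem_univ m)
  refine det_ne_zero_of_sum_col_lt_diag fun m => ?_
  have hdiag : ε ≤ |W m m| * k⁻¹ ^ p := by
    have h := hprod m
    rw [← Finset.mul_prod_erase _ _ (Finset.mem_univ m), abs_mul, Finset.abs_prod] at h
    refine h.trans (mul_le_mul_of_nonneg_left ?_ (abs_nonneg _))
    calc ∏ i ∈ Finset.univ.erase m, |W i m| ≤ ∏ _i ∈ Finset.univ.erase m, k⁻¹ :=
          Finset.prod_le_prod (fun _ _ => abs_nonneg _)
            fun i hi => hoff i m (Finset.ne_of_mem_erase hi)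
      _ = k⁻¹ ^ p := by rw [Finset.prod_const, card_erase]
  have hp : (p : ℝ) < Fintype.card ι := by
    exact_mod_cast Nat.sub_lt (Fintype.card_pos_iff.2 ⟨m⟩) one_pos
  calc ∑ i ∈ Finset.univ.erase m, ‖W i m‖ ≤ ∑ _i ∈ Finset.univ.erase m, k⁻¹ :=
        Finset.sum_le_sum fun i hi => hoff i m (Finset.ne_of_mem_erase hi)
    _ = p * k⁻¹ := by rw [Finset.sum_const, card_erase, nsmul_eq_mul]
    _ < ε := by rw [← div_eq_mul_inv, div_lt_iff₀ (by positivity)]; linarith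
    _ ≤ |W m m| * k⁻¹ ^ p := hdiag
    _ ≤ ‖W m m‖ := mul_le_of_le_one_right (abs_nonneg _)
        (pow_le_one₀ (by positivity) (inv_le_one_of_one_le₀ hk))

theorem exists_bounded_sameLattice_of_localNormGap (hε : 0 < ε) :
    ∃ K C : ℝ, ∀ g ∈ localNormGap (ι := ι) ε K, ∃ x, SameLattice g x ∧ ∀ i j, |x i j| ≤ C := by
  set N := Fintype.card ι
  obtain ⟨k, hk, hεk⟩ : ∃ k : ℝ, 1 ≤ k ∧ N ≤ ε * k :=
    ⟨max 1 (N / ε), le_max_left _ _, (div_le_iff₀' hε).1 (le_max_right _ _)⟩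
  set B : ℝ := 2 * k ^ (N - 1)
  have one_le_B : 1 ≤ B := by linarith [one_le_pow₀ hk (n := N - 1)]
  refine ⟨B, B * N ^ ⌈(N.factorial • B ^ N : ℝ)⌉₊, fun g ⟨hg, hgap⟩ => ?_⟩
  obtain ⟨V, hV0, hVdiag, hVoff⟩ := exists_int_matrix_of_minkowski hg (one_pos.trans_le hk)
  have hVB (i m : ι) : |(g *ᵥ (Int.cast ∘ V.col m)) i| ≤ B := by
    rcases eq_or_ne i m with rfl | him
    · exact hVdiag i
    · exact (hVoff i m him).trans ((inv_le_one_of_one_le₀ hk).trans one_le_B)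
  set W : Matrix ι ι ℝ := g * V.map Int.cast
  have hdet0 : W.det ≠ 0 := det_ne_zero_of_forall_le_abs_prod hk hεk
    (fun m => hgap (V.col m) (hV0 m) fun i => hVB i m) hVoff
  have hdet_le : |W.det| ≤ N.factorial • B ^ N :=
    det_le (abv := AbsoluteValue.abs) fun i j => hVB i j
  have hdet : |W.det| = V.det.natAbs := by
    rw [det_mul, abs_mul, hg, one_mul, ← Int.cast_det, Nat.cast_natAbs, Int.cast_abs]
  have hV : V.det ≠ 0 := by
    intro hV; exact hdet0 (abs_eq_zero.1 (by simp [hdet, hV]))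
  obtain ⟨x, hgx, hx⟩ := exists_sameLattice_abs_le_of_sublattice hg V hV B hVB
  refine ⟨x, hgx, fun i j => (hx i j).trans ?_⟩
  have one_le_N : (1 : ℝ) ≤ N := by exact_mod_cast Fintype.card_pos_iff.2 ⟨i⟩
  refine mul_le_mul_of_nonneg_left (pow_le_pow_right₀ one_le_N ?_) (by linarith)
  exact_mod_cast (hdet ▸ hdet_le).trans (Nat.le_ceil _)

end Reduction

section UnipotentFlow

lemma continuous_transvection {ι : Type*} [DecidableEq ι] (i j : ι) :
    Continuous (transvection i j : ℝ → Matrix ι ι ℝ) := by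
  refine continuous_matrix fun a b => ?_
  simp only [transvection, Matrix.add_apply, Matrix.single_apply]
  split_ifs <;> fun_prop

variable {ι : Type*} [Fintype ι] [DecidableEq ι] {ε : ℝ} {i j : ι} {g h : Matrix ι ι ℝ}

lemma transvection_mulVec {R : Type*} [CommRing R] (i j : ι) (c : R) (w : ι → R) :
    transvection i j c *ᵥ w = w + Pi.single i (c * w j) := by
  rw [transvection, add_mulVec, one_mulVec, single_mulVec]
  rfl

lemma abs_det_transvection (hij : i ≠ j) (t : ℝ) : |(transvection i j t).det| = 1 := by
  rw [det_transvection_of_ne i j hij, abs_one]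

/-- The times at which the one-parameter unipotent flow in the root direction `(i, j)` started at
`g` visits the matrices with norm gap `ε`. -/
def gapTimes (ε : ℝ) (i j : ι) (g : Matrix ι ι ℝ) : Set ℝ :=
  {w | transvection i j w * g ∈ normGap ε}

lemma SameLattice.gapTimes_subset (hgh : SameLattice g h) (hij : i ≠ j) :
    gapTimes ε i j g ⊆ gapTimes ε i j h :=
  fun _ hw => (hgh.mul_left (abs_det_transvection hij _)).mem_normGap hw

lemma SameLattice.gapTimes_eq (hgh : SameLattice g h) (hij : i ≠ j) :
    gapTimes ε i j g = gapTimes ε i j h :=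
  (hgh.gapTimes_subset hij).antisymm (hgh.symm.gapTimes_subset hij)

lemma mem_gapTimes_transvection_mul (hij : i ≠ j) {w b : ℝ} :
    w ∈ gapTimes ε i j (transvection i j b * g) ↔ w + b ∈ gapTimes ε i j g := by
  rw [gapTimes, gapTimes, Set.mem_ofPred_eq, Set.mem_ofPred_eq, ← Matrix.mul_assoc,
    transvection_mul_transvection_same i j hij]

lemma isClosed_gapTimes_graph (ε : ℝ) (i j : ι) :
    IsClosed {p : Matrix ι ι ℝ × ℝ | p.2 ∈ gapTimes ε i j p.1} :=
  isClosed_normGap.preimage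
    (((continuous_transvection i j).comp continuous_snd).matrix_mul continuous_fst)

lemma prod_eq_mul_mul_prod_erase_erase {M : Type*} [CommMonoid M] (hij : i ≠ j) (f : ι → M) :
    ∏ l, f l = f i * f j * ∏ l ∈ (Finset.univ.erase i).erase j, f l := by
  rw [mul_assoc, Finset.mul_prod_erase _ _ (by simp [hij.symm]),
    Finset.mul_prod_erase _ _ (Finset.mem_univ i)]

lemma exists_vector_small_in_direction (hg : g ∈ normGap ε) (hij : i ≠ j) {δ : ℝ} (hδ : 0 < δ) :
    ∃ v : ι → ℤ, v ≠ 0 ∧ |(g *ᵥ (Int.cast ∘ v)) i| ≤ 2 / δ ∧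
      ε * δ / 2 ≤ |(g *ᵥ (Int.cast ∘ v)) j| ∧ |(g *ᵥ (Int.cast ∘ v)) j| ≤ δ ∧
      ∏ l ∈ (Finset.univ.erase i).erase j, |(g *ᵥ (Int.cast ∘ v)) l| ≤ 1 := by
  set r : ι → ℝ := fun l => if l = i then 2 / δ else if l = j then δ else 1
  have hr_rest : ∀ l ∈ (Finset.univ.erase i).erase j, r l = 1 := by
    intro l hl
    simp only [Finset.mem_erase] at hl
    simp [r, hl.1, hl.2.1]
  have hr_prod : ∏ l, r l = 2 := by
    rw [prod_eq_mul_mul_prod_erase_erase hij, Finset.prod_eq_one hr_rest]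
    simp [r, hij.symm, hδ.ne']
  obtain ⟨v, hv0, hv⟩ := exists_int_ne_zero_forall_abs_mulVec_le (r := r)
    (abs_pos.1 (hg.1 ▸ one_pos)) (fun l => by simp only [r]; split_ifs <;> positivity)
    (by rw [hg.1, hr_prod]; norm_num)
  set w := g *ᵥ (Int.cast ∘ v)
  have hwi : |w i| ≤ 2 / δ := by simpa [r] using hv i
  have hrest : ∏ l ∈ (Finset.univ.erase i).erase j, |w l| ≤ 1 :=
    Finset.prod_le_one (fun _ _ => abs_nonneg _) fun l hl => (hv l).trans_eq (hr_rest l hl)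
  refine ⟨v, hv0, hwi, ?_, by simpa [r, hij.symm] using hv j, hrest⟩
  have hgap := hg.2 v hv0
  rw [Finset.abs_prod, prod_eq_mul_mul_prod_erase_erase hij] at hgap
  have : ε ≤ 2 / δ * |w j| := calc
    ε ≤ |w i| * |w j| * 1 := hgap.trans (by gcongr)
    _ ≤ 2 / δ * |w j| := by rw [mul_one]; gcongr
  rw [div_mul_eq_mul_div, le_div_iff₀ hδ] at this
  linarith

lemma exists_int_abs_add_mul_le (x : ℝ) {y : ℝ} (hy : y ≠ 0) :
    ∃ k : ℤ, |x + k * y| ≤ |y| ∧ -(k : ℝ) ≤ |x| / |y| + 1 := by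
  have hround := abs_sub_round (-x / y)
  refine ⟨round (-x / y), ?_, ?_⟩
  · have hx : x + round (-x / y) * y = -(-x / y - round (-x / y)) * y := by field_simp; ring
    rw [hx, abs_mul, abs_neg]
    nlinarith [abs_nonneg y]
  · have := neg_abs_le (-x / y)
    rw [abs_div, abs_neg] at this
    linarith [(abs_le.1 hround).2]

lemma le_abs_add_mul_of_add_mem_gapTimes (hij : i ≠ j) {t c : ℝ} (h : t + c ∈ gapTimes ε i j g)
    {v : ι → ℤ} (hv : v ≠ 0) {w : ι → ℝ}
    (hw : (transvection i j t * g) *ᵥ (Int.cast ∘ v) = w) :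
    ε ≤ |w i + c * w j| * |w j| * ∏ l ∈ (Finset.univ.erase i).erase j, |w l| := by
  have hflow : (transvection i j (t + c) * g) *ᵥ (Int.cast ∘ v) = w + Pi.single i (c * w j) := by
    rw [← hw, ← transvection_mulVec, mulVec_mulVec, ← Matrix.mul_assoc,
      transvection_mul_transvection_same i j hij, add_comm]
  have hrest : ∏ l ∈ (Finset.univ.erase i).erase j, |(w + Pi.single i (c * w j) : ι → ℝ) l| =
      ∏ l ∈ (Finset.univ.erase i).erase j, |w l| :=
    Finset.prod_congr rfl fun l hl => by simp [(Finset.mem_erase.1 (Finset.mem_erase.1 hl).2).1]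
  have hgap := h.2 v hv
  rw [hflow, Finset.abs_prod, prod_eq_mul_mul_prod_erase_erase hij, hrest] at hgap
  simpa only [Pi.add_apply, Pi.single_eq_same, Pi.single_eq_of_ne hij.symm, add_zero] using hgap

/- Apply Minkowski's theorem to the lattice reached after a long time: the unipotent flow can be run
backwards along the period to shrink the `i`-th coordinate of a vector whose `j`-th coordinate is
already small, which violates the norm gap. -/
theorem not_mapsTo_add_gapTimes (hε : 0 < ε) (hij : i ≠ j) (hg : g ∈ normGap ε) {b : ℝ}
    (hb : b ≠ 0) : ¬ Set.MapsTo (· + b) (gapTimes ε i j g) (gapTimes ε i j g) := by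
  intro hmaps
  have hmem (n : ℕ) : (n * b : ℝ) ∈ gapTimes ε i j g := by
    have h0 : (0 : ℝ) ∈ gapTimes ε i j g := by simpa [gapTimes] using hg
    simpa using hmaps.iterate n h0
  have : 0 < |b| := abs_pos.2 hb
  obtain ⟨δ, hδ0, hδ⟩ : ∃ δ : ℝ, 0 < δ ∧ |b| * δ * δ < ε := by
    have hlim : Tendsto (fun δ : ℝ => |b| * δ * δ) (𝓝[>] 0) (𝓝 (|b| * 0 * 0)) :=
      (Continuous.tendsto (by fun_prop) _).mono_left nhdsWithin_le_nhds
    obtain ⟨δ, hδ, hδ0⟩ := ((hlim.eventually_lt_const (by simpa using hε)).and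
      self_mem_nhdsWithin).exists
    exact ⟨δ, hδ0, hδ⟩
  obtain ⟨n, hn⟩ := exists_nat_ge (2 / δ / (|b| * (ε * δ / 2)) + 1)
  obtain ⟨v, hv0, hwi, hwj_ge, hwj_le, hrest⟩ :=
    exists_vector_small_in_direction (hmem n) hij hδ0
  generalize hw : (transvection i j (n * b) * g) *ᵥ (Int.cast ∘ v) = w at hwi hwj_ge hwj_le hrest
  have hwj0 : 0 < |w j| := lt_of_lt_of_le (by positivity) hwj_ge
  obtain ⟨k, hk, hkn⟩ := exists_int_abs_add_mul_le (w i) (mul_ne_zero hb (abs_pos.1 hwj0))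
  obtain ⟨m, hm⟩ : ∃ m : ℕ, (m : ℝ) = n + k := by
    have h1 : |w i| / |b * w j| ≤ 2 / δ / (|b| * (ε * δ / 2)) := by rw [abs_mul]; gcongr
    have h2 : 0 ≤ (n : ℤ) + k := by
      have : (0 : ℝ) ≤ n + k := by linarith
      exact_mod_cast this
    obtain ⟨m, hm⟩ := Int.eq_ofNat_of_zero_le h2
    exact ⟨m, by exact_mod_cast hm.symm⟩
  have hgap := le_abs_add_mul_of_add_mem_gapTimes hij (t := n * b) (c := k * b)
    (by rw [← add_mul, ← hm]; exact hmem m) hv0 hw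
  have hwi' : |w i + k * b * w j| ≤ |b| * δ := by
    rw [mul_assoc]
    exact hk.trans (by rw [abs_mul]; gcongr)
  have : ε ≤ |b| * δ * δ * 1 := hgap.trans (by gcongr)
  linarith

end UnipotentFlow

/-! ### The compact space of configurations -/

section DiagonalFlow

variable {ι 𝕜 : Type*} [Fintype ι] [DecidableEq ι] [Field 𝕜]

lemma diagonal_mul_eq_mul_diagonal {d : ι → 𝕜} (hd : ∀ i, d i ≠ 0) (g : Matrix ι ι 𝕜) :
    diagonal d * g = of (fun i j => d i / d j * g i j) * diagonal d := by
  ext i j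
  have := hd j
  simp only [diagonal_mul, mul_diagonal, of_apply]
  field_simp

lemma diagonal_mul_transvection {d : ι → 𝕜} (hd : ∀ i, d i ≠ 0) {i j : ι} (hij : i ≠ j) (t : 𝕜) :
    diagonal d * transvection i j t = transvection i j (d i / d j * t) * diagonal d := by
  rw [diagonal_mul_eq_mul_diagonal hd]
  congr 1
  ext a b
  rcases eq_or_ne a b with rfl | hab
  · have : ¬ (i = a ∧ j = a) := fun h => hij (h.1.trans h.2.symm)
    simp [transvection, single_apply, this, hd a]
  · by_cases h : i = a ∧ j = b
    · obtain ⟨rfl, rfl⟩ := h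
      simp [transvection, hij]
    · simp [transvection, single_apply, h, hab]

end DiagonalFlow

/-- The constants of the argument: the norm gap `ε`, the base `M` of the diagonal flow, and a bound
`C` for the entries of suitable bases of all lattices of norm gap `ε`. -/
structure Params where
  ε : ℝ
  C : ℝ
  M : ℕ
  ε_pos : 0 < ε
  two_le_M : 2 ≤ M
  exists_bounded_sameLattice : ∀ g ∈ normGap (ι := Fin 3) ε, ∃ x, SameLattice g x ∧
    ∀ i j, |x i j| ≤ C

namespace Params

lemma exists_eq {ε : ℝ} {M : ℕ} (hε : 0 < ε) (hM : 2 ≤ M) : ∃ P : Params, P.ε = ε ∧ P.M = M := by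
  obtain ⟨K, C, hC⟩ := exists_bounded_sameLattice_of_localNormGap (ι := Fin 3) hε
  exact ⟨⟨ε, C, M, hε, hM, fun g hg =>
    hC g (mem_normGap_iff_forall_mem_localNormGap.1 hg K)⟩, rfl, rfl⟩

variable (P : Params)

lemma M_ne_zero : (P.M : ℝ) ≠ 0 :=
  Nat.cast_ne_zero.2 (zero_lt_two.trans_le P.two_le_M).ne'

lemma one_lt_M : (1 : ℝ) < P.M :=
  Nat.one_lt_cast.2 (one_lt_two.trans_le P.two_le_M)

/-- The factor by which the `l`-th power of the diagonal flow dilates its unipotent directions. -/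
noncomputable def q (l : ℤ) : ℝ :=
  (P.M : ℝ) ^ (3 * l)

lemma q_pos (l : ℤ) : 0 < P.q l :=
  zpow_pos (zero_lt_one.trans P.one_lt_M) _

lemma q_zero : P.q 0 = 1 := by simp [q]

lemma q_add (k l : ℤ) : P.q (k + l) = P.q k * P.q l := by
  rw [q, mul_add, zpow_add₀ P.M_ne_zero, q, q]

lemma q_mono : Monotone P.q := fun _ _ h =>
  zpow_le_zpow_right₀ P.one_lt_M.le (by omega)

lemma one_le_q {l : ℤ} (hl : 0 ≤ l) : 1 ≤ P.q l :=
  P.q_zero ▸ P.q_mono hl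

lemma q_le_one {l : ℤ} (hl : l ≤ 0) : P.q l ≤ 1 :=
  P.q_zero ▸ P.q_mono hl

lemma q_neg (l : ℤ) : P.q (-l) = (P.q l)⁻¹ := by
  rw [q, mul_neg, _root_.zpow_neg, q]

lemma q_one : P.q 1 = P.M ^ 3 := by
  rw [q]; norm_cast

lemma eight_le_q_one : 8 ≤ P.q 1 := by
  rw [q_one]
  exact_mod_cast Nat.pow_le_pow_left P.two_le_M 3

lemma q_natCast (n : ℕ) : P.q n = P.q 1 ^ n := by
  rw [q, q, mul_one, _root_.zpow_mul, zpow_natCast]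

lemma tendsto_q_neg_natCast : Tendsto (fun n : ℕ => P.q (-n)) atTop (𝓝 0) := by
  simp only [q_neg, q_natCast, ← inv_pow]
  have := P.eight_le_q_one
  exact tendsto_pow_atTop_nhds_zero_of_lt_one (by positivity) (inv_lt_one_of_one_lt₀ (by linarith))

/-- The diagonal entries of the two-parameter diagonal flow. -/
noncomputable def diagEntry (k l : ℤ) : Fin 3 → ℝ :=
  ![(P.M : ℝ) ^ (k + l), (P.M : ℝ) ^ (k - 2 * l), (P.M : ℝ) ^ (l - 2 * k)]

/-- The two-parameter diagonal flow, normalised so that it dilates the root direction `(0, 1)` by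
`q l` and the root direction `(0, 2)` by `q k`. -/
noncomputable def diagFlow (k l : ℤ) : Matrix (Fin 3) (Fin 3) ℝ :=
  diagonal (P.diagEntry k l)

lemma diagEntry_ne_zero (k l : ℤ) (i : Fin 3) : P.diagEntry k l i ≠ 0 := by
  fin_cases i <;> exact zpow_ne_zero _ P.M_ne_zero

lemma prod_diagEntry (k l : ℤ) : ∏ i, P.diagEntry k l i = 1 := by
  simp only [diagEntry, Fin.prod_univ_three, cons_val, ← zpow_add₀ P.M_ne_zero]
  rw [show k + l + (k - 2 * l) + (l - 2 * k) = 0 by ring, zpow_zero]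

lemma abs_det_diagFlow (k l : ℤ) : |(P.diagFlow k l).det| = 1 := by
  rw [diagFlow, det_diagonal, prod_diagEntry, abs_one]

lemma diagFlow_mul_diagFlow (k l k' l' : ℤ) :
    P.diagFlow k l * P.diagFlow k' l' = P.diagFlow (k + k') (l + l') := by
  simp only [diagFlow, diagonal_mul_diagonal]
  congr 1
  ext i
  fin_cases i <;> simp only [diagEntry, Fin.zero_eta, Fin.mk_one, Fin.reduceFinMk, cons_val,
    ← zpow_add₀ P.M_ne_zero] <;> congr 1 <;> ring

lemma diagFlow_zero : P.diagFlow 0 0 = 1 := by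
  rw [diagFlow, ← diagonal_one]
  congr 1
  ext i
  fin_cases i <;> simp [diagEntry]

lemma diagFlow_mul_mem_normGap {ε : ℝ} {g : Matrix (Fin 3) (Fin 3) ℝ} (hg : g ∈ normGap ε)
    (k l : ℤ) : P.diagFlow k l * g ∈ normGap ε :=
  diagonal_mul_mem_normGap hg (by rw [prod_diagEntry, abs_one])

/-- The conjugate of `g` by `P.diagFlow k l`. -/
noncomputable def conjFlow (k l : ℤ) (g : Matrix (Fin 3) (Fin 3) ℝ) : Matrix (Fin 3) (Fin 3) ℝ :=
  !![g 0 0, P.q l * g 0 1, P.q k * g 0 2;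
     P.q (-l) * g 1 0, g 1 1, P.q (k - l) * g 1 2;
     P.q (-k) * g 2 0, P.q (l - k) * g 2 1, g 2 2]

lemma diagFlow_mul (k l : ℤ) (g : Matrix (Fin 3) (Fin 3) ℝ) :
    P.diagFlow k l * g = P.conjFlow k l g * P.diagFlow k l := by
  rw [diagFlow, diagonal_mul_eq_mul_diagonal (P.diagEntry_ne_zero k l), conjFlow]
  congr 1
  ext i j
  fin_cases i <;> fin_cases j <;>
    simp only [diagEntry, q, of_apply, cons_val, Fin.zero_eta, Fin.mk_one, Fin.reduceFinMk,
      ← zpow_sub₀ P.M_ne_zero, sub_self, zpow_zero, one_mul] <;> ring_nf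

lemma abs_det_conjFlow (k l : ℤ) (g : Matrix (Fin 3) (Fin 3) ℝ) :
    |(P.conjFlow k l g).det| = |g.det| := by
  simpa [det_mul, abs_mul, P.abs_det_diagFlow] using congr(|det $(P.diagFlow_mul k l g)|).symm

lemma diagFlow_mul_transvection_zero_one (k l : ℤ) (t : ℝ) :
    P.diagFlow k l * transvection 0 1 t = transvection 0 1 (P.q l * t) * P.diagFlow k l := by
  rw [diagFlow, diagonal_mul_transvection (P.diagEntry_ne_zero k l) (by decide), diagEntry, q]
  simp only [cons_val, ← zpow_sub₀ P.M_ne_zero]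
  ring_nf

/-- A compact set of bases containing one for every lattice of norm gap `ε`. -/
def bases : Set (Matrix (Fin 3) (Fin 3) ℝ) :=
  normGap P.ε ∩ {g | ∀ i j, |g i j| ≤ P.C}

lemma isCompact_bases : IsCompact P.bases :=
  (isCompact_setOf_forall_abs_le P.C).inter_left isClosed_normGap

lemma exists_mem_bases {g : Matrix (Fin 3) (Fin 3) ℝ} (hg : g ∈ normGap P.ε) :
    ∃ x ∈ P.bases, SameLattice g x := by
  obtain ⟨x, hgx, hx⟩ := P.exists_bounded_sameLattice g hg
  exact ⟨x, ⟨hgx.mem_normGap hg, hx⟩, hgx⟩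

end Params

/-- Finitely supported two-sided ternary digit sequences; they label the points of a ternary tree of
times of the unipotent flow, the `l`-th digit being the choice of branch at scale `q l`. -/
abbrev Digits := ℤ →₀ ZMod 3

namespace Digits

/-- The translation of digit positions by `l`. -/
noncomputable def shift (l : ℤ) : Digits ≃+ Digits :=
  Finsupp.domCongr (Equiv.addRight l)

@[simp]
lemma shift_apply (l : ℤ) (f : Digits) (i : ℤ) : shift l f i = f (i - l) := by
  simp [shift, sub_eq_add_neg]

lemma shift_shift (l m : ℤ) (f : Digits) : shift l (shift m f) = shift (l + m) f := by
  ext i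
  simp [sub_sub]

@[simp]
lemma shift_zero (f : Digits) : shift 0 f = f := by
  ext i
  simp

lemma exists_forall_gt_eq_zero (f : Digits) : ∃ l : ℤ, ∀ k, l < k → f k = 0 := by
  obtain ⟨l, hl⟩ := f.support.bddAbove
  exact ⟨l, fun k hk => by_contra fun h => hk.not_ge (hl (Finsupp.mem_support_iff.2 h))⟩

end Digits

/-- Unconstrained data of a configuration: bases of lattices indexed by the diagonal flow and the
digits, the times attached to the digits, and a flag for each scale. -/
abbrev RawConfig :=
  (ℤ × ℤ × Digits → Matrix (Fin 3) (Fin 3) ℝ) × (Digits → ℝ) × (ℤ → Bool)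

/-- The raw configuration records the lattices obtained from one lattice of norm gap `ε` by flowing
for the times attached to all digit sequences and then along the diagonal. Two digit sequences
agreeing above position `l` have times at distance at most `q (l + 1)`; if they differ at `l` and
the scale `l` is flagged, their times are `q l`-separated. -/
structure IsConfig (P : Params) (ξ : RawConfig) : Prop where
  mem_bases : ∀ c, ξ.1 c ∈ P.bases
  sameLattice : ∀ k l f,
    SameLattice (P.diagFlow k l * (transvection 0 1 (ξ.2.1 f) * ξ.1 0)) (ξ.1 (k, l, f))
  time_zero : ξ.2.1 0 = 0
  abs_time_sub_le : ∀ l : ℤ, ∀ f f' : Digits, (∀ k, l < k → f k = f' k) →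
    |ξ.2.1 f - ξ.2.1 f'| ≤ P.q (l + 1)
  le_abs_time_sub : ∀ l : ℤ, ∀ f f' : Digits, (∀ k, l < k → f k = f' k) → f l ≠ f' l →
    ξ.2.2 l = true → P.q l ≤ |ξ.2.1 f - ξ.2.1 f'|

lemma isConfig_iff {P : Params} {ξ : RawConfig} : IsConfig P ξ ↔ (∀ c, ξ.1 c ∈ P.bases) ∧
    (∀ k l f,
      SameLattice (P.diagFlow k l * (transvection 0 1 (ξ.2.1 f) * ξ.1 0)) (ξ.1 (k, l, f))) ∧
    ξ.2.1 0 = 0 ∧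
    (∀ l : ℤ, ∀ f f' : Digits, (∀ k, l < k → f k = f' k) → |ξ.2.1 f - ξ.2.1 f'| ≤ P.q (l + 1)) ∧
    ∀ l : ℤ, ∀ f f' : Digits, (∀ k, l < k → f k = f' k) → f l ≠ f' l →
      ξ.2.2 l = true → P.q l ≤ |ξ.2.1 f - ξ.2.1 f'| :=
  ⟨fun h => ⟨h.1, h.2, h.3, h.4, h.5⟩, fun h => ⟨h.1, h.2.1, h.2.2.1, h.2.2.2.1, h.2.2.2.2⟩⟩

lemma isClosed_isConfig (P : Params) : IsClosed {ξ : RawConfig | IsConfig P ξ} := by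
  have continuous_time (f : Digits) : Continuous fun ξ : RawConfig => ξ.2.1 f := by fun_prop
  have continuous_basis (c) : Continuous fun ξ : RawConfig => ξ.1 c := by fun_prop
  simp only [isConfig_iff, Set.ofPred_and, Set.ofPred_forall]
  refine .inter (isClosed_iInter fun c => P.isCompact_bases.isClosed.preimage (continuous_basis c))
    (.inter ?_ (.inter (isClosed_eq (continuous_time 0) continuous_const) (.inter ?_ ?_)))
  · refine isClosed_iInter fun k => isClosed_iInter fun l => isClosed_iInter fun f => ?_
    exact isClosed_sameLattice.preimage <| .prodMk (continuous_const.matrix_mul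
      (((continuous_transvection 0 1).comp (continuous_time f)).matrix_mul (continuous_basis 0)))
      (continuous_basis _)
  · refine isClosed_iInter fun l => isClosed_iInter fun f => isClosed_iInter fun f' =>
      isClosed_iInter fun _ => ?_
    exact isClosed_le ((continuous_time f).sub (continuous_time f')).abs continuous_const
  · refine isClosed_iInter fun l => isClosed_iInter fun f => isClosed_iInter fun f' =>
      isClosed_iInter fun _ => isClosed_iInter fun _ => ?_
    refine isClosed_imp ((isOpen_discrete {true}).preimage (by fun_prop)) ?_
    exact isClosed_le continuous_const ((continuous_time f).sub (continuous_time f')).abs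

lemma isCompact_isConfig (P : Params) : IsCompact {ξ : RawConfig | IsConfig P ξ} := by
  choose L hL using Digits.exists_forall_gt_eq_zero
  refine ((isCompact_univ_pi fun _ => P.isCompact_bases).prod ((isCompact_univ_pi fun f =>
    isCompact_Icc (a := -P.q (L f + 1)) (b := P.q (L f + 1))).prod
      isCompact_univ)).of_isClosed_subset (isClosed_isConfig P) fun ξ hξ =>
    ⟨fun c _ => hξ.mem_bases c, fun f _ => ?_, trivial⟩
  have := hξ.abs_time_sub_le (L f) f 0 (hL f)
  rw [hξ.time_zero, sub_zero] at this
  exact abs_le.1 this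

/-- The space of configurations, which is compact. -/
def Config (P : Params) : Type := {ξ : RawConfig // IsConfig P ξ}

variable {P : Params}

namespace Config

instance : TopologicalSpace (Config P) := instTopologicalSpaceSubtype

instance : CompactSpace (Config P) := isCompact_iff_compactSpace.1 (isCompact_isConfig P)

instance : T2Space (Config P) := inferInstanceAs (T2Space {ξ : RawConfig // IsConfig P ξ})

instance : SecondCountableTopology (Config P) :=
  haveI : SecondCountableTopology (Matrix (Fin 3) (Fin 3) ℝ) :=
    inferInstanceAs (SecondCountableTopology (Fin 3 → Fin 3 → ℝ))
  (IsEmbedding.subtypeVal :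
    IsEmbedding (Subtype.val : {ξ : RawConfig // IsConfig P ξ} → RawConfig)).secondCountableTopology

instance : MeasurableSpace (Config P) := borel _

instance : BorelSpace (Config P) := ⟨rfl⟩

/-- The recorded basis of the lattice obtained by flowing for the time attached to `f` and then by
`P.diagFlow k l`. -/
def basis (ξ : Config P) (k l : ℤ) (f : Digits) : Matrix (Fin 3) (Fin 3) ℝ := ξ.1.1 (k, l, f)

/-- The basis of the lattice at which the configuration is based. -/
def base (ξ : Config P) : Matrix (Fin 3) (Fin 3) ℝ := ξ.1.1 0

/-- The time attached to a digit sequence. -/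
def time (ξ : Config P) (f : Digits) : ℝ := ξ.1.2.1 f

/-- The flag of a scale: on flagged scales the times are separated. -/
def flag (ξ : Config P) (l : ℤ) : Bool := ξ.1.2.2 l

@[ext]
lemma ext {ξ η : Config P} (hbasis : ∀ k l f, ξ.basis k l f = η.basis k l f)
    (htime : ∀ f, ξ.time f = η.time f) (hflag : ∀ l, ξ.flag l = η.flag l) : ξ = η :=
  Subtype.ext <| Prod.ext (funext fun c => hbasis c.1 c.2.1 c.2.2)
    (Prod.ext (funext htime) (funext hflag))

lemma continuous_basis (k l : ℤ) (f : Digits) : Continuous fun ξ : Config P => ξ.basis k l f :=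
  (continuous_apply (k, l, f)).comp (continuous_fst.comp continuous_subtype_val)

lemma continuous_base : Continuous fun ξ : Config P => ξ.base := continuous_basis 0 0 0

lemma continuous_flag (l : ℤ) : Continuous fun ξ : Config P => ξ.flag l :=
  (continuous_apply l).comp (continuous_snd.comp (continuous_snd.comp continuous_subtype_val))

lemma base_mem_bases (ξ : Config P) : ξ.base ∈ P.bases := ξ.2.mem_bases _

lemma sameLattice (ξ : Config P) (k l f) :
    SameLattice (P.diagFlow k l * (transvection 0 1 (ξ.time f) * ξ.base)) (ξ.basis k l f) :=
  ξ.2.sameLattice k l f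

lemma time_zero (ξ : Config P) : ξ.time 0 = 0 := ξ.2.time_zero

lemma sameLattice_diagFlow (ξ : Config P) (k l) :
    SameLattice (P.diagFlow k l * ξ.base) (ξ.basis k l 0) := by
  simpa only [time_zero, transvection_zero, one_mul] using ξ.sameLattice k l 0

lemma sameLattice_transvection (ξ : Config P) (f) :
    SameLattice (transvection 0 1 (ξ.time f) * ξ.base) (ξ.basis 0 0 f) := by
  simpa only [P.diagFlow_zero, one_mul] using ξ.sameLattice 0 0 f

/-- The data of the configuration obtained by applying `P.diagFlow k l`. -/
noncomputable def rawFlow (P : Params) (k l : ℤ) (ξ : RawConfig) : RawConfig :=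
  (fun c => ξ.1 (c.1 + k, c.2.1 + l, Digits.shift (-l) c.2.2),
    fun f => P.q l * ξ.2.1 (Digits.shift (-l) f), fun i => ξ.2.2 (i - l))

lemma isConfig_rawFlow (k l : ℤ) (ξ : Config P) : IsConfig P (rawFlow P k l ξ.1) := by
  refine ⟨fun c => ξ.2.mem_bases _, fun i j f => ?_, ?_, fun m f f' h => ?_,
    fun m f f' h hne hflag => ?_⟩
  · have hbase : SameLattice (P.diagFlow k l * ξ.base) ((rawFlow P k l ξ.1).1 0) := by
      simpa [rawFlow, basis] using ξ.sameLattice_diagFlow k l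
    refine ((hbase.symm.mul_left (abs_det_transvection (by decide) _)).mul_left
      (P.abs_det_diagFlow i j)).trans ?_
    have hf := ξ.sameLattice (i + k) (j + l) (Digits.shift (-l) f)
    rw [← P.diagFlow_mul_diagFlow, Matrix.mul_assoc, ← Matrix.mul_assoc (P.diagFlow k l),
      P.diagFlow_mul_transvection_zero_one, Matrix.mul_assoc] at hf
    exact hf
  · simp [rawFlow, ξ.2.time_zero]
  · rw [rawFlow, ← mul_sub, abs_mul, abs_of_pos (P.q_pos l),
      show m + 1 = l + (m - l + 1) by ring, P.q_add]
    gcongr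
    · exact (P.q_pos l).le
    · exact ξ.2.abs_time_sub_le _ _ _ fun i hi => by simpa using h _ (by omega)
  · rw [rawFlow, ← mul_sub, abs_mul, abs_of_pos (P.q_pos l), ← add_sub_cancel l m, P.q_add]
    gcongr
    · exact (P.q_pos l).le
    · exact ξ.2.le_abs_time_sub _ _ _ (fun i hi => by simpa using h _ (by omega))
        (by simpa using hne) hflag

/-- The action of the diagonal flow on configurations. -/
noncomputable def flow (k l : ℤ) (ξ : Config P) : Config P :=
  ⟨rawFlow P k l ξ.1, isConfig_rawFlow k l ξ⟩

lemma basis_flow (k l : ℤ) (ξ : Config P) (i j f) :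
    (flow k l ξ).basis i j f = ξ.basis (i + k) (j + l) (Digits.shift (-l) f) := rfl

lemma base_flow (k l : ℤ) (ξ : Config P) : (flow k l ξ).base = ξ.basis k l 0 := by
  have := basis_flow k l ξ 0 0 0
  rwa [zero_add, zero_add, map_zero] at this

lemma time_flow (k l : ℤ) (ξ : Config P) (f) :
    (flow k l ξ).time f = P.q l * ξ.time (Digits.shift (-l) f) := rfl

lemma flag_flow (k l : ℤ) (ξ : Config P) (i) : (flow k l ξ).flag i = ξ.flag (i - l) := rfl

lemma continuous_flow (k l : ℤ) : Continuous (flow k l : Config P → Config P) := by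
  have : Continuous (rawFlow P k l) := by unfold rawFlow; fun_prop
  exact (this.comp continuous_subtype_val).subtype_mk _

lemma flow_flow (k l k' l' : ℤ) (ξ : Config P) :
    flow k l (flow k' l' ξ) = flow (k + k') (l + l') ξ := by
  ext1
  · simp only [basis_flow, Digits.shift_shift]
    ring_nf
  · simp only [time_flow, Digits.shift_shift, P.q_add, mul_assoc]
    ring_nf
  · simp only [flag_flow]
    ring_nf

lemma flow_zero (ξ : Config P) : flow 0 0 ξ = ξ := by
  ext1
  · simp [basis_flow]
  · simp [time_flow, P.q_zero]
  · simp [flag_flow]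

lemma iterate_flow (k l : ℤ) (n : ℕ) (ξ : Config P) :
    (flow k l)^[n] ξ = flow (n * k) (n * l) ξ := by
  induction n with
  | zero => simp [flow_zero]
  | succ n ih =>
    rw [Function.iterate_succ_apply', ih, flow_flow]
    push_cast
    ring_nf

/-- The data of the configuration obtained by flowing for the time attached to `e`. -/
noncomputable def rawTranslate (e : Digits) (ξ : RawConfig) : RawConfig :=
  (fun c => ξ.1 (c.1, c.2.1, c.2.2 + e), fun f => ξ.2.1 (f + e) - ξ.2.1 e, ξ.2.2)

lemma isConfig_rawTranslate (e : Digits) (ξ : Config P) : IsConfig P (rawTranslate e ξ.1) := by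
  refine ⟨fun c => ξ.2.mem_bases _, fun i j f => ?_, ?_, fun m f f' h => ?_,
    fun m f f' h hne hflag => ?_⟩
  · have hbase : SameLattice (transvection 0 1 (ξ.time e) * ξ.base)
        ((rawTranslate e ξ.1).1 0) := by
      simpa [rawTranslate, basis] using ξ.sameLattice_transvection e
    refine ((hbase.symm.mul_left (abs_det_transvection (by decide) _)).mul_left
      (P.abs_det_diagFlow i j)).trans ?_
    have hf := ξ.sameLattice i j (f + e)
    rw [← sub_add_cancel (ξ.time (f + e)) (ξ.time e),
      ← transvection_mul_transvection_same _ _ (by decide),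
      Matrix.mul_assoc (transvection 0 1 _)] at hf
    exact hf
  · simp [rawTranslate]
  · rw [rawTranslate, sub_sub_sub_cancel_right]
    exact ξ.2.abs_time_sub_le m _ _ fun k hk => by simp [h k hk]
  · rw [rawTranslate, sub_sub_sub_cancel_right]
    exact ξ.2.le_abs_time_sub m _ _ (fun k hk => by simp [h k hk]) (by simpa using hne) hflag

/-- The action of digit sequences on configurations: rebase the configuration at the lattice reached
at the time attached to `e`. -/
noncomputable def translate (e : Digits) (ξ : Config P) : Config P :=
  ⟨rawTranslate e ξ.1, isConfig_rawTranslate e ξ⟩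

lemma basis_translate (e : Digits) (ξ : Config P) (i j f) :
    (translate e ξ).basis i j f = ξ.basis i j (f + e) := rfl

lemma base_translate (e : Digits) (ξ : Config P) : (translate e ξ).base = ξ.basis 0 0 e := by
  have := basis_translate e ξ 0 0 0
  rwa [zero_add] at this

lemma time_translate (e : Digits) (ξ : Config P) (f) :
    (translate e ξ).time f = ξ.time (f + e) - ξ.time e := rfl

lemma flag_translate (e : Digits) (ξ : Config P) (l) : (translate e ξ).flag l = ξ.flag l := rfl

lemma continuous_translate (e : Digits) : Continuous (translate e : Config P → Config P) := by
  have : Continuous (rawTranslate e) := by unfold rawTranslate; fun_prop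
  exact (this.comp continuous_subtype_val).subtype_mk _

lemma translate_translate (e f : Digits) (ξ : Config P) :
    translate e (translate f ξ) = translate (e + f) ξ := by
  ext1
  · simp only [basis_translate, add_assoc]
  · simp only [time_translate, add_assoc, sub_sub_sub_cancel_right]
  · simp only [flag_translate]

lemma translate_zero (ξ : Config P) : translate 0 ξ = ξ := by
  ext1
  · simp [basis_translate]
  · simp [time_translate, time_zero]
  · simp [flag_translate]

lemma translate_flow (e : Digits) (k l : ℤ) (ξ : Config P) :
    translate e (flow k l ξ) = flow k l (translate (Digits.shift (-l) e) ξ) := by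
  ext1
  · simp only [basis_translate, basis_flow, map_add]
  · simp only [time_translate, time_flow, map_add, mul_sub]
  · simp only [flag_translate, flag_flow]

end Config

/-! ### Shears and the Hopf argument -/

section Shear

lemma exists_mem_tendsto_ultrafilter {α X : Type*} [TopologicalSpace X] {K : Set X}
    (hK : IsCompact K) (u : Ultrafilter α) {f : α → X} (hf : ∀ᶠ a in (u : Filter α), f a ∈ K) :
    ∃ x ∈ K, Tendsto f u (𝓝 x) :=
  hK.ultrafilter_le_nhds (u.map f) (le_principal_iff.2 hf)

lemma tendsto_matrix_mul {α l m n R : Type*} [Fintype m] [TopologicalSpace R]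
    [NonUnitalNonAssocSemiring R] [ContinuousAdd R] [ContinuousMul R] {u : Filter α}
    {A : α → Matrix l m R} {B : α → Matrix m n R} {A' : Matrix l m R} {B' : Matrix m n R}
    (hA : Tendsto A u (𝓝 A')) (hB : Tendsto B u (𝓝 B')) :
    Tendsto (fun a => A a * B a) u (𝓝 (A' * B')) :=
  ((continuous_fst.matrix_mul continuous_snd).tendsto (A', B')).comp (hA.prodMk_nhds hB)

lemma diagonal_mul_mem_normGap_iff {ι : Type*} [Fintype ι] [DecidableEq ι] {ε : ℝ}
    {g : Matrix ι ι ℝ} {d : ι → ℝ} (hd : |∏ i, d i| = 1) :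
    diagonal d * g ∈ normGap ε ↔ g ∈ normGap ε := by
  refine ⟨fun hg => ?_, fun hg => diagonal_mul_mem_normGap hg hd⟩
  have hd0 : ∀ i, d i ≠ 0 := fun i => Finset.prod_ne_zero_iff.1
    (abs_pos.1 (hd ▸ one_pos)) i (Finset.mem_univ i)
  have := diagonal_mul_mem_normGap hg (d := d⁻¹) (by simp [Finset.prod_inv_distrib, abs_inv, hd])
  rwa [← Matrix.mul_assoc, diagonal_mul_diagonal, show (fun i => d⁻¹ i * d i) = 1 from
    funext fun i => inv_mul_cancel₀ (hd0 i), diagonal_one', Matrix.one_mul] at this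

lemma gapTimes_diagonal_mul {ι : Type*} [Fintype ι] [DecidableEq ι] {ε : ℝ} {i j : ι}
    {d : ι → ℝ} (hij : i ≠ j) (hd : |∏ i, d i| = 1) (hdij : d i = d j) (g : Matrix ι ι ℝ) :
    gapTimes ε i j (diagonal d * g) = gapTimes ε i j g := by
  have hd0 : ∀ i, d i ≠ 0 := fun i => Finset.prod_ne_zero_iff.1
    (abs_pos.1 (hd ▸ one_pos)) i (Finset.mem_univ i)
  ext w
  have hcomm : diagonal d * transvection i j w = transvection i j w * diagonal d := by
    rw [diagonal_mul_transvection hd0 hij, hdij, div_self (hd0 j), one_mul]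
  rw [gapTimes, gapTimes, Set.mem_ofPred_eq, Set.mem_ofPred_eq, ← Matrix.mul_assoc, ← hcomm,
    Matrix.mul_assoc, diagonal_mul_mem_normGap_iff hd]

lemma mem_gapTimes_of_tendsto {α ι : Type*} [Fintype ι] [DecidableEq ι] {u : Filter α} [u.NeBot]
    {ε w : ℝ} {i j : ι} {g : α → Matrix ι ι ℝ} {g' : Matrix ι ι ℝ} (hg : Tendsto g u (𝓝 g'))
    (hw : ∀ a, w ∈ gapTimes ε i j (g a)) : w ∈ gapTimes ε i j g' :=
  have hlim := tendsto_matrix_mul (tendsto_const_nhds (x := transvection i j w)) hg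
  isClosed_normGap.mem_of_tendsto hlim (Eventually.of_forall hw)

/-- The unipotent matrices with root entries in the directions `(0, 1)`, `(0, 2)` and `(2, 1)`,
which arise as limits of shears between nearby orbits. -/
def unipotent (s b c : ℝ) : Matrix (Fin 3) (Fin 3) ℝ :=
  !![1, s, b; 0, 1, 0; 0, c, 1]

lemma abs_det_unipotent (s b c : ℝ) : |(unipotent s b c).det| = 1 := by
  simp [unipotent, det_fin_three]

lemma unipotent_eq_transvection_zero_one (s : ℝ) : unipotent s 0 0 = transvection 0 1 s := by
  ext i j; fin_cases i <;> fin_cases j <;> simp [unipotent, transvection]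

lemma unipotent_eq_transvection_zero_two (b : ℝ) : unipotent 0 b 0 = transvection 0 2 b := by
  ext i j; fin_cases i <;> fin_cases j <;> simp [unipotent, transvection]

lemma unipotent_eq_transvection_two_one (c : ℝ) : unipotent 0 0 c = transvection 2 1 c := by
  ext i j; fin_cases i <;> fin_cases j <;> simp [unipotent, transvection]

lemma continuous_unipotent : Continuous fun p : ℝ × ℝ × ℝ => unipotent p.1 p.2.1 p.2.2 := by
  refine continuous_matrix fun i j => ?_
  fin_cases i <;> fin_cases j <;>
    simp only [unipotent, of_apply, cons_val', cons_val, Fin.zero_eta, Fin.mk_one,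
      Fin.reduceFinMk] <;>
    fun_prop

lemma tendsto_unipotent {α : Type*} {u : Filter α} {s b c : α → ℝ} {s' b' c' : ℝ}
    (hs : Tendsto s u (𝓝 s')) (hb : Tendsto b u (𝓝 b')) (hc : Tendsto c u (𝓝 c')) :
    Tendsto (fun n => unipotent (s n) (b n) (c n)) u (𝓝 (unipotent s' b' c')) := by
  have hsbc := (continuous_unipotent.tendsto (s', b', c')).comp
    (hs.prodMk_nhds (hb.prodMk_nhds hc))
  exact hsbc

lemma Params.diagFlow_mul_unipotent (P : Params) (k l : ℤ) (s b c : ℝ) :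
    P.diagFlow k l * unipotent s b c =
      unipotent (P.q l * s) (P.q k * b) (P.q (l - k) * c) * P.diagFlow k l := by
  rw [P.diagFlow_mul, Params.conjFlow]
  congr 1
  ext i j
  fin_cases i <;> fin_cases j <;> simp [unipotent]

namespace Config

variable {P : Params} {i j : Fin 3} {K : Set (Config P)} {ξ : Config P} {s b c w : ℝ}

/-- The set of times at which the `(i, j)` unipotent orbit of the base lattice has norm gap `ε`. -/
def orbitTimes (i j : Fin 3) (ξ : Config P) : Set ℝ :=
  gapTimes P.ε i j ξ.base

lemma orbitTimes_flow (hij : i ≠ j) {k l : ℤ} (hkl : P.diagEntry k l i = P.diagEntry k l j)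
    (ξ : Config P) : orbitTimes i j (flow k l ξ) = orbitTimes i j ξ := by
  rw [orbitTimes, orbitTimes, base_flow, ← (ξ.sameLattice_diagFlow k l).gapTimes_eq hij,
    Params.diagFlow, gapTimes_diagonal_mul hij (by rw [P.prod_diagEntry, abs_one]) hkl]

lemma mem_orbitTimes_translate {f : Digits} :
    w ∈ orbitTimes 0 1 (translate f ξ) ↔ w + ξ.time f ∈ orbitTimes 0 1 ξ := by
  rw [orbitTimes, orbitTimes, base_translate,
    ← (ξ.sameLattice_transvection f).gapTimes_eq (by decide),
    mem_gapTimes_transvection_mul (by decide)]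

lemma orbitTimes_subset_of_tendsto {α : Type*} {u : Filter α} [u.NeBot] {ξ η : α → Config P}
    {ξ' η' : Config P} (hK : LowerHemicontinuousOn (orbitTimes i j) K)
    (hξ : Tendsto ξ u (𝓝 ξ')) (hη : Tendsto η u (𝓝 η')) (hξ' : ξ' ∈ K)
    (hξK : ∀ᶠ n in u, ξ n ∈ K) (hsub : ∀ n, orbitTimes i j (ξ n) ⊆ orbitTimes i j (η n)) :
    orbitTimes i j ξ' ⊆ orbitTimes i j η' := by
  intro w hw
  by_contra hwη
  have hnear : {p : Matrix (Fin 3) (Fin 3) ℝ × ℝ | p.2 ∈ gapTimes P.ε i j p.1}ᶜ ∈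
      𝓝 η'.base ×ˢ 𝓝 w := by
    rw [← nhds_prod_eq]
    exact (isClosed_gapTimes_graph P.ε i j).isOpen_compl.mem_nhds hwη
  obtain ⟨U, hU, V, hV, hUV⟩ := mem_prod_iff.1 hnear
  obtain ⟨V', hV'V, hV'open, hwV'⟩ := mem_nhds_iff.1 hV
  have hξ_mem := (tendsto_nhdsWithin_iff.2 ⟨hξ, hξK⟩).eventually
    (hK ξ' hξ' V' ⟨hV'open, w, hw, hwV'⟩)
  obtain ⟨n, ⟨-, w', hw', hw'V⟩, hn⟩ :=
    (hξ_mem.and (((continuous_base.tendsto η').comp hη) hU)).exists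
  exact hUV (Set.mk_mem_prod hn (hV'V hw'V)) (hsub n hw')

/-- `ξ` returns infinitely often to `K` under the inverses of the two diagonal one-parameter flows
that centralise the root directions `(0, 2)` and `(2, 1)`. -/
def IsRecurrent (K : Set (Config P)) (ξ : Config P) : Prop :=
  (∃ᶠ n : ℕ in atTop, flow 0 (-n) ξ ∈ K) ∧ ∃ᶠ n : ℕ in atTop, flow (-n) (-n) ξ ∈ K

/- The Hopf argument: flowing along a diagonal direction that centralises the root direction
`(i, j)` does not change `orbitTimes`, but turns the shear `h` into a translation by `b`. -/
lemma add_mem_orbitTimes_of_frequently_flow_mem (hij : i ≠ j) (hK : IsClosed K)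
    (hcont : LowerHemicontinuousOn (orbitTimes i j) K) {k l : ℕ → ℤ}
    (hrec : ∃ᶠ n in atTop, flow (k n) (l n) ξ ∈ K)
    (hkl : ∀ n, P.diagEntry (k n) (l n) i = P.diagEntry (k n) (l n) j)
    {h : Matrix (Fin 3) (Fin 3) ℝ} {h' : ℕ → Matrix (Fin 3) (Fin 3) ℝ}
    (hh' : ∀ n, P.diagFlow (k n) (l n) * h = h' n * P.diagFlow (k n) (l n))
    (hdet : ∀ n, |(h' n).det| = 1) (hlim : Tendsto h' atTop (𝓝 (transvection i j b)))
    (hw : w ∈ gapTimes P.ε i j (h * ξ.base)) : w + b ∈ orbitTimes i j ξ := by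
  set Φ : ℕ → Config P := fun n => flow (k n) (l n) ξ
  have := frequently_iff_neBot.1 hrec
  set u := Ultrafilter.of (atTop ⊓ 𝓟 {n | Φ n ∈ K})
  have hu : (u : Filter ℕ) ≤ atTop ⊓ 𝓟 {n | Φ n ∈ K} := Ultrafilter.of_le _
  have hΦK : ∀ᶠ n in (u : Filter ℕ), Φ n ∈ K := hu (mem_inf_of_right (mem_principal_self _))
  obtain ⟨ζ, hζK, hζ⟩ := exists_mem_tendsto_ultrafilter hK.isCompact u hΦK
  have hwn (n : ℕ) : w ∈ gapTimes P.ε i j (h' n * (Φ n).base) := by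
    rw [base_flow, ← ((ξ.sameLattice_diagFlow (k n) (l n)).mul_left (hdet n)).gapTimes_eq hij,
      ← Matrix.mul_assoc, ← hh', Matrix.mul_assoc, Params.diagFlow,
      gapTimes_diagonal_mul hij (by rw [P.prod_diagEntry, abs_one]) (hkl n)]
    exact hw
  have hwζ : w + b ∈ orbitTimes i j ζ := by
    rw [orbitTimes, ← mem_gapTimes_transvection_mul hij]
    exact mem_gapTimes_of_tendsto (tendsto_matrix_mul (hlim.mono_left (hu.trans inf_le_left))
      ((continuous_base.tendsto ζ).comp hζ)) hwn
  exact orbitTimes_subset_of_tendsto hcont hζ tendsto_const_nhds hζK hΦK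
    (fun n => (orbitTimes_flow hij (hkl n) ξ).subset) hwζ

lemma IsRecurrent.add_mem_orbitTimes_zero_two (hξ : IsRecurrent K ξ) (hK : IsClosed K)
    (hcont : LowerHemicontinuousOn (orbitTimes 0 2) K)
    (hw : w ∈ gapTimes P.ε 0 2 (unipotent s b c * ξ.base)) : w + b ∈ orbitTimes 0 2 ξ := by
  refine add_mem_orbitTimes_of_frequently_flow_mem (by decide) hK hcont hξ.1
    (fun n => by simp [Params.diagEntry]) (fun n => P.diagFlow_mul_unipotent _ _ s b c)
    (fun n => abs_det_unipotent _ _ _) ?_ hw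
  rw [← unipotent_eq_transvection_zero_two]
  refine tendsto_unipotent ?_ ?_ ?_
  · simpa using P.tendsto_q_neg_natCast.mul_const s
  · simp [P.q_zero]
  · simpa using P.tendsto_q_neg_natCast.mul_const c

lemma IsRecurrent.add_mem_orbitTimes_two_one (hξ : IsRecurrent K ξ) (hK : IsClosed K)
    (hcont : LowerHemicontinuousOn (orbitTimes 2 1) K)
    (hw : w ∈ gapTimes P.ε 2 1 (unipotent s b c * ξ.base)) : w + c ∈ orbitTimes 2 1 ξ := by
  refine add_mem_orbitTimes_of_frequently_flow_mem (by decide) hK hcont hξ.2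
    (fun n => by simp only [Params.diagEntry, cons_val])
    (fun n => P.diagFlow_mul_unipotent _ _ s b c) (fun n => abs_det_unipotent _ _ _) ?_ hw
  rw [← unipotent_eq_transvection_two_one]
  refine tendsto_unipotent ?_ ?_ ?_
  · simpa using P.tendsto_q_neg_natCast.mul_const s
  · simpa using P.tendsto_q_neg_natCast.mul_const b
  · simp [P.q_zero]

lemma IsRecurrent.orbitTimes_zero_two_subset (hξ : IsRecurrent K ξ) (hK : IsClosed K)
    (hcont : LowerHemicontinuousOn (orbitTimes 0 2) K) (r : ℝ) :
    gapTimes P.ε 0 2 (transvection 0 1 r * ξ.base) ⊆ orbitTimes 0 2 ξ := fun w hw => by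
  rw [← unipotent_eq_transvection_zero_one] at hw
  simpa using hξ.add_mem_orbitTimes_zero_two hK hcont hw

lemma IsRecurrent.orbitTimes_two_one_subset (hξ : IsRecurrent K ξ) (hK : IsClosed K)
    (hcont : LowerHemicontinuousOn (orbitTimes 2 1) K) (r : ℝ) :
    gapTimes P.ε 2 1 (transvection 0 1 r * ξ.base) ⊆ orbitTimes 2 1 ξ := fun w hw => by
  rw [← unipotent_eq_transvection_zero_one] at hw
  simpa using hξ.add_mem_orbitTimes_two_one hK hcont hw

lemma gapTimes_transvection_mul_base (hij : i ≠ j) (ξ : Config P) (f : Digits) :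
    gapTimes P.ε i j (transvection 0 1 (ξ.time f) * ξ.base) = orbitTimes i j (translate f ξ) := by
  rw [orbitTimes, base_translate, (ξ.sameLattice_transvection f).gapTimes_eq hij]

lemma gapTimes_transvection_neg_mul_base (hij : i ≠ j) (ξ : Config P) (f : Digits) :
    gapTimes P.ε i j (transvection 0 1 (-ξ.time f) * (translate f ξ).base) =
      orbitTimes i j ξ := by
  have h := gapTimes_transvection_mul_base hij (translate f ξ) (-f)
  rwa [translate_translate, neg_add_cancel, translate_zero, time_translate, neg_add_cancel,
    time_zero, zero_sub] at h

lemma not_forall_add_mem_orbitTimes (hij : i ≠ j) (hb : b ≠ 0) :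
    ¬ ∀ w ∈ orbitTimes i j ξ, w + b ∈ orbitTimes i j ξ :=
  not_mapsTo_add_gapTimes P.ε_pos hij ξ.base_mem_bases.1 hb

/-- `ξ` and `η` belong to `𝒦`, as do their translates by `f`; they have the same times for `f`, the
same `orbitTimes 0 1`, and `g` carries the base lattice of `ξ` to that of `η`. -/
structure IsSheared (𝒦 : Set (Config P)) (f : Digits) (g : Matrix (Fin 3) (Fin 3) ℝ)
    (ξ η : Config P) : Prop where
  left_mem : ξ ∈ 𝒦
  right_mem : η ∈ 𝒦
  translate_left_mem : translate f ξ ∈ 𝒦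
  translate_right_mem : translate f η ∈ 𝒦
  time_eq : ξ.time f = η.time f
  orbitTimes_eq : orbitTimes 0 1 ξ = orbitTimes 0 1 η
  sameLattice : SameLattice (g * ξ.base) η.base

namespace IsSheared

variable {𝒦 : Set (Config P)} {f : Digits} {g : Matrix (Fin 3) (Fin 3) ℝ} {η : Config P}

lemma orbitTimes_translate_eq (h : IsSheared 𝒦 f g ξ η) :
    orbitTimes 0 1 (translate f ξ) = orbitTimes 0 1 (translate f η) := by
  ext w
  rw [mem_orbitTimes_translate, mem_orbitTimes_translate, h.orbitTimes_eq, h.time_eq]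

lemma sameLattice_translate (h : IsSheared 𝒦 f g ξ η) :
    SameLattice (transvection 0 1 (ξ.time f) * g * transvection 0 1 (-ξ.time f) *
      (translate f ξ).base) (translate f η).base := by
  have hT (t : ℝ) : |(transvection (0 : Fin 3) 1 t).det| = 1 := abs_det_transvection (by decide) t
  have hg : |g.det| = 1 := by
    have := h.sameLattice.1
    rwa [det_mul, abs_mul, ξ.base_mem_bases.1.1, mul_one] at this
  have hξ : SameLattice (transvection 0 1 (-ξ.time f) * (translate f ξ).base) ξ.base := by
    have := ((ξ.sameLattice_transvection f).mul_left (hT (-ξ.time f))).symm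
    rwa [← Matrix.mul_assoc, transvection_mul_transvection_same _ _ (by decide), neg_add_cancel,
      transvection_zero, Matrix.one_mul, ← base_translate] at this
  have hη : SameLattice (transvection 0 1 (ξ.time f) * η.base) (translate f η).base := by
    rw [h.time_eq, base_translate]
    exact η.sameLattice_transvection f
  have := (((hξ.mul_left hg).trans h.sameLattice).mul_left (hT (ξ.time f))).trans hη
  simpa only [Matrix.mul_assoc] using this

end IsSheared

section Limit

variable {α : Type*} {u : Filter α} [u.NeBot] {𝒦 : Set (Config P)} {f : α → Digits}
  {g : α → Matrix (Fin 3) (Fin 3) ℝ} {ξ η : α → Config P} {y y' z z' : Config P}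

lemma orbitTimes_subset_of_tendsto_isSheared (hij : i ≠ j)
    (hcont : LowerHemicontinuousOn (orbitTimes i j) 𝒦)
    (hsub : ∀ ζ ∈ 𝒦, ∀ r, gapTimes P.ε i j (transvection 0 1 r * ζ.base) ⊆ orbitTimes i j ζ)
    (h : ∀ n, IsSheared 𝒦 (f n) (g n) (ξ n) (η n)) (hg : Tendsto g u (𝓝 1))
    (hy : Tendsto ξ u (𝓝 y)) (hy' : Tendsto η u (𝓝 y')) (my' : y' ∈ 𝒦)
    (hz : Tendsto (fun n => translate (f n) (ξ n)) u (𝓝 z)) (mz : z ∈ 𝒦)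
    (hz' : Tendsto (fun n => translate (f n) (η n)) u (𝓝 z')) :
    orbitTimes i j z ⊆ orbitTimes i j z' := by
  have hyy' : SameLattice y.base y'.base := by
    have := sameLattice_of_tendsto (tendsto_matrix_mul hg ((continuous_base.tendsto y).comp hy))
      ((continuous_base.tendsto y').comp hy') (Eventually.of_forall fun n => (h n).sameLattice)
    rwa [Matrix.one_mul] at this
  calc
    orbitTimes i j z ⊆ orbitTimes i j y :=
      orbitTimes_subset_of_tendsto hcont hz hy mz
        (Eventually.of_forall fun n => (h n).translate_left_mem) fun n => by
          rw [← gapTimes_transvection_mul_base hij]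
          exact hsub _ (h n).left_mem _
    _ = orbitTimes i j y' := hyy'.gapTimes_eq hij
    _ ⊆ orbitTimes i j z' :=
      orbitTimes_subset_of_tendsto hcont hy' hz' my'
        (Eventually.of_forall fun n => (h n).right_mem) fun n => by
          rw [← gapTimes_transvection_neg_mul_base hij (η n) (f n)]
          exact hsub _ (h n).translate_right_mem _

/-- A closed set `𝒦` of configurations that recur to a closed set `K ⊇ 𝒦` on which the sets of orbit
times in the three root directions vary lower hemicontinuously. -/
structure IsRecurrencePair (K 𝒦 : Set (Config P)) : Prop where
  isClosed_left : IsClosed K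
  isClosed_right : IsClosed 𝒦
  subset : 𝒦 ⊆ K
  zero_one : LowerHemicontinuousOn (orbitTimes 0 1) K
  zero_two : LowerHemicontinuousOn (orbitTimes 0 2) K
  two_one : LowerHemicontinuousOn (orbitTimes 2 1) K
  isRecurrent : ∀ ζ ∈ 𝒦, IsRecurrent K ζ

/- The limits `z` and `z'` of the translates differ by a nontrivial unipotent matrix, which by the
Hopf argument makes `orbitTimes i j z` periodic in one of the three root directions. -/
theorem unipotent_eq_zero_of_tendsto_isSheared (u : Ultrafilter α) (hK : IsRecurrencePair K 𝒦)
    (h : ∀ n, IsSheared 𝒦 (f n) (g n) (ξ n) (η n)) (hg : Tendsto g u (𝓝 1))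
    (hlim : Tendsto (fun n => transvection 0 1 ((ξ n).time (f n)) * g n *
      transvection 0 1 (-(ξ n).time (f n))) u (𝓝 (unipotent s b c))) :
    s = 0 ∧ b = 0 ∧ c = 0 := by
  have limit {φ : α → Config P} (hφ : ∀ n, φ n ∈ 𝒦) :=
    exists_mem_tendsto_ultrafilter hK.isClosed_right.isCompact u (Eventually.of_forall hφ)
  obtain ⟨y, -, hy⟩ := limit fun n => (h n).left_mem
  obtain ⟨y', my', hy'⟩ := limit fun n => (h n).right_mem
  obtain ⟨z, mz, hz⟩ := limit fun n => (h n).translate_left_mem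
  obtain ⟨z', -, hz'⟩ := limit fun n => (h n).translate_right_mem
  have hzz' : SameLattice (unipotent s b c * z.base) z'.base :=
    sameLattice_of_tendsto (tendsto_matrix_mul hlim ((continuous_base.tendsto z).comp hz))
      ((continuous_base.tendsto z').comp hz')
      (Eventually.of_forall fun n => (h n).sameLattice_translate)
  have hb : b = 0 := by
    by_contra hb
    refine not_forall_add_mem_orbitTimes (by decide) hb fun w hw =>
      (hK.isRecurrent z mz).add_mem_orbitTimes_zero_two (s := s) (c := c) hK.isClosed_left
        hK.zero_two ?_
    rw [hzz'.gapTimes_eq (by decide)]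
    exact orbitTimes_subset_of_tendsto_isSheared (by decide) (hK.zero_two.mono hK.subset)
      (fun ζ hζ => (hK.isRecurrent ζ hζ).orbitTimes_zero_two_subset hK.isClosed_left hK.zero_two)
      h hg hy hy' my' hz mz hz' hw
  have hc : c = 0 := by
    by_contra hc
    refine not_forall_add_mem_orbitTimes (by decide) hc fun w hw =>
      (hK.isRecurrent z mz).add_mem_orbitTimes_two_one (s := s) (b := b) hK.isClosed_left
        hK.two_one ?_
    rw [hzz'.gapTimes_eq (by decide)]
    exact orbitTimes_subset_of_tendsto_isSheared (by decide) (hK.two_one.mono hK.subset)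
      (fun ζ hζ => (hK.isRecurrent ζ hζ).orbitTimes_two_one_subset hK.isClosed_left hK.two_one)
      h hg hy hy' my' hz mz hz' hw
  refine ⟨?_, hb, hc⟩
  by_contra hs
  refine not_forall_add_mem_orbitTimes (i := 0) (j := 1) (ξ := z) (by decide) hs fun w hw => ?_
  rw [hb, hc, unipotent_eq_transvection_zero_one] at hzz'
  rw [orbitTimes, ← mem_gapTimes_transvection_mul (by decide), hzz'.gapTimes_eq (by decide)]
  exact orbitTimes_subset_of_tendsto (hK.zero_one.mono hK.subset) hz hz' mz
    (Eventually.of_forall fun n => (h n).translate_left_mem)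
    (fun n => (h n).orbitTimes_translate_eq.subset) hw

end Limit

end Config

end Shear

/-! ### Maximal inequalities -/

section MaximalInequalities

variable {X : Type*}

section Subgroups

variable [MeasurableSpace X] {μ : Measure X} {φ : X → ℝ≥0∞}

lemma measure_le_setLIntegral_of_card_le_sum {ι : Type*} {s : Finset ι} (hs : s.Nonempty)
    {T : ι → X → X} (hT : ∀ i, MeasurePreserving (T i) μ μ) (hφ : Measurable φ) {A : Set X}
    (hA : MeasurableSet A) (hTA : ∀ i ∈ s, T i ⁻¹' A = A)
    (hle : ∀ x ∈ A, (s.card : ℝ≥0∞) ≤ ∑ i ∈ s, φ (T i x)) : μ A ≤ ∫⁻ x in A, φ x ∂μ := by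
  have hφT (i : ι) : Measurable fun x => φ (T i x) := hφ.comp (hT i).measurable
  refine (ENNReal.mul_le_mul_iff_right (a := (s.card : ℝ≥0∞)) (by simp [hs.ne_empty])
    (ENNReal.natCast_ne_top _)).1 ?_
  calc
    (s.card : ℝ≥0∞) * μ A = ∫⁻ _ in A, (s.card : ℝ≥0∞) ∂μ := (setLIntegral_const _ _).symm
    _ ≤ ∫⁻ x in A, ∑ i ∈ s, φ (T i x) ∂μ :=
      setLIntegral_mono (Finset.measurable_fun_sum _ fun i _ => hφT i) hle
    _ = ∑ i ∈ s, ∫⁻ x in T i ⁻¹' A, φ (T i x) ∂μ := by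
      rw [lintegral_finsetSum _ fun i _ => hφT i]
      exact Finset.sum_congr rfl fun i hi => by rw [hTA i hi]
    _ = ∑ _i ∈ s, ∫⁻ x in A, φ x ∂μ :=
      Finset.sum_congr rfl fun i _ => (hT i).setLIntegral_comp_preimage hA hφ
    _ = s.card * ∫⁻ x in A, φ x ∂μ := by rw [Finset.sum_const, nsmul_eq_mul]

lemma measure_iUnion_le_lintegral_of_forall_sdiff {E : ℕ → Set X} (hE : ∀ m, MeasurableSet (E m))
    (h : ∀ m n, μ (E m \ ⋃ j ∈ Finset.Ioo m n, E j) ≤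
      ∫⁻ x in E m \ ⋃ j ∈ Finset.Ioo m n, E j, φ x ∂μ) :
    μ (⋃ m, E m) ≤ ∫⁻ x, φ x ∂μ := by
  have tail (n : ℕ) : ∀ m ≤ n, μ (⋃ j ∈ Finset.Ico m n, E j) ≤
      ∫⁻ x in ⋃ j ∈ Finset.Ico m n, E j, φ x ∂μ := by
    refine fun m hmn => Nat.decreasingInduction' (fun m hm _ ih => ?_) hmn (by simp)
    have hU : MeasurableSet (⋃ j ∈ Finset.Ioo m n, E j) :=
      Finset.measurableSet_biUnion _ fun j _ => hE j
    rw [← Finset.Ioo_insert_left hm, Finset.set_biUnion_insert, ← Set.sdiff_union_self,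
      measure_union Set.disjoint_sdiff_left hU, lintegral_union hU Set.disjoint_sdiff_left]
    exact add_le_add (h m n) (by simpa [← Finset.Ico_succ_left_eq_Ioo] using ih)
  have hmono : Monotone fun n => ⋃ j ∈ Finset.Ico 0 n, E j := fun n n' hn =>
    Set.biUnion_subset_biUnion_left (Finset.coe_subset.2 (Finset.Ico_subset_Ico_right hn))
  have hunion : ⋃ m, E m = ⋃ n, ⋃ j ∈ Finset.Ico 0 n, E j := by
    ext x
    simp only [Set.mem_iUnion, Finset.mem_Ico, zero_le, true_and, exists_prop]
    exact ⟨fun ⟨m, hm⟩ => ⟨m + 1, m, m.lt_succ_self, hm⟩, fun ⟨_, m, _, hm⟩ => ⟨m, hm⟩⟩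
  rw [hunion, hmono.measure_iUnion]
  exact iSup_le fun n => (tail n 0 n.zero_le).trans (setLIntegral_le_lintegral _ _)

/- The last exceptional level of a point is invariant under the subgroup of that level. -/
theorem measure_exists_card_lt_sum_le_lintegral {G : Type*} [AddGroup G] {T : G → X → X}
    (hT : ∀ e, MeasurePreserving (T e) μ μ) (hTT : ∀ e f x, T e (T f x) = T (e + f) x)
    {H : ℕ → Finset G} (hH : Monotone H) (hne : ∀ m, (H m).Nonempty)
    (hadd : ∀ m, ∀ e ∈ H m, ∀ f, f + e ∈ H m ↔ f ∈ H m) (hφ : Measurable φ) :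
    μ {x | ∃ m, ((H m).card : ℝ≥0∞) < ∑ f ∈ H m, φ (T f x)} ≤ ∫⁻ x, φ x ∂μ := by
  set E : ℕ → Set X := fun m => {x | ((H m).card : ℝ≥0∞) < ∑ f ∈ H m, φ (T f x)}
  have hE (m : ℕ) : MeasurableSet (E m) := measurableSet_lt measurable_const
    (Finset.measurable_fun_sum _ fun f _ => hφ.comp (hT f).measurable)
  have sum_comp {m n : ℕ} (hmn : m ≤ n) {e : G} (he : e ∈ H m) (x : X) :
      ∑ f ∈ H n, φ (T f (T e x)) = ∑ f ∈ H n, φ (T f x) := by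
    simp only [hTT]
    have hsub (b : G) : b + e ∈ H n ↔ b ∈ H n := hadd n e (hH hmn he) b
    refine Finset.sum_bij (fun f _ => f + e) (fun f hf => (hsub f).2 hf)
      (fun _ _ _ _ h => add_right_cancel h) (fun b hb => ⟨b - e, ?_, sub_add_cancel b e⟩)
      fun _ _ => rfl
    rwa [← hsub, sub_add_cancel]
  have hinv {m n : ℕ} (hmn : m ≤ n) {e : G} (he : e ∈ H m) : T e ⁻¹' E n = E n :=
    Set.ext fun x => by simp only [E, Set.mem_preimage, Set.mem_ofPred_eq, sum_comp hmn he]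
  suffices μ (⋃ m, E m) ≤ ∫⁻ x, φ x ∂μ by rwa [← Set.ofPred_exists] at this
  refine measure_iUnion_le_lintegral_of_forall_sdiff hE fun m n =>
    measure_le_setLIntegral_of_card_le_sum (hne m) hT hφ
      ((hE m).diff (Finset.measurableSet_biUnion _ fun j _ => hE j)) (fun e he => ?_)
      fun x hx => hx.1.le
  rw [Set.preimage_sdiff, Set.preimage_iUnion₂, hinv le_rfl he]
  exact congrArg _ (Set.iUnion₂_congr fun j hj => hinv (Finset.mem_Ioo.1 hj).1.le he)

end Subgroups

section Birkhoff

variable {T : X → X} {φ : X → ℝ≥0∞}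

lemma birkhoffSum_mono_nat (T : X → X) (φ : X → ℝ≥0∞) (x : X) :
    Monotone fun n => birkhoffSum T φ n x := fun m n hmn => by
  obtain ⟨r, rfl⟩ := Nat.exists_eq_add_of_le hmn
  exact (birkhoffSum_add T φ m r x).ge.trans' le_self_add

/- Greedy covering: at a visit to `E` skip a whole good window, otherwise advance by one step. -/
lemma birkhoffSum_indicator_le {E : Set X} {N : ℕ}
    (hE : ∀ x ∈ E, ∃ l : ℕ, 0 < l ∧ l ≤ N ∧ (l : ℝ≥0∞) ≤ birkhoffSum T φ l x) (L : ℕ) (x : X) :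
    birkhoffSum T (E.indicator 1) L x ≤ birkhoffSum T φ (L + N) x := by
  have le_length (l : ℕ) (x : X) : birkhoffSum T (E.indicator (1 : X → ℝ≥0∞)) l x ≤ l := by
    refine (Finset.sum_le_card_nsmul _ _ 1 fun j _ => ?_).trans (by simp)
    exact Set.indicator_le_self' (fun _ _ => zero_le) _
  induction L using Nat.strong_induction_on generalizing x with
  | _ L ih =>
    rcases L.eq_zero_or_pos with rfl | hL
    · simp
    by_cases hx : x ∈ E
    · obtain ⟨l, hl0, hlN, hl⟩ := hE x hx
      rcases le_total l L with hlL | hLl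
      · obtain ⟨r, rfl⟩ := Nat.exists_eq_add_of_le hlL
        rw [birkhoffSum_add, Nat.add_assoc, birkhoffSum_add]
        exact add_le_add ((le_length l x).trans hl) (ih r (by omega) _)
      · calc
          birkhoffSum T (E.indicator 1) L x ≤ (L : ℝ≥0∞) := le_length L x
          _ ≤ (l : ℝ≥0∞) := by exact_mod_cast hLl
          _ ≤ birkhoffSum T φ l x := hl
          _ ≤ birkhoffSum T φ (L + N) x := birkhoffSum_mono_nat T φ x (by omega)
    · obtain ⟨r, rfl⟩ := Nat.exists_eq_add_of_le' hL
      rw [birkhoffSum_succ', Set.indicator_of_notMem hx, zero_add, Nat.add_right_comm,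
        birkhoffSum_succ']
      exact (ih r r.lt_succ_self _).trans le_add_self

lemma le_of_forall_natCast_mul_le {x y : ℝ≥0∞} {N : ℕ}
    (h : ∀ L : ℕ, (L : ℝ≥0∞) * x ≤ (L + N : ℕ) * y) : x ≤ y := by
  rcases eq_or_ne y ∞ with rfl | hy
  · exact le_top
  have hx : x ≠ ∞ := ne_top_of_le_ne_top (ENNReal.mul_ne_top (ENNReal.natCast_ne_top (1 + N)) hy)
    (by simpa only [Nat.cast_one, one_mul] using h 1)
  by_contra! hlt
  rw [← ENNReal.toReal_lt_toReal hy hx] at hlt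
  obtain ⟨L, hL⟩ := exists_nat_gt (N * y.toReal / (x.toReal - y.toReal))
  rw [div_lt_iff₀ (sub_pos.2 hlt)] at hL
  have hreal := ENNReal.toReal_mono (ENNReal.mul_ne_top (ENNReal.natCast_ne_top _) hy) (h L)
  rw [ENNReal.toReal_mul, ENNReal.toReal_mul, ENNReal.toReal_natCast, ENNReal.toReal_natCast,
    Nat.cast_add] at hreal
  linarith

variable [MeasurableSpace X] {μ : Measure X}

lemma measurable_birkhoffSum (hT : Measurable T) (hφ : Measurable φ) (n : ℕ) :
    Measurable (birkhoffSum T φ n) :=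
  Finset.measurable_fun_sum _ fun j _ => hφ.comp (hT.iterate j)

lemma lintegral_birkhoffSum (hT : MeasurePreserving T μ μ) (hφ : Measurable φ) (n : ℕ) :
    ∫⁻ x, birkhoffSum T φ n x ∂μ = n * ∫⁻ x, φ x ∂μ := by
  have hφT (j : ℕ) : Measurable fun x => φ (T^[j] x) := hφ.comp (hT.iterate j).measurable
  simp only [birkhoffSum]
  rw [lintegral_finsetSum _ fun j _ => hφT j]
  simp [(hT.iterate _).lintegral_comp hφ]

theorem measure_exists_lt_birkhoffSum_le_lintegral (hT : MeasurePreserving T μ μ)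
    (hφ : Measurable φ) :
    μ {x | ∃ l : ℕ, (l : ℝ≥0∞) < birkhoffSum T φ l x} ≤ ∫⁻ x, φ x ∂μ := by
  set E : ℕ → Set X := fun N => {x | ∃ l ≤ N, (l : ℝ≥0∞) < birkhoffSum T φ l x}
  have hE (N : ℕ) : MeasurableSet (E N) := by
    have : E N = ⋃ l ≤ N, {x | (l : ℝ≥0∞) < birkhoffSum T φ l x} := by
      ext x
      simp [E]
    rw [this]
    exact MeasurableSet.biUnion (Set.to_countable _) fun l _ =>
      measurableSet_lt measurable_const (measurable_birkhoffSum hT.measurable hφ l)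
  have hEN (N : ℕ) : μ (E N) ≤ ∫⁻ x, φ x ∂μ := by
    refine le_of_forall_natCast_mul_le (N := N) fun L => ?_
    rw [← lintegral_indicator_one (hE N),
      ← lintegral_birkhoffSum hT (measurable_one.indicator (hE N)), ← lintegral_birkhoffSum hT hφ]
    refine lintegral_mono fun x => birkhoffSum_indicator_le (fun y hy => ?_) L x
    obtain ⟨l, hlN, hl⟩ := hy
    refine ⟨l, Nat.pos_of_ne_zero ?_, hlN, hl.le⟩
    rintro rfl
    simp at hl
  have hunion : {x | ∃ l : ℕ, (l : ℝ≥0∞) < birkhoffSum T φ l x} = ⋃ N, E N := by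
    ext x
    simp only [E, Set.mem_ofPred_eq, Set.mem_iUnion]
    exact ⟨fun ⟨l, hl⟩ => ⟨l, l, le_rfl, hl⟩, fun ⟨_, l, _, hl⟩ => ⟨l, hl⟩⟩
  have hmono : Monotone E := fun N N' hN x ⟨l, hlN, hl⟩ => ⟨l, hlN.trans hN, hl⟩
  rw [hunion, hmono.measure_iUnion]
  exact iSup_le hEN

end Birkhoff

end MaximalInequalities

/-! ### Lower hemicontinuity on large closed sets -/

section Lusin

variable {X Y : Type*} [TopologicalSpace X] [TopologicalSpace Y]

lemma isClosed_setOf_exists_mem {S : X → Set Y} (hS : IsClosed {p : X × Y | p.2 ∈ S p.1})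
    {C : Set Y} (hC : IsCompact C) : IsClosed {x | (S x ∩ C).Nonempty} := by
  have := isCompact_iff_compactSpace.1 hC
  have hclosed : IsClosed {p : X × C | (p.2 : Y) ∈ S p.1} :=
    hS.preimage (continuous_fst.prodMk (continuous_subtype_val.comp continuous_snd))
  convert isClosedMap_fst_of_compactSpace _ hclosed
  ext x
  constructor
  · rintro ⟨y, hy, hyC⟩
    exact ⟨(x, ⟨y, hyC⟩), hy, rfl⟩
  · rintro ⟨⟨x, y⟩, hy, rfl⟩
    exact ⟨y, hy, y.2⟩

/- A Lusin theorem for set-valued maps: delete small neighbourhoods of the boundaries of the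
countably many closed sets `{x | S x meets closure U}`, for `U` in a countable basis. -/
theorem exists_isClosed_lowerHemicontinuousOn [T2Space Y] [LocallyCompactSpace Y]
    [SecondCountableTopology Y] [MeasurableSpace X] [OpensMeasurableSpace X] (μ : Measure X)
    [IsFiniteMeasure μ] [μ.WeaklyRegular] {S : X → Set Y}
    (hS : IsClosed {p : X × Y | p.2 ∈ S p.1}) {η : ℝ≥0∞} (hη : η ≠ 0) :
    ∃ K : Set X, IsClosed K ∧ LowerHemicontinuousOn S K ∧ μ Kᶜ < η := by
  let I := {U : Set Y // U ∈ TopologicalSpace.countableBasis Y ∧ IsCompact (closure U)}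
  have : Countable I := (TopologicalSpace.countable_countableBasis Y).mono (fun _ h => h.1)
  set E : I → Set X := fun U => {x | (S x ∩ closure U.1).Nonempty}
  have hE (U : I) : IsClosed (E U) := isClosed_setOf_exists_mem hS U.2.2
  obtain ⟨δ, hδ, hsum⟩ := ENNReal.exists_pos_sum_of_countable' hη I
  choose C hCE hC hμC using fun U : I =>
    (hE U).measurableSet.compl.exists_isClosed_sdiff_lt (measure_ne_top μ _) (hδ U).ne'
  refine ⟨⋂ U, E U ∪ C U, isClosed_iInter fun U => (hE U).union (hC U), ?_, ?_⟩
  · rintro x - V ⟨hV, y, hy, hyV⟩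
    obtain ⟨L, hLy, hLV, hL⟩ := local_compact_nhds (hV.mem_nhds hyV)
    obtain ⟨U, hU, hyU, hUL⟩ :=
      (TopologicalSpace.isBasis_countableBasis Y).mem_nhds_iff.1 hLy
    let i : I := ⟨U, hU, hL.closure_of_subset hUL⟩
    have hx : x ∉ C i := fun h => hCE i h ⟨y, hy, subset_closure hyU⟩
    filter_upwards [nhdsWithin_le_nhds ((hC i).isOpen_compl.mem_nhds hx), self_mem_nhdsWithin]
      with x' hx'C hx'
    have hx'E : x' ∈ E i := (Set.mem_iInter.1 hx' i).resolve_right hx'C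
    exact ⟨hV, hx'E.mono (Set.inter_subset_inter_right _
      ((closure_minimal hUL hL.isClosed).trans hLV))⟩
  · calc
      μ (⋂ U, E U ∪ C U)ᶜ = μ (⋃ U, (E U)ᶜ \ C U) := by
        simp only [Set.compl_iInter, Set.compl_union, Set.sdiff_eq]
      _ ≤ ∑' U, μ ((E U)ᶜ \ C U) := measure_iUnion_le _
      _ ≤ ∑' U, δ U := ENNReal.tsum_le_tsum fun U => (hμC U).le
      _ < η := hsum

lemma exists_isClosed_subset_of_ae_imp [MeasurableSpace X] [OpensMeasurableSpace X]
    (μ : Measure X) [IsFiniteMeasure μ] [μ.WeaklyRegular] {K : Set X} (hK : MeasurableSet K)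
    {p : X → Prop} (hp : ∀ᵐ x ∂μ, x ∈ K → p x) {η : ℝ≥0∞} (hη : η ≠ 0) :
    ∃ C ⊆ K, IsClosed C ∧ (∀ x ∈ C, p x) ∧ μ (K \ C) < η := by
  set Z := toMeasurable μ {x | ¬ (x ∈ K → p x)}
  have hZ : μ Z = 0 := (measure_toMeasurable _).trans (ae_iff.1 hp)
  obtain ⟨C, hCKZ, hC, hμC⟩ := (hK.diff (measurableSet_toMeasurable μ _)).exists_isClosed_sdiff_lt
    (measure_ne_top μ (K \ Z)) hη
  refine ⟨C, fun x hx => (hCKZ hx).1, hC, fun x hx => ?_, ?_⟩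
  · by_contra hpx
    exact (hCKZ hx).2 (subset_toMeasurable _ _ fun h => hpx (h (hCKZ hx).1))
  · refine (measure_mono_ae ?_).trans_lt hμC
    filter_upwards [measure_eq_zero_iff_ae_notMem.1 hZ] with x hxZ hx
    exact ⟨⟨hx.1, hxZ⟩, hx.2⟩

end Lusin

namespace Config

variable {P : Params} {μ : Measure (Config P)}

/-- `μ` is preserved by the diagonal flow and by the translations. -/
structure IsInvariant (μ : Measure (Config P)) : Prop where
  flow : ∀ k l, MeasurePreserving (flow k l) μ μ
  translate : ∀ f, MeasurePreserving (translate f) μ μ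

lemma IsInvariant.ae_isRecurrent [IsFiniteMeasure μ] (hμ : IsInvariant μ) {K : Set (Config P)}
    (hK : MeasurableSet K) : ∀ᵐ ξ ∂μ, ξ ∈ K → IsRecurrent K ξ := by
  filter_upwards
    [(hμ.flow 0 (-1)).conservative.ae_mem_imp_frequently_image_mem hK.nullMeasurableSet,
      (hμ.flow (-1) (-1)).conservative.ae_mem_imp_frequently_image_mem hK.nullMeasurableSet]
    with ξ h₁ h₂ hξ
  simp only [iterate_flow, mul_zero, mul_neg_one] at h₁ h₂
  exact ⟨h₁ hξ, h₂ hξ⟩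

lemma exists_isClosed_lowerHemicontinuousOn_orbitTimes (μ : Measure (Config P))
    [IsFiniteMeasure μ] (i j : Fin 3) {η : ℝ≥0∞} (hη : η ≠ 0) :
    ∃ K : Set (Config P), IsClosed K ∧ LowerHemicontinuousOn (orbitTimes i j) K ∧ μ Kᶜ < η := by
  refine exists_isClosed_lowerHemicontinuousOn μ ?_ hη
  exact (isClosed_gapTimes_graph P.ε i j).preimage (continuous_base.prodMap continuous_id)

lemma IsInvariant.exists_isRecurrencePair [IsFiniteMeasure μ] (hμ : IsInvariant μ) {η : ℝ≥0∞}
    (hη : η ≠ 0) : ∃ K 𝒦 : Set (Config P), IsRecurrencePair K 𝒦 ∧ μ 𝒦ᶜ < η := by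
  have hη4 : η / 4 ≠ 0 := ENNReal.div_ne_zero.2 ⟨hη, ENNReal.ofNat_ne_top⟩
  obtain ⟨K₁, hK₁, hcont₁, hμ₁⟩ := exists_isClosed_lowerHemicontinuousOn_orbitTimes μ 0 1 hη4
  obtain ⟨K₂, hK₂, hcont₂, hμ₂⟩ := exists_isClosed_lowerHemicontinuousOn_orbitTimes μ 0 2 hη4
  obtain ⟨K₃, hK₃, hcont₃, hμ₃⟩ := exists_isClosed_lowerHemicontinuousOn_orbitTimes μ 2 1 hη4
  set K := K₁ ∩ K₂ ∩ K₃
  have hK : IsClosed K := (hK₁.inter hK₂).inter hK₃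
  obtain ⟨𝒦, h𝒦K, h𝒦, hrec, hμ𝒦⟩ := exists_isClosed_subset_of_ae_imp μ hK.measurableSet
    (hμ.ae_isRecurrent hK.measurableSet) hη4
  refine ⟨K, 𝒦, ⟨hK, h𝒦, h𝒦K, hcont₁.mono fun _ h => h.1.1, hcont₂.mono fun _ h => h.1.2,
    hcont₃.mono fun _ h => h.2, hrec⟩, ?_⟩
  have hcover : 𝒦ᶜ ⊆ K₁ᶜ ∪ K₂ᶜ ∪ K₃ᶜ ∪ K \ 𝒦 := by
    rw [← Set.compl_inter, ← Set.compl_inter]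
    exact fun ξ hξ => (em (ξ ∈ K)).elim (fun h => .inr ⟨h, hξ⟩) .inl
  calc
    μ 𝒦ᶜ ≤ μ K₁ᶜ + μ K₂ᶜ + μ K₃ᶜ + μ (K \ 𝒦) := by
      exact (measure_mono hcover).trans ((measure_union_le _ _).trans (add_le_add_left
        ((measure_union_le _ _).trans (add_le_add_left (measure_union_le _ _) _)) _))
    _ < η / 4 + η / 4 + η / 4 + η / 4 :=
      ENNReal.add_lt_add (ENNReal.add_lt_add (ENNReal.add_lt_add hμ₁ hμ₂) hμ₃) hμ𝒦
    _ = 4 * (η / 4) := by ring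
    _ = η := ENNReal.mul_div_cancel (by simp) (by simp)

end Config

/-! ### Returns along the diagonal flow -/

section DoubleRoot

open Polynomial

lemma exists_eq_intCast_of_double_root {K : Type*} [Field K] [CharZero K] {p : ℤ[X]} {ρ ρ' : K}
    (hp : p.map (Int.castRingHom K) = (X - C ρ) * (X - C ρ) * (X - C ρ')) (hmonic : p.Monic)
    (hne : ρ ≠ ρ') : ∃ z : ℤ, ρ = z := by
  have hcoeff (n : ℕ) : (p.coeff n : K) = ((X - C ρ) * (X - C ρ) * (X - C ρ')).coeff n := by
    rw [← hp, coeff_map, eq_intCast]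
  simp only [Cubic.prod_X_sub_C_eq] at hcoeff
  have h₂ : (p.coeff 2 : K) = -(ρ + ρ + ρ') := by rw [hcoeff, Cubic.coeff_eq_b]
  have h₁ : (p.coeff 1 : K) = ρ * ρ + ρ * ρ' + ρ * ρ' := by rw [hcoeff, Cubic.coeff_eq_c]
  have h₀ : (p.coeff 0 : K) = -(ρ * ρ * ρ') := by rw [hcoeff, Cubic.coeff_eq_d]
  have hdisc : 2 * ((p.coeff 2 : K) ^ 2 - 3 * p.coeff 1) ≠ 0 := by
    rw [h₂, h₁, show 2 * ((-(ρ + ρ + ρ')) ^ 2 - 3 * (ρ * ρ + ρ * ρ' + ρ * ρ')) =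
      2 * (ρ - ρ') ^ 2 by ring]
    exact mul_ne_zero two_ne_zero (pow_ne_zero 2 (sub_ne_zero.2 hne))
  have hrat : ρ = algebraMap ℚ K ((9 * p.coeff 0 - p.coeff 2 * p.coeff 1) /
      (2 * ((p.coeff 2) ^ 2 - 3 * p.coeff 1))) := by
    simp only [map_div₀, map_sub, map_mul, map_pow, map_intCast, map_ofNat]
    rw [eq_div_iff hdisc, h₀, h₁, h₂]
    ring
  have hint : IsIntegral ℤ ρ := ⟨p, hmonic, by
    rw [← eval_map, algebraMap_int_eq, hp]
    simp⟩
  rw [hrat, isIntegral_algebraMap_iff (algebraMap ℚ K).injective] at hint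
  obtain ⟨z, hz⟩ := IsIntegrallyClosed.isIntegral_iff.1 hint
  exact ⟨z, by rw [hrat, ← hz]; simp⟩

lemma one_le_abs_of_double_root {p : ℤ[X]} {ρ ρ' : ℝ}
    (hp : p.map (Int.castRingHom ℝ) = (X - C ρ) * (X - C ρ) * (X - C ρ')) (hmonic : p.Monic)
    (h₀ : |p.coeff 0| = 1) : 1 ≤ |ρ| := by
  have hprod : |ρ| * |ρ| * |ρ'| = 1 := by
    have := congrArg (fun f => |f.coeff 0|) hp
    simp only [Cubic.prod_X_sub_C_eq, Cubic.coeff_eq_d, coeff_map, eq_intCast, abs_neg,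
      abs_mul, ← Int.cast_abs, h₀, Int.cast_one] at this
    exact this.symm
  rcases eq_or_ne ρ ρ' with rfl | hne
  · rw [← pow_two, ← pow_succ, pow_eq_one_iff_of_nonneg (abs_nonneg ρ) (by simp)] at hprod
    exact hprod.ge
  · obtain ⟨z, rfl⟩ := exists_eq_intCast_of_double_root hp hmonic hne
    rw [← Int.cast_abs, ← Int.cast_one, Int.cast_le]
    exact Int.one_le_abs fun hz => by simp [hz] at hprod

end DoubleRoot

lemma charpoly_eq_of_mul_eq_mul {R ι : Type*} [CommRing R] [Fintype ι] [DecidableEq ι]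
    {A B x : Matrix ι ι R} (hx : IsUnit x.det) (h : A * x = x * B) : A.charpoly = B.charpoly := by
  rw [← Matrix.mul_nonsing_inv_cancel_right x A hx, h, mul_assoc, charpoly_mul_comm, mul_assoc,
    nonsing_inv_mul _ hx, mul_one]

lemma charpoly_fin_three_of_eq_zero {R : Type*} [CommRing R] {A : Matrix (Fin 3) (Fin 3) R}
    (h₁₀ : A 1 0 = 0) (h₂₀ : A 2 0 = 0) (h₁₂ : A 1 2 = 0) :
    A.charpoly = (.X - .C (A 0 0)) * (.X - .C (A 1 1)) * (.X - .C (A 2 2)) := by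
  simp [charpoly, det_fin_three, h₁₀, h₂₀, h₁₂]

lemma SameLattice.exists_charpoly_eq_map {ι : Type*} [Fintype ι] [DecidableEq ι]
    {x A : Matrix ι ι ℝ} (h : SameLattice x (A * x)) :
    ∃ Q : Matrix ι ι ℤ, |Q.det| = 1 ∧ A.charpoly = Q.charpoly.map (Int.castRingHom ℝ) := by
  obtain ⟨hx, Q, hQ, hAx⟩ := h
  refine ⟨Q, hQ, ?_⟩
  rw [charpoly_eq_of_mul_eq_mul (isUnit_iff_ne_zero.2 fun h => by simp [h] at hx) hAx,
    ← charpoly_map]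
  rfl

/- An element `g` of the group fixing the flow direction up to a shear, and taking `x` to its
time-`k` image, would conjugate `diagFlow (-k) 0 * g` to an integral matrix whose repeated
eigenvalue `M⁻ᵏ g₀₀` is a small algebraic integer in `ℚ`. -/
theorem not_sameLattice_diagFlow_mul {P : Params} {k : ℤ} (hk : 1 ≤ k)
    {x g : Matrix (Fin 3) (Fin 3) ℝ} (h₀₀ : |g 0 0| < 2) (h₁₁ : g 1 1 = g 0 0) (h₁₀ : g 1 0 = 0)
    (h₂₀ : g 2 0 = 0) (h₁₂ : g 1 2 = 0) : ¬ SameLattice (P.diagFlow k 0 * x) (g * x) := by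
  intro h
  have hrel : SameLattice x (P.diagFlow (-k) 0 * g * x) := by
    have := h.mul_left (P.abs_det_diagFlow (-k) 0)
    rwa [← mul_assoc, ← mul_assoc, P.diagFlow_mul_diagFlow, neg_add_cancel, add_zero,
      P.diagFlow_zero, one_mul] at this
  obtain ⟨Q, hQ, hchar⟩ := hrel.exists_charpoly_eq_map
  have entry (i j) : (P.diagFlow (-k) 0 * g) i j = P.diagEntry (-k) 0 i * g i j :=
    diagonal_mul _ _ _ _
  rw [charpoly_fin_three_of_eq_zero (by rw [entry, h₁₀, mul_zero]) (by rw [entry, h₂₀, mul_zero])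
    (by rw [entry, h₁₂, mul_zero]), show (P.diagFlow (-k) 0 * g) 1 1 =
    (P.diagFlow (-k) 0 * g) 0 0 by simp [entry, h₁₁, Params.diagEntry]] at hchar
  have hcoeff : |Q.charpoly.coeff 0| = 1 := by
    have := Q.det_eq_sign_charpoly_coeff
    rwa [this, abs_mul, abs_pow, abs_neg, abs_one, one_pow, one_mul] at hQ
  refine (one_le_abs_of_double_root hchar.symm Q.charpoly_monic hcoeff).not_gt ?_
  have hM : (2 : ℝ) ≤ P.M ^ k :=
    calc (2 : ℝ) ≤ P.M := by exact_mod_cast P.two_le_M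
      _ = (P.M : ℝ) ^ (1 : ℤ) := (zpow_one _).symm
      _ ≤ P.M ^ k := zpow_le_zpow_right₀ P.one_lt_M.le hk
  simp only [entry, Params.diagEntry, cons_val_zero, add_zero, abs_mul, _root_.zpow_neg, abs_inv]
  rw [abs_of_pos (by positivity), inv_mul_lt_iff₀ (by positivity), mul_one]
  exact h₀₀.trans_le hM

/-! ### Polynomial divergence of unipotent orbits -/

section Displacement

variable {g : Matrix (Fin 3) (Fin 3) ℝ}

/-- The displacement of `g` under conjugation by `transvection 0 1 t`, which is how the relative
position of two points changes when both move for time `t` along the same unipotent flow. -/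
def displacement (t : ℝ) (g : Matrix (Fin 3) (Fin 3) ℝ) : Matrix (Fin 3) (Fin 3) ℝ :=
  transvection 0 1 t * g * transvection 0 1 (-t) - g

lemma displacement_eq (t : ℝ) (g : Matrix (Fin 3) (Fin 3) ℝ) :
    displacement t g =
      !![t * g 1 0, t * ((g 1 1 - g 0 0) - t * g 1 0), t * g 1 2;
         0, -(t * g 1 0), 0;
         0, -(t * g 2 0), 0] := by
  ext i j
  fin_cases i <;> fin_cases j <;>
    simp [displacement, transvection, mul_apply, Fin.sum_univ_three, single_apply, one_apply] <;>
    ring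

/-- The coordinates of `g` that move under `displacement` do so by at most a bounded amount during
the times in `[-w, w]`. -/
structure IsSmallShear (g : Matrix (Fin 3) (Fin 3) ℝ) (w : ℝ) : Prop where
  diag : |g 1 1 - g 0 0| * w ≤ 1
  one_zero : |g 1 0| * w ^ 2 ≤ 1
  one_two : |g 1 2| * w ≤ 1
  two_zero : |g 2 0| * w ≤ 1

lemma exists_ne_half_le_abs {ι : Type*} [Fintype ι] (hι : 2 < Fintype.card ι) {t : ι → ℝ} {s : ℝ}
    (hsep : Pairwise fun i j => s ≤ |t i - t j|) :
    ∃ i j, i ≠ j ∧ s / 2 ≤ |t i| ∧ s / 2 ≤ |t j| := by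
  have half {i j : ι} (hij : i ≠ j) (hi : ¬ s / 2 ≤ |t i|) : s / 2 ≤ |t j| := by
    linarith [hsep hij, abs_sub (t i) (t j)]
  obtain ⟨i, j, k, hij, hik, hjk⟩ := Fintype.two_lt_card_iff.1 hι
  by_cases hi : s / 2 ≤ |t i|
  · by_cases hj : s / 2 ≤ |t j|
    · exact ⟨i, j, hij, hi, hj⟩
    · exact ⟨i, k, hik, hi, half hjk hj⟩
  · exact ⟨j, k, hjk, half hij hi, half hik hi⟩

lemma abs_mul_le_of_half_le_abs {s κ t x : ℝ} (ht : s / 2 ≤ |t|) (h : |t * x| ≤ κ) :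
    |x| * s ≤ 2 * κ := by
  rw [abs_mul] at h
  nlinarith [abs_nonneg x]

lemma abs_coeff_le_of_abs_mul_sub_mul_le {s κ R t t' d e : ℝ} (hs : 0 ≤ s) (ht : s / 2 ≤ |t|)
    (ht' : s / 2 ≤ |t'|) (htt' : s ≤ |t - t'|) (hR : |t| ≤ R) (h : |t * (d - t * e)| ≤ κ)
    (h' : |t' * (d - t' * e)| ≤ κ) :
    |e| * s ^ 2 ≤ 4 * κ ∧ |d| * s ^ 2 ≤ 2 * κ * s + R * (4 * κ) := by
  have hlin := abs_mul_le_of_half_le_abs ht h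
  have hlin' := abs_mul_le_of_half_le_abs ht' h'
  have he : |e| * s ^ 2 ≤ 4 * κ :=
    calc |e| * s ^ 2 = s * |e| * s := by ring
      _ ≤ |t - t'| * |e| * s := by gcongr
      _ = |(d - t' * e) - (d - t * e)| * s := by rw [← abs_mul]; ring_nf
      _ ≤ (|d - t' * e| + |d - t * e|) * s := by gcongr; exact abs_sub _ _
      _ ≤ 4 * κ := by linarith
  refine ⟨he, ?_⟩
  calc |d| * s ^ 2 = |(d - t * e) + t * e| * s ^ 2 := by ring_nf
    _ ≤ (|d - t * e| + |t| * |e|) * s ^ 2 := by rw [← abs_mul]; gcongr; exact abs_add_le _ _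
    _ = |d - t * e| * s * s + |t| * (|e| * s ^ 2) := by ring
    _ ≤ 2 * κ * s + R * (4 * κ) := by gcongr; exact (abs_nonneg t).trans hR

/- The displacement is polynomial in `t` of degree at most two, so it cannot be small at three
separated times unless all its coefficients are. -/
theorem exists_le_abs_displacement {ι : Type*} [Fintype ι] (hι : 2 < Fintype.card ι) {t : ι → ℝ}
    {s R : ℝ} (hs : 0 < s) (hsep : Pairwise fun i j => s ≤ |t i - t j|) (hR : ∀ i, |t i| ≤ R)
    (hg : ¬ IsSmallShear g R) : ∃ i k l, (s / R) ^ 2 / 16 ≤ |displacement (t i) g k l| := by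
  obtain ⟨a, b, hab, ha, hb⟩ := exists_ne_half_le_abs hι hsep
  have hR0 : 0 < R := by linarith [hR a]
  have hsR : s / R ≤ 2 := by
    rw [div_le_iff₀ hR0]
    linarith [hsep hab, abs_sub (t a) (t b), hR a, hR b]
  set ρ := s / R
  have hρ0 : 0 < ρ := by positivity
  have hsρ : s = ρ * R := (div_mul_cancel₀ s hR0.ne').symm
  by_contra! hsmall
  set κ := ρ ^ 2 / 16 with hκ
  have entry₀₁ (i) := (hsmall i 0 1).le
  have entry₀₂ := (hsmall a 0 2).le
  have entry₂₁ := (hsmall a 2 1).le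
  simp only [displacement_eq, of_apply, cons_val', cons_val, abs_neg] at entry₀₁ entry₀₂ entry₂₁
  have linear {x : ℝ} (hx : |t a * x| ≤ κ) : |x| * R ≤ 1 := by
    have := abs_mul_le_of_half_le_abs ha hx
    rw [hsρ, hκ] at this
    refine le_of_mul_le_mul_left ?_ hρ0
    nlinarith
  obtain ⟨h₁₀, hdiag⟩ := abs_coeff_le_of_abs_mul_sub_mul_le hs.le ha hb (hsep hab) (hR a)
    (entry₀₁ a) (entry₀₁ b)
  refine hg ⟨?_, ?_, linear entry₀₂, linear entry₂₁⟩
  · refine le_of_mul_le_mul_left ?_ (show 0 < ρ ^ 2 * R by positivity)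
    calc ρ ^ 2 * R * (|g 1 1 - g 0 0| * R) = |g 1 1 - g 0 0| * s ^ 2 := by rw [hsρ]; ring
      _ ≤ 2 * κ * s + R * (4 * κ) := hdiag
      _ = (ρ / 8 + 1 / 4) * (ρ ^ 2 * R) := by rw [hsρ, hκ]; ring
      _ ≤ 1 * (ρ ^ 2 * R) := by gcongr; linarith
      _ = ρ ^ 2 * R * 1 := by ring
  · refine le_of_mul_le_mul_left ?_ (show 0 < ρ ^ 2 by positivity)
    rw [hsρ, hκ] at h₁₀
    nlinarith [sq_nonneg ρ]

end Displacement

section Combinatorics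

lemma exists_mem_and_not_of_forall_exists_add {G ι : Type*} [AddCommGroup G] [Fintype ι]
    {H : Finset G} {a : ι → G} (ha : ∀ i, ∀ f ∈ H, f + a i ∈ H) {Good Bad : G → Prop}
    [DecidablePred Bad] (hbad : Fintype.card ι * #{f ∈ H | Bad f} < #H)
    (hgood : ∀ f ∈ H, ∃ i, Good (f + a i)) : ∃ f ∈ H, Good f ∧ ¬ Bad f := by
  classical
  by_contra! h
  refine hbad.not_ge ?_
  calc #H ≤ #(Finset.univ.biUnion fun i => {f ∈ H | Bad (f + a i)}) :=
        Finset.card_le_card fun f hf => by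
          obtain ⟨i, hi⟩ := hgood f hf
          simpa using ⟨hf, i, h _ (ha i f hf) hi⟩
    _ ≤ ∑ i, #{f ∈ H | Bad (f + a i)} := Finset.card_biUnion_le
    _ ≤ ∑ _i : ι, #{f ∈ H | Bad f} := Finset.sum_le_sum fun i _ =>
        Finset.card_le_card_of_injOn (· + a i)
          (fun f hf => by
            rw [Finset.mem_coe, Finset.mem_filter] at hf ⊢
            exact ⟨ha i f hf.1, hf.2⟩)
          (add_left_injective (a i)).injOn
    _ = Fintype.card ι * #{f ∈ H | Bad f} := by simp

lemma exists_maximal_levels {Φ : ℕ → ℕ → Prop} (anti : ∀ {j n n'}, n ≤ n' → Φ j n' → Φ j n)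
    (up : ∀ {j n}, Φ j n → Φ (j + 1) (n + 1)) (down : ∀ {j n}, Φ (j + 1) (n + 2) → Φ j n)
    (hbdd : ∀ j, ∃ n, ¬ Φ j n) {n₀ : ℕ} (h₀ : Φ 0 n₀) :
    ∃ n : ℕ → ℕ, (∀ j, Φ j (n j) ∧ ¬ Φ j (n j + 1)) ∧
      (∀ j, n j + 1 ≤ n (j + 1) ∧ n (j + 1) ≤ n j + 2) ∧ n₀ ≤ n 0 := by
  have hzero (j : ℕ) : Φ j 0 := by
    induction j with
    | zero => exact anti n₀.zero_le h₀
    | succ j ih => exact anti zero_le_one (up ih)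
  have hmax (j : ℕ) : ∃ n, Φ j n ∧ ¬ Φ j (n + 1) := by
    by_contra! h
    obtain ⟨n, hn⟩ := hbdd j
    exact hn (Nat.rec (hzero j) h n)
  choose n hn using hmax
  have le_of {j m : ℕ} (h : Φ j m) : m ≤ n j := not_lt.1 fun hlt => (hn j).2 (anti hlt h)
  refine ⟨n, hn, fun j => ⟨le_of (up (hn j).1), ?_⟩, le_of h₀⟩
  have : n (j + 1) - 2 ≤ n j := by
    by_cases h : 2 ≤ n (j + 1)
    · exact le_of (down (by rw [Nat.sub_add_cancel h]; exact (hn _).1))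
    · omega
  omega

open Classical in
/-- `p` fails for at most one ninth of every initial segment of `ℕ`. -/
def IsPrevalent (p : ℕ → Prop) : Prop := ∀ l : ℕ, 9 * #{j ∈ Finset.range l | ¬ p j} ≤ l

lemma exists_of_isPrevalent {p p' r : ℕ → Prop} (hp : IsPrevalent p) (hp' : IsPrevalent p')
    (hr : IsPrevalent r) {n : ℕ → ℕ} (hn : ∀ j, n j + 1 ≤ n (j + 1) ∧ n (j + 1) ≤ n j + 2)
    (h₀ : n 0 ≠ 0) : ∃ j, 3 * j < n 0 ∧ n 0 + j ≤ n j ∧ p j ∧ p' j ∧ r (n j) := by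
  classical
  have lower (j : ℕ) : n 0 + j ≤ n j := by
    induction j with
    | zero => rfl
    | succ j ih => have := hn j; omega
  have upper (j : ℕ) : n j ≤ n 0 + 2 * j := by
    induction j with
    | zero => rfl
    | succ j ih => have := hn j; omega
  have hmono : StrictMono n := strictMono_nat_of_lt_succ fun j => (hn j).1
  by_contra! h
  set L := (n 0 + 2) / 3
  have hcover : Finset.range L ⊆ {j ∈ Finset.range L | ¬ p j} ∪ {j ∈ Finset.range L | ¬ p' j} ∪
      {j ∈ Finset.range L | ¬ r (n j)} := fun j hj => by
    have hj' := Finset.mem_range.1 hj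
    have := h j (by omega) (lower j)
    simp only [Finset.mem_union, Finset.mem_filter, hj, true_and]
    tauto
  have hrn : #{j ∈ Finset.range L | ¬ r (n j)} ≤ #{j ∈ Finset.range (2 * n 0) | ¬ r j} := by
    refine Finset.card_le_card_of_injOn n (fun j hj => ?_) hmono.injective.injOn
    simp only [Finset.coe_filter, Finset.mem_range, Set.mem_ofPred_eq] at hj ⊢
    have := upper j
    exact ⟨by omega, hj.2⟩
  have hcard := (Finset.card_le_card hcover).trans (Finset.card_union_le _ _)
  have hcard' := Finset.card_union_le {j ∈ Finset.range L | ¬ p j} {j ∈ Finset.range L | ¬ p' j}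
  have hpL := hp L
  have hpL' := hp' L
  have hrL := hr (2 * n 0)
  rw [Finset.card_range] at hcard
  omega

end Combinatorics

namespace Digits

/-- The digit sequences supported in `[0, m]`. -/
noncomputable def block (m : ℕ) : Finset Digits := (Finset.Icc (0 : ℤ) m).finsupp fun _ => .univ

lemma mem_block {m : ℕ} {f : Digits} :
    f ∈ block m ↔ ∀ i, i ∉ Finset.Icc (0 : ℤ) m → f i = 0 := by
  simp only [block, Finset.mem_finsupp_iff, Finset.mem_univ, implies_true, and_true]
  exact Finsupp.support_subset_iff

lemma zero_mem_block (m : ℕ) : 0 ∈ block m := mem_block.2 fun _ _ => rfl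

lemma block_mono : Monotone block := fun _ _ hmn _ hf => mem_block.2 fun i hi =>
  mem_block.1 hf i fun h => hi (Finset.Icc_subset_Icc_right (by exact_mod_cast hmn) h)

lemma add_mem_block {m : ℕ} {e f : Digits} (he : e ∈ block m) : f + e ∈ block m ↔ f ∈ block m := by
  simp only [mem_block] at he ⊢
  refine forall₂_congr fun i hi => ?_
  rw [Finsupp.add_apply, he i hi, add_zero]

lemma single_mem_block {m : ℕ} {i : ℤ} (hi : i ∈ Finset.Icc (0 : ℤ) m) (c : ZMod 3) :
    Finsupp.single i c ∈ block m :=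
  mem_block.2 fun _ hk => Finsupp.single_eq_of_ne fun h => hk (h ▸ hi)

lemma card_block_zero : #(block 0) = 3 := by simp [block, Finset.card_finsupp]

end Digits

/-! ### Shears at typical scales -/

section Levels

variable {P : Params} {g : Matrix (Fin 3) (Fin 3) ℝ}

lemma isSmallShear_conjFlow_iff {j m : ℤ} :
    IsSmallShear (P.conjFlow (-j) (-(2 * j)) g) (P.q m) ↔
      |g 1 1 - g 0 0| * P.q m ≤ 1 ∧ |g 1 0| * P.q (2 * m + 2 * j) ≤ 1 ∧
      |g 1 2| * P.q (m + j) ≤ 1 ∧ |g 2 0| * P.q (m + j) ≤ 1 := by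
  have entry (a b x : ℝ) (ha : 0 < a) : |a * x| * b = |x| * (b * a) := by
    rw [abs_mul, abs_of_pos ha]
    ring
  have h₁₀ := entry (P.q (2 * j)) (P.q m ^ 2) (g 1 0) (P.q_pos _)
  have h₁₂ := entry (P.q j) (P.q m) (g 1 2) (P.q_pos _)
  have h₂₀ := entry (P.q j) (P.q m) (g 2 0) (P.q_pos _)
  rw [pow_two, ← P.q_add, ← P.q_add, ← two_mul] at h₁₀
  rw [← P.q_add] at h₁₂ h₂₀
  rw [← h₁₀, ← h₁₂, ← h₂₀, two_mul m, P.q_add m m, ← pow_two]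
  constructor
  · rintro ⟨h₀, h₁, h₂, h₃⟩
    simp only [Params.conjFlow, of_apply, cons_val', cons_val, neg_neg,
      show -j - -(2 * j) = j by ring] at h₀ h₁ h₂ h₃
    exact ⟨h₀, h₁, h₂, h₃⟩
  · rintro ⟨h₀, h₁, h₂, h₃⟩
    constructor <;> simpa only [Params.conjFlow, of_apply, cons_val', cons_val, neg_neg,
      show -j - -(2 * j) = j by ring]

lemma mul_q_le_one_of_le {x : ℝ} (hx : 0 ≤ x) {k l : ℤ} (hkl : k ≤ l) (h : x * P.q l ≤ 1) :
    x * P.q k ≤ 1 :=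
  (mul_le_mul_of_nonneg_left (P.q_mono hkl) hx).trans h

lemma eq_zero_of_forall_abs_mul_q_le {x : ℝ} {c : ℤ} (h : ∀ n : ℕ, |x| * P.q (n + c) ≤ 1) :
    x = 0 := by
  have hle (n : ℕ) : |x| ≤ P.q (-n) * P.q (-c) := by
    rw [← P.q_add, ← neg_add, P.q_neg, ← one_div, le_div_iff₀ (P.q_pos _)]
    exact h n
  have := ge_of_tendsto' (P.tendsto_q_neg_natCast.mul_const (P.q (-c))) hle
  rwa [zero_mul, abs_nonpos_iff] at this

/- Flowing by `diagFlow (-1) (-2)` shears `g` less, so the largest time for which the conjugate of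
`g` is a small shear grows by one or two levels at each step. -/
lemma exists_maximal_shear_levels
    (hg : ¬ (g 1 1 - g 0 0 = 0 ∧ g 1 0 = 0 ∧ g 1 2 = 0 ∧ g 2 0 = 0)) {n₀ : ℕ}
    (h₀ : IsSmallShear (P.conjFlow 0 0 g) (P.q n₀)) :
    ∃ n : ℕ → ℕ, (∀ j : ℕ, IsSmallShear (P.conjFlow (-j) (-(2 * j)) g) (P.q (n j - 2 * j)) ∧
        ¬ IsSmallShear (P.conjFlow (-j) (-(2 * j)) g) (P.q (n j - 2 * j + 1))) ∧
      (∀ j, n j + 1 ≤ n (j + 1) ∧ n (j + 1) ≤ n j + 2) ∧ n₀ ≤ n 0 := by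
  have mono {j m j' m' : ℤ} (hm : m' ≤ m) (hj : m' + j' ≤ m + j)
      (h : IsSmallShear (P.conjFlow (-j) (-(2 * j)) g) (P.q m)) :
      IsSmallShear (P.conjFlow (-j') (-(2 * j')) g) (P.q m') := by
    rw [isSmallShear_conjFlow_iff] at h ⊢
    exact ⟨mul_q_le_one_of_le (abs_nonneg _) hm h.1,
      mul_q_le_one_of_le (abs_nonneg _) (by omega) h.2.1,
      mul_q_le_one_of_le (abs_nonneg _) hj h.2.2.1, mul_q_le_one_of_le (abs_nonneg _) hj h.2.2.2⟩
  obtain ⟨n, hn, hstep, hle⟩ := exists_maximal_levels (n₀ := n₀)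
    (Φ := fun j n => IsSmallShear (P.conjFlow (-j) (-(2 * j)) g) (P.q (n - 2 * j)))
    (fun h => mono (by omega) (by omega)) (mono (by omega) (by omega))
    (mono (by push_cast; omega) (by push_cast; omega)) (fun j => by
      by_contra! h
      simp only [isSmallShear_conjFlow_iff] at h
      refine hg ⟨?_, ?_, ?_, ?_⟩ <;>
        refine eq_zero_of_forall_abs_mul_q_le (P := P) (c := -(2 * j)) fun n => ?_
      · exact mul_q_le_one_of_le (abs_nonneg _) (by omega) (h n).1
      · exact mul_q_le_one_of_le (abs_nonneg _) (by omega) (h n).2.1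
      · exact mul_q_le_one_of_le (abs_nonneg _) (by omega) (h n).2.2.1
      · exact mul_q_le_one_of_le (abs_nonneg _) (by omega) (h n).2.2.2)
    (by simpa using h₀)
  refine ⟨n, fun j => ⟨(hn j).1, fun h => (hn j).2 (mono ?_ ?_ h)⟩, hstep, hle⟩
  all_goals push_cast; omega

lemma isSmallShear_of_abs_sub_one_le {δ w : ℝ} (hδ : ∀ i j, |g i j - (1 : Matrix _ _ ℝ) i j| ≤ δ)
    (hw : 1 ≤ w) (h : 2 * δ * w ^ 2 ≤ 1) : IsSmallShear g w := by
  have off {i j} (hij : i ≠ j) : |g i j| ≤ δ := by simpa [one_apply_ne hij] using hδ i j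
  have diag (i) : |g i i - 1| ≤ δ := by simpa using hδ i i
  have hδ0 : 0 ≤ δ := (abs_nonneg _).trans (hδ 0 0)
  have hdiag : |g 1 1 - g 0 0| ≤ 2 * δ := by
    rw [← sub_sub_sub_cancel_right _ _ 1]
    linarith [abs_sub (g 1 1 - 1) (g 0 0 - 1), diag 0, diag 1]
  have small {x : ℝ} (hx : x ≤ 2 * δ) : x * w ≤ 1 :=
    calc x * w ≤ 2 * δ * w := by gcongr
      _ ≤ 2 * δ * w ^ 2 := by gcongr; exact le_self_pow₀ hw two_ne_zero
      _ ≤ 1 := h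
  refine ⟨small hdiag, ?_, small ?_, small ?_⟩
  · calc |g 1 0| * w ^ 2 ≤ 2 * δ * w ^ 2 := by gcongr; linarith [off (i := 1) (j := 0) (by decide)]
      _ ≤ 1 := h
  · linarith [off (i := 1) (j := 2) (by decide)]
  · linarith [off (i := 2) (j := 0) (by decide)]

lemma abs_conjFlow_sub_one_le {j r m : ℤ} (hj : 0 ≤ j) (hr : 0 ≤ r) (hrm : r ≤ m)
    (hg : ∀ a b, |g a b - (1 : Matrix _ _ ℝ) a b| ≤ P.q (-r))
    (hshear : IsSmallShear (P.conjFlow (-j) (-(2 * j)) g) (P.q m)) (a b : Fin 3) :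
    |P.conjFlow (-j) (-(2 * j)) g a b - (1 : Matrix _ _ ℝ) a b| ≤ P.q (-r) := by
  have off {a b} (hab : a ≠ b) {k : ℤ} (hk : k ≤ 0) : |P.q k * g a b - 0| ≤ P.q (-r) := by
    rw [sub_zero, abs_mul, abs_of_pos (P.q_pos k)]
    have := hg a b
    rw [one_apply_ne hab, sub_zero] at this
    exact (mul_le_of_le_one_left (abs_nonneg _) (P.q_le_one hk)).trans this
  have shear {x : ℝ} (hx : |x| * P.q m ≤ 1) : |x - 0| ≤ P.q (-r) := by
    rw [sub_zero, P.q_neg, ← one_div, le_div_iff₀ (P.q_pos r)]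
    exact mul_q_le_one_of_le (abs_nonneg _) hrm hx
  have h₁₀ := hshear.one_zero
  rw [pow_two, ← P.q_add] at h₁₀
  fin_cases a <;> fin_cases b
  · exact hg 0 0
  · exact off (a := 0) (b := 1) (by decide) (by omega)
  · exact off (a := 0) (b := 2) (by decide) (by omega)
  · exact shear (mul_q_le_one_of_le (abs_nonneg _) (by omega) h₁₀)
  · exact hg 1 1
  · exact shear hshear.one_two
  · exact shear hshear.two_zero
  · exact off (a := 2) (b := 1) (by decide) (by omega)
  · exact hg 2 2

end Levels

namespace Config

variable {P : Params} {𝒦 : Set (Config P)} {J m : ℕ} {ξ υ : Config P} {g : Matrix (Fin 3) (Fin 3) ℝ}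

lemma abs_time_le_of_mem_block {f : Digits} (hf : f ∈ Digits.block m) :
    |υ.time f| ≤ P.q (m + 1) := by
  have := υ.2.abs_time_sub_le m f 0 fun k hk =>
    Digits.mem_block.1 hf k fun h => hk.not_ge (Finset.mem_Icc.1 h).2
  change |υ.time f - υ.time 0| ≤ _ at this
  rwa [υ.time_zero, sub_zero] at this

lemma le_abs_time_add_single_sub {i : ℤ} (hi : υ.flag i = true) (f : Digits) {c c' : ZMod 3}
    (hc : c ≠ c') :
    P.q i ≤ |υ.time (f + Finsupp.single i c) - υ.time (f + Finsupp.single i c')| :=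
  υ.2.le_abs_time_sub i _ _
    (fun k hk => by simp [Finsupp.single_eq_of_ne hk.ne']) (by simpa using hc) hi

lemma exists_displaced_digit {i : ℤ} (hi : i ∈ Finset.Icc (0 : ℤ) m) (hJ : (m : ℤ) ≤ i + J)
    (hflag : υ.flag i = true) (hg : ¬ IsSmallShear g (P.q (m + 1))) {Bad : Digits → Prop}
    [DecidablePred Bad] (hbad : 3 * #{f ∈ Digits.block m | Bad f} < #(Digits.block m)) :
    ∃ f ∈ Digits.block m,
      (∃ a b, P.q (-(J + 1)) ^ 2 / 16 ≤ |displacement (υ.time f) g a b|) ∧ ¬ Bad f := by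
  have hmem (f) (hf : f ∈ Digits.block m) (c : ZMod 3) : f + Finsupp.single i c ∈ Digits.block m :=
    (Digits.add_mem_block (Digits.single_mem_block hi c)).2 hf
  refine exists_mem_and_not_of_forall_exists_add (fun c f hf => hmem f hf c) (by simpa using hbad)
    fun f hf => ?_
  obtain ⟨c, a, b, h⟩ := exists_le_abs_displacement (by simp) (P.q_pos i)
    (fun c c' hc => le_abs_time_add_single_sub hflag f hc)
    (fun c => abs_time_le_of_mem_block (hmem f hf c)) hg
  refine ⟨c, a, b, le_trans ?_ h⟩
  have := (P.q_pos (-(J + 1))).le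
  gcongr
  rw [le_div_iff₀ (P.q_pos _), ← P.q_add]
  exact P.q_mono (by omega)

open Classical in
/-- Most of the digit sequences at every scale translate `ξ` into `𝒦`. -/
def IsTypical (𝒦 : Set (Config P)) (ξ : Config P) : Prop :=
  ∀ m, 10 * #{f ∈ Digits.block m | translate f ξ ∉ 𝒦} ≤ #(Digits.block m)

lemma IsTypical.mem (hξ : IsTypical 𝒦 ξ) : ξ ∈ 𝒦 := by
  classical
  by_contra h
  have hpos : 0 < #{f ∈ Digits.block 0 | translate f ξ ∉ 𝒦} :=
    Finset.card_pos.2 ⟨0, Finset.mem_filter.2 ⟨Digits.zero_mem_block 0, by rwa [translate_zero]⟩⟩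
  have := hξ 0
  rw [Digits.card_block_zero] at this
  omega

/-- One of the scales in `[-J, 0]` is flagged. -/
def HasFlag (J : ℕ) (ξ : Config P) : Prop := ∃ i ∈ Finset.Icc (-J : ℤ) 0, ξ.flag i = true

/-- `ξ` is typical along most of its orbit under `flow (-1) (-2)`, and most blocks of `J + 1`
nonnegative scales contain a flagged one. -/
structure IsGeneric (𝒦 : Set (Config P)) (J : ℕ) (ξ : Config P) : Prop where
  isTypical : IsPrevalent fun j => IsTypical 𝒦 ((flow (-1) (-2))^[j] ξ)
  hasFlag : IsPrevalent fun j => HasFlag J ((flow 0 (-1))^[j] ξ)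

lemma IsTypical.exists_isSheared_displaced {k : ℤ} (hυ : IsTypical 𝒦 υ)
    (hυ' : IsTypical 𝒦 (flow k 0 υ)) (hflag : HasFlag J (flow 0 (-m) υ)) (hJ : J ≤ m)
    (hrel : SameLattice (g * υ.base) (flow k 0 υ).base) (hg : ¬ IsSmallShear g (P.q (m + 1))) :
    ∃ f ∈ Digits.block m, IsSheared 𝒦 f g υ (flow k 0 υ) ∧
      ∃ a b, P.q (-(J + 1)) ^ 2 / 16 ≤ |displacement (υ.time f) g a b| := by
  classical
  obtain ⟨i, hi, hflag⟩ := hflag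
  rw [flag_flow, sub_neg_eq_add] at hflag
  rw [Finset.mem_Icc] at hi
  obtain ⟨f, hf, hdispl, hgood⟩ := exists_displaced_digit (J := J)
    (Bad := fun f => translate f υ ∉ 𝒦 ∨ translate f (flow k 0 υ) ∉ 𝒦)
    (Finset.mem_Icc.2 ⟨by omega, by omega⟩) (by omega) hflag hg (by
      have hpos : 0 < #(Digits.block m) := Finset.card_pos.2 ⟨0, Digits.zero_mem_block m⟩
      have hleft := hυ m
      have hright := hυ' m
      have hunion := Finset.card_union_le {f ∈ Digits.block m | translate f υ ∉ 𝒦}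
        {f ∈ Digits.block m | translate f (flow k 0 υ) ∉ 𝒦}
      rw [← Finset.filter_or] at hunion
      omega)
  push Not at hgood
  refine ⟨f, hf, ⟨hυ.mem, hυ'.mem, hgood.1, hgood.2, ?_, ?_, hrel⟩, hdispl⟩
  · rw [time_flow, P.q_zero, one_mul, neg_zero, Digits.shift_zero]
  · rw [orbitTimes_flow (by decide) (by simp [Params.diagEntry])]

lemma sameLattice_conjFlow {η : Config P} (h : g * ξ.base = η.base) (k l : ℤ) :
    SameLattice (P.conjFlow k l g * (flow k l ξ).base) (flow k l η).base := by
  have hg : |g.det| = 1 := by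
    have := η.base_mem_bases.1.1
    rwa [← h, det_mul, abs_mul, ξ.base_mem_bases.1.1, mul_one] at this
  have hη := η.sameLattice_diagFlow k l
  rw [← h, ← Matrix.mul_assoc, P.diagFlow_mul, Matrix.mul_assoc] at hη
  rw [base_flow, base_flow]
  exact (((ξ.sameLattice_diagFlow k l).mul_left (by rw [P.abs_det_conjFlow, hg])).symm).trans hη

lemma exists_maximal_shear_levels_of_return {k : ℤ} {r : ℕ} (hk : 1 ≤ k)
    (hrel : g * ξ.base = (flow k 0 ξ).base)
    (hg : ∀ a b, |g a b - (1 : Matrix _ _ ℝ) a b| ≤ P.q (-(4 * r)) / 2) :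
    ∃ n : ℕ → ℕ, (∀ j : ℕ, IsSmallShear (P.conjFlow (-j) (-(2 * j)) g) (P.q (n j - 2 * j)) ∧
        ¬ IsSmallShear (P.conjFlow (-j) (-(2 * j)) g) (P.q (n j - 2 * j + 1))) ∧
      (∀ j, n j + 1 ≤ n (j + 1) ∧ n (j + 1) ≤ n j + 2) ∧ 2 * r ≤ n 0 := by
  refine exists_maximal_shear_levels ?_ ?_
  · rintro ⟨h₁₁, h₁₀, h₁₂, h₂₀⟩
    refine not_sameLattice_diagFlow_mul (P := P) hk (x := ξ.base) ?_ (sub_eq_zero.1 h₁₁) h₁₀ h₂₀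
      h₁₂ ?_
    · have h := hg 0 0
      have := P.q_le_one (l := -(4 * r)) (by omega)
      rw [one_apply_eq] at h
      linarith [abs_sub_abs_le_abs_sub (g 0 0) 1, abs_one (α := ℝ)]
    · rw [hrel, base_flow]
      exact ξ.sameLattice_diagFlow k 0
  · have hconj : P.conjFlow 0 0 g = g := by
      ext a b
      fin_cases a <;> fin_cases b <;> simp [Params.conjFlow, P.q_zero]
    rw [hconj]
    refine isSmallShear_of_abs_sub_one_le hg (P.one_le_q (by omega)) (le_of_eq ?_)
    rw [pow_two, ← P.q_add, mul_div_cancel₀ _ two_ne_zero, ← P.q_add, ← P.q_zero]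
    push_cast
    ring_nf

/- The return of `ξ` close to itself is transported by `flow (-j) (-2 * j)`, with `j` chosen so that
typicality and flagged scales are available at the level at which `g` stops being a small shear. -/
theorem IsGeneric.exists_isSheared {k : ℤ} {r : ℕ} (hk : 1 ≤ k) (hr : 1 ≤ r) (hJ : J ≤ r)
    (hξ : IsGeneric 𝒦 J ξ) (hξ' : IsGeneric 𝒦 J (flow k 0 ξ))
    (hrel : g * ξ.base = (flow k 0 ξ).base)
    (hg : ∀ a b, |g a b - (1 : Matrix _ _ ℝ) a b| ≤ P.q (-(4 * r)) / 2) :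
    ∃ (υ υ' : Config P) (m : ℕ) (f : Digits) (g' : Matrix (Fin 3) (Fin 3) ℝ),
      r ≤ m ∧ f ∈ Digits.block m ∧ IsSheared 𝒦 f g' υ υ' ∧ IsSmallShear g' (P.q m) ∧
      (∀ a b, |g' a b - (1 : Matrix _ _ ℝ) a b| ≤ P.q (-r)) ∧
      ∃ a b, P.q (-(J + 1)) ^ 2 / 16 ≤ |displacement (υ.time f) g' a b| := by
  obtain ⟨n, hn, hstep, hrn⟩ := exists_maximal_shear_levels_of_return hk hrel hg
  obtain ⟨j, hj, hjn, htyp, htyp', hflag⟩ :=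
    exists_of_isPrevalent hξ.isTypical hξ'.isTypical hξ.hasFlag hstep (by omega)
  obtain ⟨m, hm⟩ : ∃ m : ℕ, n j = m + 2 * j := ⟨n j - 2 * j, by omega⟩
  have hiter (ζ : Config P) : (flow (-1) (-2))^[j] ζ = flow (-j) (-(2 * j)) ζ := by
    rw [iterate_flow]
    ring_nf
  have hcomm : flow (-j) (-(2 * j)) (flow k 0 ξ) = flow k 0 (flow (-j) (-(2 * j)) ξ) := by
    rw [flow_flow, flow_flow, add_comm, add_comm k, add_comm (0 : ℤ)]
  have hflag' : HasFlag J (flow 0 (-m) (flow (-j) (-(2 * j)) ξ)) := by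
    obtain ⟨i, hi, hi'⟩ := hflag
    refine ⟨i, hi, ?_⟩
    rw [iterate_flow, flag_flow] at hi'
    rw [flag_flow, flag_flow, ← hi']
    congr 1
    omega
  have hlattice := sameLattice_conjFlow hrel (-j) (-(2 * j))
  have hshear := hn j
  rw [hiter] at htyp htyp'
  rw [hcomm] at htyp' hlattice
  rw [show (n j : ℤ) - 2 * j = m by omega] at hshear
  obtain ⟨f, hf, hsheared, hdispl⟩ := htyp.exists_isSheared_displaced htyp' hflag' (by omega)
    hlattice hshear.2
  have hnear (a b) : |g a b - (1 : Matrix _ _ ℝ) a b| ≤ P.q (-r) :=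
    (hg a b).trans <| (half_le_self (P.q_pos _).le).trans <| P.q_mono (by omega)
  exact ⟨_, _, m, f, _, by omega, hf, hsheared, hshear.1,
    abs_conjFlow_sub_one_le (by omega) (by omega) (by omega) hnear hshear.1, hdispl⟩

end Config

/-! ### Vanishing of recurrent invariant measures -/

section Prevalence

variable {X ι : Type*}

open Classical in
lemma sum_indicator_const (s : Finset ι) (B : Set X) (x : ι → X) (k : ℕ) :
    ∑ i ∈ s, B.indicator (fun _ => (k : ℝ≥0∞)) (x i) = (k * #{i ∈ s | x i ∈ B} : ℕ) := by
  simp only [Set.indicator_apply, ← Finset.sum_filter, Finset.sum_const, nsmul_eq_mul]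
  push_cast
  ring

lemma setOf_not_isPrevalent (T : X → X) (B : Set X) :
    {x | ¬ IsPrevalent fun j => T^[j] x ∈ B} =
      {x | ∃ l : ℕ, (l : ℝ≥0∞) < birkhoffSum T (Bᶜ.indicator fun _ => ((9 : ℕ) : ℝ≥0∞)) l x} := by
  classical
  simp only [IsPrevalent, birkhoffSum, not_forall, not_le, sum_indicator_const, Nat.cast_lt,
    Set.mem_compl_iff]

variable [MeasurableSpace X] {μ : Measure X} {T : X → X} {B : Set X}

lemma measurableSet_isPrevalent (hT : Measurable T) (hB : MeasurableSet B) :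
    MeasurableSet {x | IsPrevalent fun j => T^[j] x ∈ B} := by
  rw [← MeasurableSet.compl_iff, Set.compl_ofPred, setOf_not_isPrevalent, Set.ofPred_exists]
  exact MeasurableSet.iUnion fun l => measurableSet_lt measurable_const
    (measurable_birkhoffSum hT (measurable_const.indicator hB.compl) l)

lemma measure_not_isPrevalent_le (hT : MeasurePreserving T μ μ) (hB : MeasurableSet B) :
    μ {x | ¬ IsPrevalent fun j => T^[j] x ∈ B} ≤ 9 * μ Bᶜ := by
  rw [setOf_not_isPrevalent]
  refine (measure_exists_lt_birkhoffSum_le_lintegral hT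
    (measurable_const.indicator hB.compl)).trans_eq ?_
  rw [lintegral_indicator_const hB.compl, Nat.cast_ofNat]

end Prevalence

section Displacement

variable {α : Type*} {t w : α → ℝ} {g : α → Matrix (Fin 3) (Fin 3) ℝ} {c : ℝ}

lemma tendsto_mul_apply_one_zero {l : Filter α} (ht : ∀ n, |t n| ≤ c * w n)
    (hw₀ : ∀ n, 0 < w n) (hw : Tendsto (fun n => (w n)⁻¹) l (𝓝 0))
    (hg : ∀ n, IsSmallShear (g n) (w n)) : Tendsto (fun n => t n * g n 1 0) l (𝓝 0) := by
  refine squeeze_zero_norm (fun n => ?_) (by simpa only [mul_zero] using hw.const_mul c)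
  have hc : 0 ≤ c := nonneg_of_mul_nonneg_left ((abs_nonneg _).trans (ht n)) (hw₀ n)
  calc
    ‖t n * g n 1 0‖ = |t n| * |g n 1 0| := abs_mul _ _
    _ ≤ c * w n * |g n 1 0| := mul_le_mul_of_nonneg_right (ht n) (abs_nonneg _)
    _ = c * (|g n 1 0| * w n ^ 2) * (w n)⁻¹ := by field_simp [(hw₀ n).ne']
    _ ≤ c * 1 * (w n)⁻¹ := by
      have := (hw₀ n).le
      gcongr
      exact (hg n).one_zero
    _ = c * (w n)⁻¹ := by rw [mul_one]

lemma exists_tendsto_of_abs_le (u : Ultrafilter α) {x : α → ℝ} {C : ℝ} (hx : ∀ n, |x n| ≤ C) :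
    ∃ a, Tendsto x u (𝓝 a) :=
  (exists_mem_tendsto_ultrafilter isCompact_Icc u
    (Eventually.of_forall fun n => abs_le.1 (hx n))).imp fun _ h => h.2

lemma exists_tendsto_displacement (u : Ultrafilter α) (ht : ∀ n, |t n| ≤ c * w n)
    (hw₀ : ∀ n, 0 < w n) (hw : Tendsto (fun n => (w n)⁻¹) u (𝓝 0))
    (hg : ∀ n, IsSmallShear (g n) (w n)) :
    ∃ s b d, Tendsto (fun n => displacement (t n) (g n)) u (𝓝 (unipotent s b d - 1)) := by
  have bounded {x : α → ℝ} (hx : ∀ n, |x n| * w n ≤ 1) (n : α) : |t n * x n| ≤ c := by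
    have hc : 0 ≤ c := nonneg_of_mul_nonneg_left ((abs_nonneg _).trans (ht n)) (hw₀ n)
    calc
      |t n * x n| = |t n| * |x n| := abs_mul _ _
      _ ≤ c * w n * |x n| := mul_le_mul_of_nonneg_right (ht n) (abs_nonneg _)
      _ = c * (|x n| * w n) := by ring
      _ ≤ c := mul_le_of_le_one_right hc (hx n)
  have lim₁₀ := tendsto_mul_apply_one_zero ht hw₀ hw hg
  have hquad (n : α) : |t n * (t n * g n 1 0)| ≤ c * c := by
    have hcw : 0 ≤ c * w n := (abs_nonneg _).trans (ht n)
    calc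
      |t n * (t n * g n 1 0)| = |t n| * |t n| * |g n 1 0| := by rw [abs_mul, abs_mul, mul_assoc]
      _ ≤ c * w n * (c * w n) * |g n 1 0| := by gcongr <;> exact ht n
      _ = c * c * (|g n 1 0| * w n ^ 2) := by ring
      _ ≤ c * c := mul_le_of_le_one_right (mul_self_nonneg c) (hg n).one_zero
  obtain ⟨s₁, hs₁⟩ := exists_tendsto_of_abs_le u (bounded fun n => (hg n).diag)
  obtain ⟨s₂, hs₂⟩ := exists_tendsto_of_abs_le u hquad
  obtain ⟨b, hb⟩ := exists_tendsto_of_abs_le u (bounded fun n => (hg n).one_two)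
  obtain ⟨d, hd⟩ := exists_tendsto_of_abs_le u (bounded fun n => (hg n).two_zero)
  refine ⟨s₁ - s₂, b, -d, tendsto_pi_nhds.2 fun i => tendsto_pi_nhds.2 fun j => ?_⟩
  simp only [displacement_eq]
  fin_cases i <;> fin_cases j
  · simpa [unipotent] using lim₁₀
  · simpa [unipotent, mul_sub] using hs₁.sub hs₂
  · simpa [unipotent] using hb
  · simp [unipotent]
  · simpa [unipotent] using lim₁₀.neg
  · simp [unipotent]
  · simp [unipotent]
  · simpa [unipotent] using hd.neg
  · simp [unipotent]

end Displacement

namespace Config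

variable {P : Params} {μ : Measure (Config P)} {𝒦 : Set (Config P)}

lemma setOf_not_isTypical (𝒦 : Set (Config P)) :
    {ξ | ¬ IsTypical 𝒦 ξ} = {ξ | ∃ m, (#(Digits.block m) : ℝ≥0∞) <
      ∑ f ∈ Digits.block m, 𝒦ᶜ.indicator (fun _ => ((10 : ℕ) : ℝ≥0∞)) (translate f ξ)} := by
  classical
  simp only [IsTypical, not_forall, not_le, sum_indicator_const, Nat.cast_lt, Set.mem_compl_iff]

lemma measurableSet_isTypical (h𝒦 : MeasurableSet 𝒦) : MeasurableSet {ξ | IsTypical 𝒦 ξ} := by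
  rw [← MeasurableSet.compl_iff, Set.compl_ofPred, setOf_not_isTypical, Set.ofPred_exists]
  exact MeasurableSet.iUnion fun m => measurableSet_lt measurable_const
    (Finset.measurable_fun_sum _ fun f _ =>
      (measurable_const.indicator h𝒦.compl).comp (continuous_translate f).measurable)

lemma IsInvariant.measure_not_isTypical_le (hμ : IsInvariant μ) (h𝒦 : MeasurableSet 𝒦) :
    μ {ξ | ¬ IsTypical 𝒦 ξ} ≤ 10 * μ 𝒦ᶜ := by
  rw [setOf_not_isTypical]
  refine (measure_exists_card_lt_sum_le_lintegral hμ.translate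
    (fun e f ξ => translate_translate e f ξ) Digits.block_mono
    (fun m => ⟨0, Digits.zero_mem_block m⟩) (fun m e he f => Digits.add_mem_block he)
    (measurable_const.indicator h𝒦.compl)).trans_eq ?_
  rw [lintegral_indicator_const h𝒦.compl, Nat.cast_ofNat]

lemma measurableSet_hasFlag (J : ℕ) : MeasurableSet {ξ : Config P | HasFlag J ξ} := by
  simp only [HasFlag, Set.ofPred_exists, Set.ofPred_and]
  exact MeasurableSet.iUnion fun i => (MeasurableSet.const _).inter
    ((isClosed_singleton (x := true)).preimage (continuous_flag i)).measurableSet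

lemma exists_measure_not_hasFlag_lt [IsFiniteMeasure μ]
    (hflag : μ {ξ | ∀ i ≤ 0, ξ.flag i = false} = 0) {η : ℝ≥0∞} (hη : η ≠ 0) :
    ∃ J, μ {ξ | HasFlag J ξ}ᶜ < η := by
  have hmono : Antitone fun J : ℕ => {ξ : Config P | HasFlag J ξ}ᶜ := by
    refine fun J J' hJ => Set.compl_subset_compl.2 fun ξ ⟨i, hi, h⟩ => ⟨i, ?_, h⟩
    exact Finset.Icc_subset_Icc_left (by omega) hi
  have hlim := tendsto_measure_iInter_atTop (μ := μ)
    (fun J => (measurableSet_hasFlag J).compl.nullMeasurableSet) hmono ⟨0, measure_ne_top _ _⟩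
  have hinter : μ (⋂ J : ℕ, {ξ | HasFlag J ξ}ᶜ) = 0 := by
    refine measure_mono_null (t := {ξ | ∀ i ≤ 0, ξ.flag i = false}) (fun ξ hξ i hi => ?_) hflag
    by_contra hne
    refine Set.mem_iInter.1 hξ i.natAbs ⟨i, Finset.mem_Icc.2 (by omega), by simpa using hne⟩
  rw [hinter] at hlim
  exact (hlim.eventually_lt_const hη.bot_lt).exists

lemma IsInvariant.exists_isGeneric [IsFiniteMeasure μ] (hμ : IsInvariant μ) (hμ₀ : μ ≠ 0)
    (hflag : μ {ξ | ∀ i ≤ 0, ξ.flag i = false} = 0) :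
    ∃ (K 𝒦 : Set (Config P)) (J : ℕ), IsRecurrencePair K 𝒦 ∧
      MeasurableSet {ξ | IsGeneric 𝒦 J ξ} ∧ μ {ξ | IsGeneric 𝒦 J ξ} ≠ 0 := by
  have huniv : μ Set.univ ≠ 0 := by rwa [Ne, Measure.measure_univ_eq_zero]
  set η := μ Set.univ / 2 / 99 with hη
  have hη₀ : η ≠ 0 := by simp [hη, huniv]
  obtain ⟨K, 𝒦, hK, hμ𝒦⟩ := hμ.exists_isRecurrencePair hη₀
  obtain ⟨J, hμJ⟩ := exists_measure_not_hasFlag_lt hflag hη₀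
  have h𝒦 : MeasurableSet 𝒦 := hK.isClosed_right.measurableSet
  have htyp := measure_not_isPrevalent_le (hμ.flow (-1) (-2)) (measurableSet_isTypical h𝒦)
  have hfl := measure_not_isPrevalent_le (hμ.flow 0 (-1)) (measurableSet_hasFlag J)
  have hG : {ξ | IsGeneric 𝒦 J ξ} =
      {ξ | IsPrevalent fun j => (Config.flow (-1) (-2))^[j] ξ ∈ {ζ | IsTypical 𝒦 ζ}} ∩
        {ξ | IsPrevalent fun j => (Config.flow 0 (-1))^[j] ξ ∈ {ζ | HasFlag J ζ}} :=
    Set.ext fun ξ => ⟨fun h => ⟨h.1, h.2⟩, fun h => ⟨h.1, h.2⟩⟩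
  have hGmeas : MeasurableSet {ξ | IsGeneric 𝒦 J ξ} := by
    rw [hG]
    exact (measurableSet_isPrevalent (hμ.flow _ _).measurable (measurableSet_isTypical h𝒦)).inter
      (measurableSet_isPrevalent (hμ.flow _ _).measurable (measurableSet_hasFlag J))
  refine ⟨K, 𝒦, J, hK, hGmeas, fun hG₀ => ?_⟩
  have hlt : μ {ξ | IsGeneric 𝒦 J ξ}ᶜ < μ Set.univ := by
    calc
      μ {ξ | IsGeneric 𝒦 J ξ}ᶜ ≤ 9 * μ {ξ | ¬ IsTypical 𝒦 ξ} + 9 * μ {ξ | HasFlag J ξ}ᶜ := by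
        rw [hG, Set.compl_inter]
        exact (measure_union_le _ _).trans (add_le_add htyp hfl)
      _ ≤ 9 * (10 * η) + 9 * η := by
        gcongr
        exact (hμ.measure_not_isTypical_le h𝒦).trans (by gcongr)
      _ = 99 * η := by ring
      _ = μ Set.univ / 2 := ENNReal.mul_div_cancel (by simp) (by simp)
      _ < μ Set.univ := ENNReal.half_lt_self huniv (measure_ne_top _ _)
  rw [measure_compl hGmeas (measure_ne_top _ _), hG₀, tsub_zero] at hlt
  exact hlt.false

/-- The matrix carrying `ξ.base` to `ζ.base`. -/
def relativePosition (ξ ζ : Config P) : Matrix (Fin 3) (Fin 3) ℝ :=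
  ξ.base.det • (ζ.base * ξ.base.adjugate)

lemma det_base_mul_self (ξ : Config P) : ξ.base.det * ξ.base.det = 1 := by
  rw [← abs_mul_abs_self, ξ.base_mem_bases.1.1, one_mul]

lemma relativePosition_mul_base (ξ ζ : Config P) : relativePosition ξ ζ * ξ.base = ζ.base := by
  rw [relativePosition, smul_mul, Matrix.mul_assoc, adjugate_mul, Matrix.mul_smul, smul_smul,
    det_base_mul_self, one_smul, Matrix.mul_one]

lemma relativePosition_self (ξ : Config P) : relativePosition ξ ξ = 1 := by
  rw [relativePosition, mul_adjugate, smul_smul, det_base_mul_self, one_smul]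

lemma continuous_relativePosition :
    Continuous fun p : Config P × Config P => relativePosition p.1 p.2 := by
  have h₁ : Continuous fun p : Config P × Config P => p.1.base :=
    continuous_base.comp continuous_fst
  have h₂ : Continuous fun p : Config P × Config P => p.2.base :=
    continuous_base.comp continuous_snd
  exact h₁.matrix_det.smul (h₂.matrix_mul h₁.matrix_adjugate)

lemma relativePosition_mem_nhds (ξ : Config P) {δ : ℝ} (hδ : 0 < δ) :
    {p : Config P × Config P | ∀ a b, |relativePosition p.1 p.2 a b - (1 : Matrix _ _ ℝ) a b| < δ}
      ∈ 𝓝 (ξ, ξ) := by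
  refine IsOpen.mem_nhds ?_ fun a b => by simpa [relativePosition_self] using hδ
  simp only [Set.ofPred_forall]
  exact isOpen_iInter_of_finite fun a => isOpen_iInter_of_finite fun b => isOpen_lt
    ((continuous_relativePosition.matrix_elem a b).sub continuous_const).abs continuous_const

lemma IsInvariant.exists_return [IsFiniteMeasure μ] (hμ : IsInvariant μ) {G : Set (Config P)}
    (hG : MeasurableSet G) (hμG : μ G ≠ 0) {δ : ℝ} (hδ : 0 < δ) :
    ∃ ξ ∈ G, ∃ k : ℤ, 1 ≤ k ∧ Config.flow k 0 ξ ∈ G ∧ ∃ g : Matrix (Fin 3) (Fin 3) ℝ,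
      g * ξ.base = (Config.flow k 0 ξ).base ∧
      ∀ a b, |g a b - (1 : Matrix _ _ ℝ) a b| ≤ δ := by
  obtain ⟨ζ, -, hζ⟩ := exists_mem_forall_mem_nhdsWithin_pos_measure hμG
  obtain ⟨V, V', hV, hζV, hV', hζV', hVV'⟩ :=
    mem_nhds_prod_iff'.1 (relativePosition_mem_nhds ζ hδ)
  have hpos := hζ (G ∩ (V ∩ V'))
    (inter_mem_nhdsWithin G (inter_mem (hV.mem_nhds hζV) (hV'.mem_nhds hζV')))
  obtain ⟨k, hk, hreturn⟩ := (hμ.flow 1 0).conservative.exists_gt_measure_inter_ne_zero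
    (hG.inter (hV.inter hV').measurableSet).nullMeasurableSet hpos.ne' 0
  obtain ⟨ξ, hξ, hξk⟩ := nonempty_of_measure_ne_zero hreturn
  rw [Set.mem_preimage, iterate_flow, mul_one, mul_zero] at hξk
  exact ⟨ξ, hξ.1, k, by omega, hξk.1, _, relativePosition_mul_base _ _,
    fun a b => (hVV' (Set.mk_mem_prod hξ.2.1 hξk.2.2) a b).le⟩

lemma IsInvariant.exists_seq_isSheared [IsFiniteMeasure μ] (hμ : IsInvariant μ) (hμ₀ : μ ≠ 0)
    (hflag : μ {ξ | ∀ i ≤ 0, ξ.flag i = false} = 0) :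
    ∃ K 𝒦 : Set (Config P), IsRecurrencePair K 𝒦 ∧ ∃ κ > 0, ∀ n : ℕ,
      ∃ (υ υ' : Config P) (m : ℕ) (f : Digits) (g : Matrix (Fin 3) (Fin 3) ℝ),
        n ≤ m ∧ f ∈ Digits.block m ∧ IsSheared 𝒦 f g υ υ' ∧ IsSmallShear g (P.q m) ∧
        (∀ a b, |g a b - (1 : Matrix _ _ ℝ) a b| ≤ P.q (-n)) ∧
        ∃ a b, κ ≤ |displacement (υ.time f) g a b| := by
  obtain ⟨K, 𝒦, J, hK, hG, hμG⟩ := hμ.exists_isGeneric hμ₀ hflag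
  refine ⟨K, 𝒦, hK, P.q (-(J + 1)) ^ 2 / 16, by have := P.q_pos (-(J + 1)); positivity, fun n => ?_⟩
  obtain ⟨ξ, hξ, k, hk, hξk, g, hrel, hg⟩ := hμ.exists_return hG hμG
    (half_pos (P.q_pos (-(4 * (J + n + 1 : ℕ)))))
  obtain ⟨υ, υ', m, f, g', hm, hf, hshear, hsmall, hg', hdispl⟩ :=
    IsGeneric.exists_isSheared hk (by omega) (by omega) hξ hξk hrel hg
  exact ⟨υ, υ', m, f, g', by omega, hf, hshear, hsmall,
    fun a b => (hg' a b).trans (P.q_mono (by omega)), hdispl⟩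

lemma tendsto_of_forall_abs_sub_le_q {l : Filter ℕ} (hl : l ≤ atTop)
    {g : ℕ → Matrix (Fin 3) (Fin 3) ℝ} {h : Matrix (Fin 3) (Fin 3) ℝ}
    (hg : ∀ n a b, |g n a b - h a b| ≤ P.q (-n)) : Tendsto g l (𝓝 h) := by
  refine tendsto_pi_nhds.2 fun a => tendsto_pi_nhds.2 fun b => ?_
  refine tendsto_iff_norm_sub_tendsto_zero.2 ?_
  exact squeeze_zero (fun _ => norm_nonneg _) (fun n => hg n a b)
    (P.tendsto_q_neg_natCast.mono_left hl)

theorem IsInvariant.eq_zero [IsFiniteMeasure μ] (hμ : IsInvariant μ)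
    (hflag : μ {ξ | ∀ i ≤ 0, ξ.flag i = false} = 0) : μ = 0 := by
  by_contra hμ₀
  obtain ⟨K, 𝒦, hK, κ, hκ, h⟩ := hμ.exists_seq_isSheared hμ₀ hflag
  choose υ υ' m f g hm hf hshear hsmall hg hdispl using h
  set u : Ultrafilter ℕ := Ultrafilter.of atTop
  have hu : (u : Filter ℕ) ≤ atTop := Ultrafilter.of_le atTop
  have hlim_g : Tendsto g u (𝓝 1) := tendsto_of_forall_abs_sub_le_q hu hg
  have hw : Tendsto (fun n => (P.q (m n))⁻¹) u (𝓝 0) := by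
    refine squeeze_zero (fun n => inv_nonneg.2 (P.q_pos _).le) (fun n => ?_)
      (P.tendsto_q_neg_natCast.mono_left hu)
    rw [← P.q_neg]
    exact P.q_mono (by have := hm n; omega)
  have htime (n : ℕ) : |(υ n).time (f n)| ≤ P.q 1 * P.q (m n) := by
    rw [← P.q_add, add_comm]
    exact abs_time_le_of_mem_block (hf n)
  obtain ⟨s, b, c, hlim⟩ := exists_tendsto_displacement u htime (fun n => P.q_pos _) hw hsmall
  have hconj : Tendsto (fun n => transvection 0 1 ((υ n).time (f n)) * g n *
      transvection 0 1 (-(υ n).time (f n))) u (𝓝 (unipotent s b c)) := by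
    simpa [displacement] using hlim.add hlim_g
  obtain ⟨rfl, rfl, rfl⟩ := unipotent_eq_zero_of_tendsto_isSheared u hK hshear hlim_g hconj
  have hlim_zero (i j : Fin 3) :
      ∀ᶠ n in (u : Filter ℕ), |displacement ((υ n).time (f n)) (g n) i j| < κ := by
    refine (tendsto_pi_nhds.1 (tendsto_pi_nhds.1 hlim i) j).abs.eventually_lt_const ?_
    fin_cases i <;> fin_cases j <;> simpa [unipotent] using hκ
  obtain ⟨n, hn⟩ := (eventually_all.2 fun i => eventually_all.2 (hlim_zero i)).exists
  obtain ⟨i, j, hij⟩ := hdispl n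
  exact hij.not_gt (hn i j)

end Config

/-! ### Følner averages of orbits -/

section Averages

open BoundedContinuousFunction

variable {α ι X : Type*}

lemma abs_sum_comp_sub_sum_le [DecidableEq ι] {σ : ι → ι} (hσ : Function.Injective σ) {h : ι → ℝ}
    {B : ℝ} (hB : ∀ i, |h i| ≤ B) (s : Finset ι) :
    |∑ i ∈ s, h (σ i) - ∑ i ∈ s, h i| ≤ 2 * #{i ∈ s | σ i ∉ s} * B := by
  have sum_le (t : Finset ι) : |∑ i ∈ t, h i| ≤ #t * B := by
    rw [← nsmul_eq_mul]
    exact (Finset.abs_sum_le_sum_abs _ _).trans (Finset.sum_le_card_nsmul _ _ _ fun i _ => hB i)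
  have hcard : #(s.image σ \ s) ≤ #{i ∈ s | σ i ∉ s} := by
    refine (Finset.card_le_card fun i hi => ?_).trans (Finset.card_image_le (f := σ))
    simp only [Finset.mem_sdiff, Finset.mem_image] at hi
    obtain ⟨⟨j, hj, rfl⟩, hi⟩ := hi
    exact Finset.mem_image_of_mem σ (Finset.mem_filter.2 ⟨hj, hi⟩)
  have hcard' : #(s \ s.image σ) = #(s.image σ \ s) :=
    Finset.card_sdiff_comm (Finset.card_image_of_injective s hσ).symm
  have hB₀ (i : ι) : 0 ≤ B := (abs_nonneg _).trans (hB i)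
  rw [← Finset.sum_image hσ.injOn, ← Finset.sum_sdiff_sub_sum_sdiff]
  calc
    |∑ i ∈ s.image σ \ s, h i - ∑ i ∈ s \ s.image σ, h i|
        ≤ #(s.image σ \ s) * B + #(s \ s.image σ) * B :=
      (abs_sub _ _).trans (add_le_add (sum_le _) (sum_le _))
    _ = 2 * #(s.image σ \ s) * B := by rw [hcard']; ring
    _ ≤ 2 * #{i ∈ s | σ i ∉ s} * B := by
      rcases s.eq_empty_or_nonempty with rfl | ⟨i, -⟩
      · simp
      · have := hB₀ i
        gcongr

variable [TopologicalSpace X] [MeasurableSpace X] [BorelSpace X]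

lemma exists_integral_eq_average {s : Finset ι} (hs : s.Nonempty) (x : ι → X) :
    ∃ μ : ProbabilityMeasure X, ∀ h : X →ᵇ ℝ, ∫ y, h y ∂(μ : Measure X) =
      (#s : ℝ)⁻¹ * ∑ i ∈ s, h (x i) := by
  set μ : Measure X := (#s : ENNReal)⁻¹ • ∑ i ∈ s, Measure.dirac (x i) with hμ
  have hprob : IsProbabilityMeasure μ := ⟨by
    simp [hμ, ENNReal.inv_mul_cancel, hs.ne_empty]⟩
  refine ⟨⟨μ, hprob⟩, fun h => ?_⟩
  change ∫ y, h y ∂μ = _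
  rw [hμ, integral_smul_measure, integral_finsetSum_measure fun i _ => h.integrable _]
  simp [integral_dirac' _ _ h.continuous.stronglyMeasurable]

lemma exists_tendsto_average [CompactSpace X] [T2Space X] [SecondCountableTopology X]
    (u : Ultrafilter α) {s : α → Finset ι} (hs : ∀ n, (s n).Nonempty) (x : α → ι → X) :
    ∃ μ : ProbabilityMeasure X, ∀ h : X →ᵇ ℝ,
      Tendsto (fun n => (#(s n) : ℝ)⁻¹ * ∑ i ∈ s n, h (x n i)) u
        (𝓝 (∫ y, h y ∂(μ : Measure X))) := by
  choose μ hμ using fun n => exists_integral_eq_average (hs n) (x n)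
  obtain ⟨ν, -, hν⟩ := exists_mem_tendsto_ultrafilter isCompact_univ u
    (Eventually.of_forall fun n => Set.mem_univ (μ n))
  refine ⟨ν, fun h => ?_⟩
  simpa only [hμ] using ProbabilityMeasure.tendsto_iff_forall_integral_tendsto.1 hν h

variable [HasOuterApproxClosed X]

lemma measurePreserving_of_tendsto_average [DecidableEq ι] {l : Filter α} [l.NeBot]
    {s : α → Finset ι} {x : α → ι → X} {μ : Measure X} [IsFiniteMeasure μ]
    (hμ : ∀ h : X →ᵇ ℝ, Tendsto (fun n => (#(s n) : ℝ)⁻¹ * ∑ i ∈ s n, h (x n i)) l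
      (𝓝 (∫ y, h y ∂μ)))
    {T : X → X} (hT : Continuous T) {σ : ι → ι} (hσ : Function.Injective σ)
    (hTσ : ∀ n i, T (x n i) = x n (σ i))
    (hs : Tendsto (fun n => (#{i ∈ s n | σ i ∉ s n} : ℝ) / #(s n)) l (𝓝 0)) :
    MeasurePreserving T μ μ := by
  refine ⟨hT.measurable, ext_of_forall_integral_eq_of_IsFiniteMeasure fun h => ?_⟩
  rw [integral_map hT.aemeasurable h.continuous.aestronglyMeasurable]
  have hlim := (hμ (h.compContinuous ⟨T, hT⟩)).sub (hμ h)
  refine sub_eq_zero.1 (tendsto_nhds_unique hlim (squeeze_zero_norm (fun n => ?_)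
    (by simpa only [mul_zero] using hs.const_mul (2 * ‖h‖))))
  rw [← mul_sub, norm_mul, norm_inv, Real.norm_natCast]
  calc
    _ ≤ (#(s n) : ℝ)⁻¹ * (2 * #{i ∈ s n | σ i ∉ s n} * ‖h‖) := by
      gcongr
      simpa only [compContinuous_apply, ContinuousMap.coe_mk, hTσ, Real.norm_eq_abs] using
        abs_sum_comp_sub_sum_le hσ (fun i => h.norm_coe_le_norm (x n i)) (s n)
    _ = 2 * ‖h‖ * (#{i ∈ s n | σ i ∉ s n} / #(s n)) := by ring

end Averages

lemma card_filter_add_notMem_Icc_le (n : ℕ) (k : ℤ) :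
    #{i ∈ Finset.Icc (0 : ℤ) n | i + k ∉ Finset.Icc (0 : ℤ) n} ≤ k.natAbs := by
  have hsub : {i ∈ Finset.Icc (0 : ℤ) n | i + k ∉ Finset.Icc (0 : ℤ) n} ⊆
      Finset.Ico 0 (-k) ∪ Finset.Ioc (n - k) n := fun i hi => by
    simp only [Finset.mem_filter, Finset.mem_union, Finset.mem_Icc, Finset.mem_Ico,
      Finset.mem_Ioc] at hi ⊢
    omega
  refine (Finset.card_le_card hsub).trans ((Finset.card_union_le _ _).trans ?_)
  rw [Int.card_Ico, Int.card_Ioc]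
  omega

lemma Digits.exists_card_shift_notMem_block_le (e : Digits) : ∃ C : ℕ, ∀ n : ℕ,
    #{j ∈ Finset.Icc (0 : ℤ) n | shift j e ∉ block n} ≤ C := by
  obtain ⟨c, hc⟩ : ∃ c : ℕ, ∀ i, e i ≠ 0 → i.natAbs ≤ c :=
    ⟨e.support.sup Int.natAbs, fun i hi => Finset.le_sup (Finsupp.mem_support_iff.2 hi)⟩
  refine ⟨c + c, fun n => ?_⟩
  have hsub : {j ∈ Finset.Icc (0 : ℤ) n | shift j e ∉ block n} ⊆
      Finset.Ico (0 : ℤ) c ∪ Finset.Ioc (n - c : ℤ) n := fun j hj => by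
    simp only [Finset.mem_filter, mem_block, not_forall, shift_apply] at hj
    obtain ⟨hj, i, hi, hei⟩ := hj
    have := hc _ hei
    simp only [Finset.mem_union, Finset.mem_Icc, Finset.mem_Ico, Finset.mem_Ioc] at hi hj ⊢
    omega
  refine (Finset.card_le_card hsub).trans ((Finset.card_union_le _ _).trans ?_)
  rw [Int.card_Ico, Int.card_Ioc]
  omega

namespace Config

variable {P : Params}

/-- The index set of the `n`-th Følner average over the flow and the translations. -/
noncomputable def orbitBox (n : ℕ) : Finset (ℤ × ℤ × Digits) :=
  Finset.Icc 0 (n : ℤ) ×ˢ Finset.Icc 0 (n : ℤ) ×ˢ Digits.block n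

/-- The point of the orbit of `ξ` with index `p`. The second flow parameter is negated because the
scales of interest are those at nonnegative levels. -/
noncomputable def orbitPoint (ξ : Config P) (p : ℤ × ℤ × Digits) : Config P :=
  flow p.1 (-p.2.1) (translate p.2.2 ξ)

lemma orbitBox_nonempty (n : ℕ) : (orbitBox n).Nonempty :=
  ⟨(0, 0, 0), by simp [orbitBox, Digits.zero_mem_block]⟩

lemma card_orbitBox (n : ℕ) : #(orbitBox n) = (n + 1) * ((n + 1) * #(Digits.block n)) := by
  simp [orbitBox]

lemma flow_orbitPoint (k l : ℤ) (ξ : Config P) (p : ℤ × ℤ × Digits) :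
    flow k l (orbitPoint ξ p) = orbitPoint ξ (p + (k, -l, 0)) := by
  simp only [orbitPoint, flow_flow, Prod.fst_add, Prod.snd_add, add_zero]
  ring_nf

lemma translate_orbitPoint (e : Digits) (ξ : Config P) (p : ℤ × ℤ × Digits) :
    translate e (orbitPoint ξ p) =
      orbitPoint ξ (p.1, p.2.1, p.2.2 + Digits.shift p.2.1 e) := by
  simp only [orbitPoint, translate_flow, translate_translate, neg_neg, add_comm]

lemma tendsto_div_card_orbitBox {a : ℕ → ℕ} {C : ℕ}
    (ha : ∀ n, a n ≤ C * ((n + 1) * #(Digits.block n))) :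
    Tendsto (fun n => (a n : ℝ) / #(orbitBox n)) atTop (𝓝 0) := by
  refine squeeze_zero (fun n => by positivity) (fun n => ?_)
    (by simpa only [mul_zero] using tendsto_one_div_add_atTop_nhds_zero_nat.const_mul (C : ℝ))
  have hpos : 0 < #(Digits.block n) := Finset.card_pos.2 ⟨0, Digits.zero_mem_block n⟩
  have : (a n : ℝ) ≤ C * ((n + 1) * #(Digits.block n)) := by exact_mod_cast ha n
  rw [card_orbitBox, div_le_iff₀ (by positivity)]
  push_cast
  field_simp
  linarith

lemma tendsto_card_flow_notMem_orbitBox (k l : ℤ) :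
    Tendsto (fun n => (#{p ∈ orbitBox n | p + (k, l, 0) ∉ orbitBox n} : ℝ) / #(orbitBox n))
      atTop (𝓝 0) := by
  refine tendsto_div_card_orbitBox (C := k.natAbs + l.natAbs) fun n => ?_
  have hsub : {p ∈ orbitBox n | p + (k, l, 0) ∉ orbitBox n} ⊆
      {i ∈ Finset.Icc (0 : ℤ) n | i + k ∉ Finset.Icc (0 : ℤ) n} ×ˢ Finset.Icc 0 (n : ℤ) ×ˢ
        Digits.block n ∪
      Finset.Icc 0 (n : ℤ) ×ˢ {i ∈ Finset.Icc (0 : ℤ) n | i + l ∉ Finset.Icc (0 : ℤ) n} ×ˢ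
        Digits.block n := fun p hp => by
    simp only [orbitBox, Finset.mem_filter, Finset.mem_union, Finset.mem_product, Prod.fst_add,
      Prod.snd_add, add_zero] at hp ⊢
    tauto
  calc
    _ ≤ _ := (Finset.card_le_card hsub).trans (Finset.card_union_le _ _)
    _ ≤ k.natAbs * ((n + 1) * #(Digits.block n)) + (n + 1) * (l.natAbs * #(Digits.block n)) := by
      simp only [Finset.card_product, Int.card_Icc, sub_zero, ← Nat.cast_succ, Int.toNat_natCast]
      gcongr <;> exact card_filter_add_notMem_Icc_le n _
    _ = _ := by ring

lemma tendsto_card_translate_notMem_orbitBox (e : Digits) :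
    Tendsto (fun n => (#{p ∈ orbitBox n |
      (p.1, p.2.1, p.2.2 + Digits.shift p.2.1 e) ∉ orbitBox n} : ℝ) / #(orbitBox n))
      atTop (𝓝 0) := by
  obtain ⟨C, hC⟩ := Digits.exists_card_shift_notMem_block_le e
  refine tendsto_div_card_orbitBox (C := C) fun n => ?_
  have hsub : {p ∈ orbitBox n | (p.1, p.2.1, p.2.2 + Digits.shift p.2.1 e) ∉ orbitBox n} ⊆
      Finset.Icc 0 (n : ℤ) ×ˢ {j ∈ Finset.Icc (0 : ℤ) n | Digits.shift j e ∉ Digits.block n} ×ˢ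
        Digits.block n := fun p hp => by
    simp only [orbitBox, Finset.mem_filter, Finset.mem_product] at hp ⊢
    have := Digits.add_mem_block (m := n) (e := Digits.shift p.2.1 e) (f := p.2.2)
    tauto
  calc
    _ ≤ _ := Finset.card_le_card hsub
    _ ≤ (n + 1) * (C * #(Digits.block n)) := by
      simp only [Finset.card_product, Int.card_Icc, sub_zero, ← Nat.cast_succ, Int.toNat_natCast]
      gcongr
      exact hC n
    _ = _ := by ring

lemma isInvariant_of_tendsto_average {l : Filter ℕ} [l.NeBot] (hl : l ≤ atTop)
    {ξ : ℕ → Config P} {μ : Measure (Config P)} [IsFiniteMeasure μ]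
    (hμ : ∀ h : BoundedContinuousFunction (Config P) ℝ,
      Tendsto (fun n => (#(orbitBox n) : ℝ)⁻¹ * ∑ p ∈ orbitBox n, h (orbitPoint (ξ n) p)) l
        (𝓝 (∫ ζ, h ζ ∂μ))) : IsInvariant μ where
  flow k l :=
    measurePreserving_of_tendsto_average (σ := fun p => p + (k, -l, 0)) hμ (continuous_flow k l)
      (add_left_injective _) (fun n => flow_orbitPoint k l (ξ n))
      ((tendsto_card_flow_notMem_orbitBox k (-l)).mono_left hl)
  translate e := by
    refine measurePreserving_of_tendsto_average
      (σ := fun p => (p.1, p.2.1, p.2.2 + Digits.shift p.2.1 e)) hμ (continuous_translate e) ?_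
      (fun n => translate_orbitPoint e (ξ n))
      ((tendsto_card_translate_notMem_orbitBox e).mono_left hl)
    rintro ⟨i, j, f⟩ ⟨i', j', f'⟩ h
    simp only [Prod.mk.injEq] at h
    obtain ⟨rfl, rfl, h⟩ := h
    rw [add_right_cancel h]

lemma average_flag_zero (ξ : Config P) (n : ℕ) :
    (#(orbitBox n) : ℝ)⁻¹ * ∑ p ∈ orbitBox n,
      {ζ : Config P | ζ.flag 0 = true}.indicator 1 (orbitPoint ξ p) =
      (#{j ∈ Finset.Icc (0 : ℤ) n | ξ.flag j = true} : ℝ) / (n + 1) := by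
  have hpos : 0 < #(Digits.block n) := Finset.card_pos.2 ⟨0, Digits.zero_mem_block n⟩
  have hsum : ∑ p ∈ orbitBox n, {ζ : Config P | ζ.flag 0 = true}.indicator (1 : Config P → ℝ)
      (orbitPoint ξ p) =
      (n + 1) * (#{j ∈ Finset.Icc (0 : ℤ) n | ξ.flag j = true} * #(Digits.block n)) := by
    simp only [orbitBox, Finset.sum_product]
    simp only [orbitPoint, Set.indicator_apply, Set.mem_ofPred_eq,
      flag_flow, flag_translate, zero_sub, neg_neg, Pi.one_apply, Finset.sum_const, nsmul_eq_mul,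
      ← Finset.mul_sum, Finset.sum_boole, Int.card_Icc, sub_zero, ← Nat.cast_succ,
      Int.toNat_natCast]
    push_cast
    ring
  rw [hsum, card_orbitBox]
  push_cast
  field_simp

lemma isClopen_flag_eq (i : ℤ) (b : Bool) : IsClopen {ξ : Config P | ξ.flag i = b} :=
  (isClopen_discrete {b}).preimage (continuous_flag i)

lemma measurableSet_flag_eq (i : ℤ) (b : Bool) : MeasurableSet {ξ : Config P | ξ.flag i = b} :=
  (isClopen_flag_eq i b).1.measurableSet

theorem exists_isInvariant_of_frequently {ρ : ℝ} (hρ : 0 < ρ) {ξ : ℕ → Config P}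
    (hξ : ∃ᶠ n : ℕ in atTop,
      ρ * (n + 1) ≤ #{j ∈ Finset.Icc (0 : ℤ) n | (ξ n).flag j = true}) :
    ∃ μ : Measure (Config P), IsProbabilityMeasure μ ∧ IsInvariant μ ∧
      μ {ζ | ζ.flag 0 = true} ≠ 0 := by
  set D : Set ℕ := {n | ρ * (n + 1) ≤ #{j ∈ Finset.Icc (0 : ℤ) n | (ξ n).flag j = true}}
  have hD : (atTop ⊓ 𝓟 D).NeBot := frequently_mem_iff_neBot.1 hξ
  set u := Ultrafilter.of (atTop ⊓ 𝓟 D)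
  have hu : (u : Filter ℕ) ≤ atTop := (Ultrafilter.of_le _).trans inf_le_left
  have huD : D ∈ (u : Filter ℕ) :=
    (Ultrafilter.of_le _).trans inf_le_right (mem_principal_self _)
  obtain ⟨μ, hμ⟩ := exists_tendsto_average u orbitBox_nonempty fun n => orbitPoint (ξ n)
  refine ⟨μ, inferInstance, isInvariant_of_tendsto_average hu hμ, fun hzero => ?_⟩
  have hlim := hμ (.indicator _ (isClopen_flag_eq 0 true))
  simp only [BoundedContinuousFunction.indicator_apply, average_flag_zero] at hlim
  rw [integral_indicator_one (measurableSet_flag_eq 0 true), measureReal_def, hzero,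
    ENNReal.toReal_zero] at hlim
  refine hρ.not_ge (ge_of_tendsto hlim (mem_of_superset huD fun n hn => ?_))
  rwa [Set.mem_ofPred_eq, le_div_iff₀ (by positivity)]

lemma IsInvariant.restrict_exists_flag {μ : Measure (Config P)} (hμ : IsInvariant μ) :
    IsInvariant (μ.restrict {ξ | ∃ i, ξ.flag i = true}) := by
  have hmeas : MeasurableSet {ξ : Config P | ∃ i, ξ.flag i = true} := by
    rw [Set.ofPred_exists]
    exact MeasurableSet.iUnion fun i => measurableSet_flag_eq i true
  constructor
  · intro k l
    have hpre : Config.flow k l ⁻¹' {ξ : Config P | ∃ i, ξ.flag i = true} =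
        {ξ | ∃ i, ξ.flag i = true} := by
      ext ξ
      simp only [Set.mem_preimage, Set.mem_ofPred_eq, flag_flow]
      exact ⟨fun ⟨i, h⟩ => ⟨i - l, h⟩, fun ⟨i, h⟩ => ⟨i + l, by rwa [add_sub_cancel_right]⟩⟩
    simpa only [hpre] using (hμ.flow k l).restrict_preimage hmeas
  · intro e
    have hpre : Config.translate e ⁻¹' {ξ : Config P | ∃ i, ξ.flag i = true} =
        {ξ | ∃ i, ξ.flag i = true} := by
      simp only [Set.preimage_ofPred_eq, flag_translate]
    simpa only [hpre] using (hμ.translate e).restrict_preimage hmeas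

lemma IsInvariant.measure_forall_le_flag_eq_false {μ : Measure (Config P)} [IsFiniteMeasure μ]
    (hμ : IsInvariant μ) :
    μ {ξ | ∀ i ≤ 0, ξ.flag i = false} = μ {ξ | ∀ i, ξ.flag i = false} := by
  set Z : ℕ → Set (Config P) := fun m => {ξ | ∀ i ≤ (m : ℤ), ξ.flag i = false}
  have hZ (m : ℕ) : MeasurableSet (Z m) := by
    simp only [Z, Set.ofPred_forall]
    exact MeasurableSet.iInter fun i => MeasurableSet.iInter fun _ => measurableSet_flag_eq i _
  have hanti : Antitone Z := fun m m' hm ξ h i hi => h i (hi.trans (by exact_mod_cast hm))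
  have hconst (m : ℕ) : μ (Z m) = μ (Z 0) := by
    rw [← (hμ.flow 0 m).measure_preimage (hZ m).nullMeasurableSet]
    congr 1
    ext ξ
    simp only [Z, Set.mem_preimage, Set.mem_ofPred_eq, flag_flow]
    exact ⟨fun h i hi => by simpa using h (i + m) (by push_cast at hi; omega),
      fun h i hi => h _ (by push_cast; omega)⟩
  have hinter : ⋂ m, Z m = {ξ | ∀ i, ξ.flag i = false} := by
    ext ξ
    simp only [Z, Set.mem_iInter, Set.mem_ofPred_eq]
    exact ⟨fun h i => h i.toNat i (Int.self_le_toNat i), fun h m i _ => h i⟩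
  have hlim := tendsto_measure_iInter_atTop (μ := μ) (fun m => (hZ m).nullMeasurableSet) hanti
    ⟨0, measure_ne_top _ _⟩
  simp only [Function.comp_def, hconst, hinter] at hlim
  simpa only [Z, Nat.cast_zero] using tendsto_nhds_unique tendsto_const_nhds hlim

theorem not_frequently_dense_flag {ρ : ℝ} (hρ : 0 < ρ) (ξ : ℕ → Config P) :
    ¬ ∃ᶠ n : ℕ in atTop,
      ρ * (n + 1) ≤ #{j ∈ Finset.Icc (0 : ℤ) n | (ξ n).flag j = true} := by
  intro hξ
  obtain ⟨μ, hprob, hμ, hflag⟩ := exists_isInvariant_of_frequently hρ hξ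
  have hnull : μ.restrict {ζ : Config P | ∃ i, ζ.flag i = true}
      {ζ | ∀ i, ζ.flag i = false} = 0 := by
    have hmeas : MeasurableSet {ζ : Config P | ∀ i, ζ.flag i = false} := by
      rw [Set.ofPred_forall]
      exact MeasurableSet.iInter fun i => measurableSet_flag_eq i false
    have hdisj : {ζ : Config P | ∀ i, ζ.flag i = false} ∩ {ζ | ∃ i, ζ.flag i = true} = ∅ := by
      ext ζ
      simp
    rw [Measure.restrict_apply hmeas, hdisj, measure_empty]
  have hzero := hμ.restrict_exists_flag.eq_zero
    (hμ.restrict_exists_flag.measure_forall_le_flag_eq_false.trans hnull)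
  rw [Measure.restrict_eq_zero] at hzero
  exact hflag (measure_mono_null (t := {ζ : Config P | ∃ i, ζ.flag i = true})
    (fun ζ hζ => ⟨0, hζ⟩) hzero)

end Config

/-! ### Ternary subtrees of sets of integers -/

section TernarySubtrees

variable {N : ℕ} {n : ℕ} {B : Finset ℕ} {Z : Finset ℤ}

/-- The tree of ternary digit strings of length `n`, with branching only at the levels in `B`,
embeds into the tree of base `N` expansions of the elements of `Z`: leaves that agree above the
level `l` are at distance less than `N ^ (l + 1)`, and if they branch at a level `l ∈ B`, then they
are at distance more than `N ^ l`. -/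
def HasTernarySubtree (N n : ℕ) (B : Finset ℕ) (Z : Finset ℤ) : Prop :=
  ∃ τ : (ℕ → ZMod 3) → ℤ, (∀ f, τ f ∈ Z) ∧ (∀ f f', (∀ k < n, f k = f' k) → τ f = τ f') ∧
    ∀ l < n, ∀ f f', (∀ k, l < k → k < n → f k = f' k) →
      |τ f - τ f'| < (N : ℤ) ^ (l + 1) ∧ (l ∈ B → f l ≠ f' l → (N : ℤ) ^ l < |τ f - τ f'|)

lemma abs_sub_lt_of_ediv_eq {m z z' : ℤ} (hm : 0 < m) (h : z / m = z' / m) : |z - z'| < m := by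
  have hz := Int.mul_ediv_add_emod z m
  have hz' := Int.mul_ediv_add_emod z' m
  rw [h] at hz
  rw [abs_lt]
  constructor <;>
    linarith [Int.emod_nonneg z hm.ne', Int.emod_lt_of_pos z hm, Int.emod_nonneg z' hm.ne',
      Int.emod_lt_of_pos z' hm]

lemma lt_abs_sub_of_two_le_abs_ediv_sub {m z z' : ℤ} (hm : 0 < m) (h : 2 ≤ |z / m - z' / m|) :
    m < |z - z'| := by
  wlog hle : z' / m ≤ z / m generalizing z z'
  · rw [abs_sub_comm]
    exact this (by rwa [abs_sub_comm]) (le_of_not_ge hle)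
  rw [abs_of_nonneg (sub_nonneg.2 hle)] at h
  refine lt_of_lt_of_le ?_ (le_abs_self _)
  nlinarith [Int.mul_ediv_add_emod z m, Int.mul_ediv_add_emod z' m, Int.emod_nonneg z hm.ne',
    Int.emod_lt_of_pos z' hm]

lemma HasTernarySubtree.succ (hN : 0 < N) {B' : Finset ℕ}
    (hZ : ∀ z ∈ Z, ∀ z' ∈ Z, z / N ^ (n + 1) = z' / N ^ (n + 1)) {b : ZMod 3 → ℤ}
    (hb : ∀ x, HasTernarySubtree N n B {z ∈ Z | z / N ^ n = b x})
    (hB : ∀ l ∈ B', l < n → l ∈ B) (hn : n ∈ B' → ∀ x y, x ≠ y → 2 ≤ |b x - b y|) :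
    HasTernarySubtree N (n + 1) B' Z := by
  have hpos (m : ℕ) : 0 < (N : ℤ) ^ m := by positivity
  choose τ hτ hτ_congr hτ_dist using hb
  have hmem (x : ZMod 3) (f : ℕ → ZMod 3) : τ x f ∈ Z ∧ τ x f / N ^ n = b x :=
    Finset.mem_filter.1 (hτ x f)
  refine ⟨fun f => τ (f n) f, fun f => (hmem _ f).1, fun f f' h => ?_, fun l hl f f' h => ?_⟩
  · simp only [h n n.lt_succ_self]
    exact hτ_congr _ f f' fun k hk => h k (hk.trans n.lt_succ_self)
  rcases Nat.lt_succ_iff_lt_or_eq.1 hl with hl | rfl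
  · simp only [h n hl n.lt_succ_self]
    obtain ⟨hlt, hgt⟩ := hτ_dist (f' n) l hl f f' fun k hk hk' => h k hk (hk'.trans n.lt_succ_self)
    exact ⟨hlt, fun hlB => hgt (hB l hlB hl)⟩
  · refine ⟨abs_sub_lt_of_ediv_eq (hpos _) (hZ _ (hmem _ _).1 _ (hmem _ _).1), fun hlB hne => ?_⟩
    refine lt_abs_sub_of_two_le_abs_ediv_sub (hpos _) ?_
    rw [(hmem _ _).2, (hmem _ _).2]
    exact hn hlB _ _ hne

lemma exists_two_separated_of_five_le_card {s : Finset ℤ} (hs : 5 ≤ #s) :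
    ∃ b : ZMod 3 → ℤ, (∀ x, b x ∈ s) ∧ ∀ x y, x ≠ y → 2 ≤ |b x - b y| := by
  obtain ⟨t, hts, ht⟩ := Finset.exists_subset_card_eq hs
  set e := t.orderEmbOfFin ht
  have hlt (i j : Fin 5) (h : i < j) : e i < e j := e.strictMono h
  have h01 := hlt 0 1 (by decide)
  have h12 := hlt 1 2 (by decide)
  have h23 := hlt 2 3 (by decide)
  have h34 := hlt 3 4 (by decide)
  have hmem (i : Fin 5) : e i ∈ s := hts (t.orderEmbOfFin_mem ht i)
  refine ⟨![e 0, e 2, e 4], fun x => ?_, fun x y hxy => ?_⟩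
  · fin_cases x <;> exact hmem _
  · rw [le_abs]
    fin_cases x <;> fin_cases y <;> first | exact absurd rfl hxy | (simp; omega)

lemma card_le_of_forall_ediv_eq (hN : 0 < N) {A : Finset ℤ} {c : ℤ} (hA : ∀ a ∈ A, a / N = c) :
    #A ≤ N := by
  have hsub : A ⊆ Finset.Ico (c * N) (c * N + N) := fun a ha => by
    have := (Int.ediv_eq_iff_of_pos (by exact_mod_cast hN)).1 (hA a ha)
    rw [Finset.mem_Ico]
    constructor <;> linarith
  simpa using Finset.card_le_card hsub

open Classical in
/-- The number `N ^ #B` if `Z` contains a ternary subtree branching at the levels in `B`, and `0`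
otherwise. -/
noncomputable def subtreeWeight (N n : ℕ) (Z : Finset ℤ) (B : Finset ℕ) : ℕ :=
  if HasTernarySubtree N n B Z then N ^ #B else 0

lemma HasTernarySubtree.subtreeWeight_eq (h : HasTernarySubtree N n B Z) :
    subtreeWeight N n Z B = N ^ #B :=
  if_pos h

lemma card_mul_pow_le_subtreeWeight (hN : 0 < N) (hB : n ∉ B)
    (hZ : ∀ z ∈ Z, ∀ z' ∈ Z, z / N ^ (n + 1) = z' / N ^ (n + 1)) {A : Finset ℤ} (hAN : #A ≤ N)
    (hA : ∀ a ∈ A, HasTernarySubtree N n B {z ∈ Z | z / N ^ n = a}) :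
    #A * N ^ #B ≤ 4 * (subtreeWeight N (n + 1) Z B + subtreeWeight N (n + 1) Z (insert n B)) := by
  by_cases h5 : 5 ≤ #A
  · obtain ⟨b, hbA, hb⟩ := exists_two_separated_of_five_le_card h5
    have htree : HasTernarySubtree N (n + 1) (insert n B) Z :=
      .succ hN hZ (fun x => hA _ (hbA x))
        (fun l hl hln => Finset.mem_of_mem_insert_of_ne hl hln.ne) fun _ => hb
    rw [htree.subtreeWeight_eq, Finset.card_insert_of_notMem hB, pow_succ']
    have := Nat.mul_le_mul_right (N ^ #B) hAN
    omega
  rcases A.eq_empty_or_nonempty with rfl | ⟨a, ha⟩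
  · simp
  · have htree : HasTernarySubtree N (n + 1) B Z :=
      .succ hN hZ (fun _ => hA a ha) (fun l hl _ => hl) fun h => absurd h hB
    rw [htree.subtreeWeight_eq]
    have := Nat.mul_le_mul_right (N ^ #B) (by omega : #A ≤ 4)
    omega

open Classical in
theorem card_le_sum_subtreeWeight (hN : 0 < N) (n : ℕ) (Z : Finset ℤ)
    (hZ : ∀ z ∈ Z, ∀ z' ∈ Z, z / N ^ n = z' / N ^ n) :
    #Z ≤ 4 ^ n * ∑ B ∈ (Finset.range n).powerset, subtreeWeight N n Z B := by
  induction n generalizing Z with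
  | zero =>
    rcases Z.eq_empty_or_nonempty with rfl | ⟨z, hz⟩
    · simp
    · have htree : HasTernarySubtree N 0 ∅ Z :=
        ⟨fun _ => z, fun _ => hz, fun _ _ _ => rfl, fun l hl => absurd hl l.not_lt_zero⟩
      have hcard : #Z ≤ 1 := Finset.card_le_one.2 fun z hz z' hz' => by simpa using hZ z hz z' hz'
      simpa [htree.subtreeWeight_eq] using hcard
  | succ n ih =>
    set A := Z.image fun z => z / (N : ℤ) ^ n with hA
    have hAN : #A ≤ N := by
      rcases Z.eq_empty_or_nonempty with rfl | ⟨z₀, hz₀⟩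
      · simp [hA]
      refine card_le_of_forall_ediv_eq hN (c := z₀ / N ^ (n + 1)) fun a ha => ?_
      obtain ⟨z, hz, rfl⟩ := Finset.mem_image.1 ha
      rw [Int.ediv_ediv_of_nonneg (by positivity), ← pow_succ, hZ z hz z₀ hz₀]
    let Z' (a : ℤ) : Finset ℤ := {z ∈ Z | z / (N : ℤ) ^ n = a}
    have hZ' (a : ℤ) : ∀ z ∈ Z' a, ∀ z' ∈ Z' a, z / N ^ n = z' / N ^ n := fun z hz z' hz' =>
      (Finset.mem_filter.1 hz).2.trans (Finset.mem_filter.1 hz').2.symm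
    calc
      #Z = ∑ a ∈ A, #(Z' a) := Finset.card_eq_sum_card_image _ _
      _ ≤ ∑ a ∈ A, 4 ^ n * ∑ B ∈ (Finset.range n).powerset, subtreeWeight N n (Z' a) B :=
        Finset.sum_le_sum fun a _ => ih (Z' a) (hZ' a)
      _ = 4 ^ n * ∑ B ∈ (Finset.range n).powerset,
          #{a ∈ A | HasTernarySubtree N n B (Z' a)} * N ^ #B := by
        rw [← Finset.mul_sum, Finset.sum_comm]
        simp only [subtreeWeight, ← Finset.sum_filter, Finset.sum_const, smul_eq_mul]
      _ ≤ 4 ^ n * ∑ B ∈ (Finset.range n).powerset,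
          4 * (subtreeWeight N (n + 1) Z B + subtreeWeight N (n + 1) Z (insert n B)) := by
        refine Nat.mul_le_mul_left _ (Finset.sum_le_sum fun B hB => ?_)
        exact card_mul_pow_le_subtreeWeight hN
          (fun h => Finset.notMem_range_self (Finset.mem_powerset.1 hB h)) hZ
          ((Finset.card_filter_le _ _).trans hAN) fun a ha => (Finset.mem_filter.1 ha).2
      _ = _ := by
        rw [Finset.range_add_one, Finset.sum_powerset_insert Finset.notMem_range_self,
          ← Finset.sum_add_distrib, ← Finset.mul_sum, pow_succ, mul_assoc]

lemma exists_dense_subtree_of_rpow_lt_card (hN : 0 < N) {d : ℝ} (hNd : 8 ≤ (N : ℝ) ^ (d / 2))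
    (hZ : ∀ z ∈ Z, z ∈ Set.Ico 0 ((N : ℤ) ^ n)) (hcard : ((N : ℝ) ^ n) ^ d < #Z) :
    ∃ B ⊆ Finset.range n, HasTernarySubtree N n B Z ∧ d / 2 * n ≤ #B := by
  by_contra! hno
  set w : ℝ := ((N : ℝ) ^ (d / 2)) ^ n with hw
  have hweight : ∀ B ∈ (Finset.range n).powerset, (subtreeWeight N n Z B : ℝ) ≤ w := by
    intro B hB
    by_cases htree : HasTernarySubtree N n B Z
    · rw [htree.subtreeWeight_eq, Nat.cast_pow, ← Real.rpow_natCast, hw, ← Real.rpow_mul_natCast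
        (by positivity)]
      exact Real.rpow_le_rpow_of_exponent_le (by exact_mod_cast hN)
        (hno B (Finset.mem_powerset.1 hB) htree).le
    · rw [subtreeWeight, if_neg htree, Nat.cast_zero]
      positivity
  have hdiv : ∀ z ∈ Z, z / (N : ℤ) ^ n = 0 := fun z hz =>
    Int.ediv_eq_zero_of_lt (hZ z hz).1 (hZ z hz).2
  refine hcard.not_ge ?_
  calc
    (#Z : ℝ) ≤ 4 ^ n * ∑ B ∈ (Finset.range n).powerset, (subtreeWeight N n Z B : ℝ) := by
      exact_mod_cast card_le_sum_subtreeWeight hN n Z fun z hz z' hz' =>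
        (hdiv z hz).trans (hdiv z' hz').symm
    _ ≤ 4 ^ n * ∑ _B ∈ (Finset.range n).powerset, w := by
      gcongr with B hB
      exact hweight B hB
    _ = 8 ^ n * w := by
      rw [Finset.sum_const, Finset.card_powerset, Finset.card_range, nsmul_eq_mul, ← mul_assoc,
        Nat.cast_pow, ← mul_pow]
      norm_num
    _ ≤ w * w := by
      gcongr
      exact pow_le_pow_left₀ (by norm_num) hNd n
    _ = ((N : ℝ) ^ n) ^ d := by
      rw [hw, ← mul_pow, ← Real.rpow_add (by positivity), add_halves, ← Real.rpow_natCast,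
        ← Real.rpow_natCast, ← Real.rpow_mul (by positivity), ← Real.rpow_mul (by positivity),
        mul_comm]

end TernarySubtrees

/-! ### Counting unipotent times -/

section CountingTimes

variable {N n : ℕ} {B : Finset ℕ} {Z : Finset ℤ} {S : Set ℝ}

lemma HasTernarySubtree.exists_times (h : HasTernarySubtree N n B Z)
    (hS : ∀ z ∈ Z, (Set.Icc (z : ℝ) (z + 1) ∩ S).Nonempty) :
    ∃ t : (ℕ → ZMod 3) → ℝ, (∀ f, t f ∈ S) ∧ (∀ f f', (∀ k < n, f k = f' k) → t f = t f') ∧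
      ∀ l < n, ∀ f f', (∀ k, l < k → k < n → f k = f' k) → |t f - t f'| ≤ (N : ℝ) ^ (l + 1) ∧
        (l ∈ B → f l ≠ f' l → (N : ℝ) ^ l ≤ |t f - t f'|) := by
  obtain ⟨τ, hτZ, hτ_congr, hτ⟩ := h
  choose! s hs using hS
  have hround (f f' : ℕ → ZMod 3) :
      |(s (τ f) - s (τ f')) - ((τ f - τ f' : ℤ) : ℝ)| ≤ 1 := by
    obtain ⟨⟨hf, hf₁⟩, -⟩ := hs _ (hτZ f)
    obtain ⟨⟨hf', hf'₁⟩, -⟩ := hs _ (hτZ f')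
    push_cast
    rw [abs_le]
    constructor <;> linarith
  refine ⟨fun f => s (τ f), fun f => (hs _ (hτZ f)).2, fun f f' h => congrArg s (hτ_congr _ _ h),
    fun l hl f f' h => ?_⟩
  obtain ⟨hlt, hgt⟩ := hτ l hl f f' h
  have hdist := abs_le.1 ((abs_abs_sub_abs_le_abs_sub _ _).trans (hround f f'))
  rw [← Int.cast_abs] at hdist
  refine ⟨?_, fun hlB hne => ?_⟩
  · have : ((|τ f - τ f'| : ℤ) : ℝ) + 1 ≤ (N : ℝ) ^ (l + 1) := by exact_mod_cast hlt
    linarith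
  · have : (N : ℝ) ^ l + 1 ≤ ((|τ f - τ f'| : ℤ) : ℝ) := by exact_mod_cast hgt hlB hne
    linarith

variable {P : Params} {g : Matrix (Fin 3) (Fin 3) ℝ}

lemma Config.exists_of_times {t : Digits → ℝ} {β : ℤ → Bool}
    (ht : ∀ f, t f ∈ gapTimes P.ε 0 1 g)
    (hle : ∀ l : ℤ, ∀ f f' : Digits, (∀ k, l < k → f k = f' k) → |t f - t f'| ≤ P.q (l + 1))
    (hge : ∀ l : ℤ, ∀ f f' : Digits, (∀ k, l < k → f k = f' k) → f l ≠ f' l → β l = true →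
      P.q l ≤ |t f - t f'|) :
    ∃ ξ : Config P, ξ.flag = β := by
  obtain ⟨x₀, hx₀, hsame⟩ := P.exists_mem_bases (ht 0)
  have hbase (c : ℤ × ℤ × Digits) : ∃ x ∈ P.bases, (c = 0 → x = x₀) ∧
      SameLattice (P.diagFlow c.1 c.2.1 * (transvection 0 1 (t c.2.2 - t 0) * x₀)) x := by
    by_cases hc : c = 0
    · refine ⟨x₀, hx₀, fun _ => rfl, ?_⟩
      subst hc
      simpa [P.diagFlow_zero] using SameLattice.refl hsame.abs_det_right
    · have hmem : t c.2.2 - t 0 ∈ gapTimes P.ε 0 1 x₀ := by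
        rw [← hsame.gapTimes_eq (by decide), mem_gapTimes_transvection_mul (by decide),
          sub_add_cancel]
        exact ht _
      obtain ⟨x, hx, hsame_x⟩ := P.exists_mem_bases (P.diagFlow_mul_mem_normGap hmem c.1 c.2.1)
      exact ⟨x, hx, fun h => absurd h hc, hsame_x⟩
  choose x hx hx_zero hsame_x using hbase
  refine ⟨⟨(x, fun f => t f - t 0, β), hx, fun k l f => ?_, sub_self _, fun l f f' h => ?_,
    fun l f f' h hne hβ => ?_⟩, rfl⟩
  · simpa only [hx_zero 0 rfl] using hsame_x (k, l, f)
  · simpa only [sub_sub_sub_cancel_right] using hle l f f' h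
  · simpa only [sub_sub_sub_cancel_right] using hge l f f' h hne hβ

lemma HasTernarySubtree.exists_config (h : HasTernarySubtree (P.M ^ 3) n B Z)
    (hB : B ⊆ Finset.range n)
    (hS : ∀ z ∈ Z, (Set.Icc (z : ℝ) (z + 1) ∩ gapTimes P.ε 0 1 g).Nonempty) :
    ∃ ξ : Config P, ∀ l ∈ B, ξ.flag l = true := by
  obtain ⟨t, ht, ht_congr, hdist⟩ := h.exists_times hS
  have hq (m : ℕ) : ((P.M ^ 3 : ℕ) : ℝ) ^ m = P.q m := by
    rw [P.q_natCast, P.q_one, Nat.cast_pow]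
  simp only [hq] at hdist
  refine (Config.exists_of_times (P := P) (t := fun f => t fun k => f k)
    (β := fun l => decide (l ∈ B.map Nat.castEmbedding)) (fun f => ht _) (fun l f f' hff' => ?_)
    (fun l f f' hff' hne hl => ?_)).imp fun ξ hξ l hl => by simpa [hξ] using hl
  · by_cases hconst : ∀ k : ℕ, k < n → f k = f' k
    · rw [ht_congr _ _ hconst, sub_self, abs_zero]
      exact (P.q_pos _).le
    · push Not at hconst
      obtain ⟨k, hk, hne⟩ := hconst
      have hkl : (k : ℤ) ≤ l := not_lt.1 fun hlk => hne (hff' k hlk)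
      refine (hdist (min l.toNat (n - 1)) (by omega) _ _ fun j hj hjn => hff' j (by omega)).1.trans
        (P.q_mono (by omega))
  · simp only [decide_eq_true_eq, Finset.mem_map, Nat.castEmbedding_apply] at hl
    obtain ⟨l, hl, rfl⟩ := hl
    exact (hdist l (Finset.mem_range.1 (hB hl)) _ _ fun k hk _ => hff' k (by exact_mod_cast hk)).2
      hl hne

lemma card_le_card_filter_flag (hB : B ⊆ Finset.range (n + 1)) {ξ : Config P}
    (hξ : ∀ l ∈ B, ξ.flag l = true) : #B ≤ #{j ∈ Finset.Icc (0 : ℤ) n | ξ.flag j = true} := by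
  rw [← Finset.card_map (Nat.castEmbedding (R := ℤ))]
  refine Finset.card_le_card fun j hj => ?_
  obtain ⟨l, hl, rfl⟩ := Finset.mem_map.1 hj
  have hln := Finset.mem_range_succ_iff.1 (hB hl)
  exact Finset.mem_filter.2 ⟨Finset.mem_Icc.2 ⟨l.cast_nonneg, Int.ofNat_le.2 hln⟩, hξ l hl⟩

lemma exists_forall_card_le_rpow {ε d : ℝ} (hε : 0 < ε) (hd : 0 < d) :
    ∃ L : ℕ, 2 ≤ L ∧ ∀ (Z : Finset ℤ) (g : Matrix (Fin 3) (Fin 3) ℝ),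
      (∀ z ∈ Z, z ∈ Set.Ico 0 (L : ℤ)) →
      (∀ z ∈ Z, (Set.Icc (z : ℝ) (z + 1) ∩ gapTimes ε 0 1 g).Nonempty) → (#Z : ℝ) ≤ L ^ d := by
  obtain ⟨M, hMd, hM⟩ : ∃ M : ℕ, 8 ≤ ((M ^ 3 : ℕ) : ℝ) ^ (d / 2) ∧ 2 ≤ M :=
    ((((tendsto_rpow_atTop (half_pos hd)).comp (tendsto_natCast_atTop_atTop.comp
      (tendsto_pow_atTop three_ne_zero))).eventually_ge_atTop 8).and (eventually_ge_atTop 2)).exists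
  obtain ⟨P, rfl, rfl⟩ := Params.exists_eq hε hM
  by_contra! hmany
  have hconfig (n : ℕ) : ∃ ξ : Config P,
      d / 2 * (n + 1) ≤ #{j ∈ Finset.Icc (0 : ℤ) n | ξ.flag j = true} := by
    have hL : 2 ≤ (P.M ^ 3) ^ (n + 1) := by
      rw [← pow_mul]
      exact hM.trans (Nat.le_self_pow (by positivity) P.M)
    obtain ⟨Z, g, hZ, hS, hcard⟩ := hmany _ hL
    push_cast at hZ hcard
    obtain ⟨B, hB, htree, hdense⟩ := exists_dense_subtree_of_rpow_lt_card (N := P.M ^ 3)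
      (by positivity) hMd (by exact_mod_cast hZ) (by exact_mod_cast hcard)
    obtain ⟨ξ, hξ⟩ := htree.exists_config (P := P) hB hS
    push_cast at hdense
    exact ⟨ξ, hdense.trans (by exact_mod_cast card_le_card_filter_flag hB hξ)⟩
  choose ξ hξ using hconfig
  exact Config.not_frequently_dense_flag (half_pos hd) ξ (Frequently.of_forall hξ)

end CountingTimes

section PlanarCounting

variable {ε d : ℝ} {L : ℕ} {A A' : Set (ℝ × ℝ)}

/-- The set of planar times `w` at which the orbit of the lattice `g ℤ³` under the commuting
directions `(0, 1)` and `(2, 1)` has norm gap `ε`. -/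
def planarGapTimes (ε : ℝ) (g : Matrix (Fin 3) (Fin 3) ℝ) : Set (ℝ × ℝ) :=
  {w | unipotent w.1 0 w.2 * g ∈ normGap ε}

lemma unipotent_mul_unipotent (s b c s' b' c' : ℝ) : unipotent s b c * unipotent s' b' c' =
    unipotent (s + s' + b * c') (b + b') (c + c') := by
  ext i j
  fin_cases i <;> fin_cases j <;> simp [unipotent, Matrix.mul_apply, Fin.sum_univ_three] <;> ring

/- Conjugation by `diagFlow n 0` fixes the first coordinate of the planar times and contracts the
second one, so the sets of times of the flowed lattices accumulate on a horizontal line. -/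
lemma exists_image_fst_planarGapTimes_subset (hε : 0 < ε) (g : Matrix (Fin 3) (Fin 3) ℝ) :
    ∃ g' : Matrix (Fin 3) (Fin 3) ℝ, Prod.fst '' planarGapTimes ε g ⊆ gapTimes ε 0 1 g' := by
  rcases (planarGapTimes ε g).eq_empty_or_nonempty with hempty | ⟨w₀, hw₀⟩
  · exact ⟨1, by simp [hempty]⟩
  obtain ⟨P, rfl, -⟩ := Params.exists_eq hε le_rfl
  choose x hx hsame using fun n : ℕ => P.exists_mem_bases (P.diagFlow_mul_mem_normGap hw₀ n 0)
  obtain ⟨y, -, hy⟩ := exists_mem_tendsto_ultrafilter P.isCompact_bases (hyperfilter ℕ)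
    (Eventually.of_forall hx)
  refine ⟨transvection 0 1 (-w₀.1) * y, Set.image_subset_iff.2 fun w hw => ?_⟩
  rw [Set.mem_preimage, mem_gapTimes_transvection_mul (by decide), ← sub_eq_add_neg, gapTimes,
    Set.mem_ofPred_eq, ← unipotent_eq_transvection_zero_one]
  have hcontract : Tendsto (fun n : ℕ => P.q (-n) * (w.2 - w₀.2)) (hyperfilter ℕ) (𝓝 0) := by
    simpa only [zero_mul] using
      (P.tendsto_q_neg_natCast.mono_left Nat.hyperfilter_le_atTop).mul_const (w.2 - w₀.2)
  refine isClosed_normGap.mem_of_tendsto (tendsto_matrix_mul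
    (tendsto_unipotent tendsto_const_nhds tendsto_const_nhds hcontract) hy)
    (Eventually.of_forall fun n => ?_)
  refine ((hsame n).mul_left (abs_det_unipotent _ _ _)).mem_normGap ?_
  have hconj : unipotent (w.1 - w₀.1) 0 (P.q (-n) * (w.2 - w₀.2)) * P.diagFlow n 0 =
      P.diagFlow n 0 * unipotent (w.1 - w₀.1) 0 (w.2 - w₀.2) := by
    rw [P.diagFlow_mul_unipotent, P.q_zero, one_mul, mul_zero, zero_sub]
  rw [← Matrix.mul_assoc, hconj, Matrix.mul_assoc, ← Matrix.mul_assoc (unipotent _ _ _),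
    unipotent_mul_unipotent, sub_add_cancel, sub_add_cancel, zero_mul, add_zero, add_zero]
  exact P.diagFlow_mul_mem_normGap hw n 0

lemma submatrix_mem_normGap {ι : Type*} [Fintype ι] [DecidableEq ι] {g : Matrix ι ι ℝ}
    (hg : g ∈ normGap ε) (σ : Equiv.Perm ι) : g.submatrix σ id ∈ normGap ε := by
  refine ⟨?_, fun v hv => ?_⟩
  · rw [det_permute, abs_mul, hg.1, mul_one]
    exact_mod_cast Int.isUnit_iff_abs_eq.1 (Equiv.Perm.sign σ).isUnit
  · exact (hg.2 v hv).trans_eq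
      (congrArg _ (Equiv.prod_comp σ fun i => (g *ᵥ (Int.cast ∘ v)) i).symm)

lemma exists_image_snd_planarGapTimes_subset (hε : 0 < ε) (g : Matrix (Fin 3) (Fin 3) ℝ) :
    ∃ g' : Matrix (Fin 3) (Fin 3) ℝ, Prod.snd '' planarGapTimes ε g ⊆ gapTimes ε 0 1 g' := by
  obtain ⟨g', hg'⟩ := exists_image_fst_planarGapTimes_subset hε (g.submatrix (Equiv.swap 0 2) id)
  refine ⟨g', Set.image_subset_iff.2 fun w hw => hg' ⟨w.swap, ?_, rfl⟩⟩
  rw [planarGapTimes, Set.mem_ofPred_eq, Prod.fst_swap, Prod.snd_swap]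
  have hswap : unipotent w.2 0 w.1 * g.submatrix (Equiv.swap 0 2) id =
      (unipotent w.1 0 w.2 * g).submatrix (Equiv.swap 0 2) id := by
    ext i j
    have hfix : Equiv.swap (0 : Fin 3) 2 1 = 1 := by decide
    simp only [Matrix.mul_apply, submatrix_apply, Fin.sum_univ_three]
    fin_cases i <;> simp [unipotent, hfix, add_comm]
  exact hswap.symm ▸ submatrix_mem_normGap hw (Equiv.swap 0 2)

/-- The closed unit square with lower left corner `w`. -/
def unitSquare (w : ℤ × ℤ) : Set (ℝ × ℝ) :=
  Set.Icc (w.1 : ℝ) (w.1 + 1) ×ˢ Set.Icc (w.2 : ℝ) (w.2 + 1)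

open Classical in
/-- The unit squares of the standard `L × L` grid in `[0, L]²` that meet `A`, each represented by
its lower left corner. -/
noncomputable def squaresMeeting (L : ℕ) (A : Set (ℝ × ℝ)) : Finset (ℤ × ℤ) :=
  {w ∈ Finset.Ico 0 (L : ℤ) ×ˢ Finset.Ico 0 (L : ℤ) | (unitSquare w ∩ A).Nonempty}

lemma mem_squaresMeeting {w : ℤ × ℤ} : w ∈ squaresMeeting L A ↔
    (w.1 ∈ Set.Ico 0 (L : ℤ) ∧ w.2 ∈ Set.Ico 0 (L : ℤ)) ∧ (unitSquare w ∩ A).Nonempty := by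
  simp [squaresMeeting]

lemma squaresMeeting_mono (h : A ⊆ A') : squaresMeeting L A ⊆ squaresMeeting L A' :=
  fun _ hw => mem_squaresMeeting.2 ((mem_squaresMeeting.1 hw).imp_right
    fun hne => hne.mono (Set.inter_subset_inter_right _ h))

lemma exists_forall_card_squaresMeeting_planarGapTimes_le (hε : 0 < ε) (hd : 0 < d) :
    ∃ L : ℕ, 2 ≤ L ∧ ∀ g, (#(squaresMeeting L (planarGapTimes ε g)) : ℝ) ≤ L ^ d := by
  obtain ⟨L, hL, hcount⟩ := exists_forall_card_le_rpow hε (half_pos hd)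
  refine ⟨L, hL, fun g => ?_⟩
  set W := squaresMeeting L (planarGapTimes ε g)
  have hfst : (#(W.image Prod.fst) : ℝ) ≤ L ^ (d / 2) := by
    obtain ⟨g', hg'⟩ := exists_image_fst_planarGapTimes_subset hε g
    refine hcount _ g' (Finset.forall_mem_image.2 fun w hw => (mem_squaresMeeting.1 hw).1.1)
      (Finset.forall_mem_image.2 fun w hw => ?_)
    obtain ⟨-, p, hp, hpg⟩ := mem_squaresMeeting.1 hw
    exact ⟨p.1, hp.1, hg' ⟨p, hpg, rfl⟩⟩
  have hsnd : (#(W.image Prod.snd) : ℝ) ≤ L ^ (d / 2) := by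
    obtain ⟨g', hg'⟩ := exists_image_snd_planarGapTimes_subset hε g
    refine hcount _ g' (Finset.forall_mem_image.2 fun w hw => (mem_squaresMeeting.1 hw).1.2)
      (Finset.forall_mem_image.2 fun w hw => ?_)
    obtain ⟨-, p, hp, hpg⟩ := mem_squaresMeeting.1 hw
    exact ⟨p.2, hp.2, hg' ⟨p, hpg, rfl⟩⟩
  have hL0 : (0 : ℝ) < L := by positivity
  calc
    (#W : ℝ) ≤ #(W.image Prod.fst) * #(W.image Prod.snd) := by
      rw [← Nat.cast_mul, ← Finset.card_product]
      exact_mod_cast Finset.card_le_card Finset.subset_product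
    _ ≤ (L : ℝ) ^ (d / 2) * (L : ℝ) ^ (d / 2) := by gcongr
    _ = (L : ℝ) ^ d := by rw [← Real.rpow_add hL0, add_halves]

end PlanarCounting

/-! ### Uniform exceptions and rescaling -/

section UniformExceptions

variable {ε σ K B : ℝ} {p : ℝ × ℝ} {L : ℕ}

lemma distToInt_nonneg (x : ℝ) : 0 ≤ distToInt x := abs_nonneg _

lemma distToInt_le_abs_sub (x : ℝ) (k : ℤ) : distToInt x ≤ |x - k| := round_le x k

lemma distToInt_natCast_mul_le (n : ℕ) (x : ℝ) : distToInt (n * x) ≤ n * distToInt x := by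
  have h := distToInt_le_abs_sub (n * x) (n * round x)
  rwa [Int.cast_mul, Int.cast_natCast, ← mul_sub, abs_mul, Nat.abs_cast] at h

lemma distToInt_natAbs_mul_le (n k : ℤ) (x : ℝ) : distToInt (n.natAbs * x) ≤ |k + x * n| := by
  rw [Nat.cast_natAbs, Int.cast_abs]
  rcases abs_choice (n : ℝ) with h | h <;> rw [h]
  · refine (distToInt_le_abs_sub _ (-k)).trans_eq (congrArg _ ?_)
    push_cast; ring
  · refine (distToInt_le_abs_sub _ k).trans_eq ((abs_neg _).symm.trans (congrArg _ ?_))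
    ring

/-- The exceptions to Littlewood's conjecture for which the lower bound `ε` on `n‖nα‖‖nβ‖` is
uniform in `n`. -/
def uniformExceptions (ε : ℝ) : Set (ℝ × ℝ) :=
  {p | ∀ n : ℕ, n ≠ 0 → ε ≤ n * distToInt (n * p.1) * distToInt (n * p.2)}

/- Applying the bound for large indices to the multiples `(N + 1) n` costs a factor
`(N + 1)³`. -/
lemma exists_mem_uniformExceptions_of_liminf_pos
    (hp : 0 < liminf (fun n : ℕ =>
      ENNReal.ofReal ((n : ℝ) * distToInt (n * p.1) * distToInt (n * p.2))) atTop) :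
    ∃ m : ℕ, p ∈ uniformExceptions (1 / (m + 1)) := by
  obtain ⟨c, hc0, hc⟩ := ENNReal.lt_iff_exists_nnreal_btwn.1 hp
  obtain ⟨N, hN⟩ := (eventually_lt_of_lt_liminf hc).exists_forall_of_atTop
  replace hc0 : (0 : ℝ) < c := by exact_mod_cast hc0
  obtain ⟨m, hm⟩ := exists_nat_one_div_lt (by positivity : 0 < (c : ℝ) / ((N + 1 : ℕ) : ℝ) ^ 3)
  refine ⟨m, fun n hn => hm.le.trans ?_⟩
  have hlarge := hN ((N + 1) * n) (by nlinarith [Nat.pos_of_ne_zero hn])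
  rw [ENNReal.lt_ofReal_iff_toReal_lt ENNReal.coe_ne_top, ENNReal.coe_toReal, Nat.cast_mul,
    mul_assoc _ (n : ℝ) p.1, mul_assoc _ (n : ℝ) p.2] at hlarge
  rw [div_le_iff₀ (by positivity)]
  calc
    (c : ℝ) ≤ ((N + 1 : ℕ) : ℝ) * n * distToInt ((N + 1 : ℕ) * (n * p.1)) *
        distToInt ((N + 1 : ℕ) * (n * p.2)) := hlarge.le
    _ ≤ ((N + 1 : ℕ) : ℝ) * n * ((N + 1 : ℕ) * distToInt (n * p.1)) *
        ((N + 1 : ℕ) * distToInt (n * p.2)) := by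
      gcongr
      · exact distToInt_nonneg _
      · exact mul_nonneg (by positivity) (mul_nonneg (by positivity) (distToInt_nonneg _))
      · exact distToInt_natCast_mul_le _ _
      · exact distToInt_natCast_mul_le _ _
    _ = n * distToInt (n * p.1) * distToInt (n * p.2) * ((N + 1 : ℕ) : ℝ) ^ 3 := by ring

/-- The basis of the unimodular lattice attached to `p` (vectors `(k + n p₁, n, l + n p₂)` with
`k n l : ℤ`), rescaled by the diagonal matrix with entries `σ⁻¹, σ², σ⁻¹`. -/
noncomputable def zoomMatrix (σ : ℝ) (p : ℝ × ℝ) : Matrix (Fin 3) (Fin 3) ℝ :=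
  !![σ⁻¹, σ⁻¹ * p.1, 0; 0, σ ^ 2, 0; 0, σ⁻¹ * p.2, σ⁻¹]

lemma abs_det_zoomMatrix (hσ : 0 < σ) (p : ℝ × ℝ) : |(zoomMatrix σ p).det| = 1 := by
  have h : (zoomMatrix σ p).det = 1 := by
    simp [zoomMatrix, det_fin_three]
    field_simp
  rw [h, abs_one]

lemma unipotent_mul_zoomMatrix (hσ : 0 < σ) (w p : ℝ × ℝ) :
    unipotent w.1 0 w.2 * zoomMatrix σ p = zoomMatrix σ (p + σ ^ 3 • w) := by
  ext i j
  have hσ' (x : ℝ) : σ⁻¹ * (σ ^ 3 * x) = x * σ ^ 2 := by field_simp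
  fin_cases i <;> fin_cases j <;>
    simp [unipotent, zoomMatrix, Matrix.mul_apply, Fin.sum_univ_three, mul_add, hσ', add_comm]

lemma zoomMatrix_mulVec (σ : ℝ) (p : ℝ × ℝ) (v : Fin 3 → ℝ) :
    zoomMatrix σ p *ᵥ v =
      ![σ⁻¹ * (v 0 + p.1 * v 1), σ ^ 2 * v 1, σ⁻¹ * (v 2 + p.2 * v 1)] := by
  ext i
  fin_cases i <;> simp [zoomMatrix, Matrix.mulVec, dotProduct, Fin.sum_univ_three] <;> ring

lemma zoomMatrix_mem_localNormGap (hσ : 0 < σ) (hp : p ∈ uniformExceptions ε) (hK : K < σ⁻¹) :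
    zoomMatrix σ p ∈ localNormGap ε K := by
  refine ⟨abs_det_zoomMatrix hσ p, fun v hv hvK => ?_⟩
  simp only [zoomMatrix_mulVec, Function.comp_apply] at hvK ⊢
  have hlarge (z : ℤ) (hz : z ≠ 0) : K < |σ⁻¹ * (z : ℝ)| := by
    rw [abs_mul, abs_of_pos (inv_pos.2 hσ)]
    exact hK.trans_le (le_mul_of_one_le_right (inv_pos.2 hσ).le
      (by exact_mod_cast Int.one_le_abs hz))
  have hv1 : v 1 ≠ 0 := by
    intro hv1
    have hv0 : v 0 = 0 := by
      by_contra h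
      exact (hlarge _ h).not_ge (by simpa [hv1] using hvK 0)
    have hv2 : v 2 = 0 := by
      by_contra h
      exact (hlarge _ h).not_ge (by simpa [hv1] using hvK 2)
    exact hv (by ext i; fin_cases i <;> assumption)
  calc
    ε ≤ (v 1).natAbs * distToInt ((v 1).natAbs * p.1) * distToInt ((v 1).natAbs * p.2) :=
      hp _ (Int.natAbs_ne_zero.2 hv1)
    _ ≤ |(v 1 : ℝ)| * |v 0 + p.1 * v 1| * |v 2 + p.2 * v 1| := by
      rw [← Int.cast_abs, ← Nat.cast_natAbs]
      gcongr
      · exact distToInt_nonneg _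
      · exact distToInt_natAbs_mul_le _ _ _
      · exact distToInt_natAbs_mul_le _ _ _
    _ = |σ⁻¹ * (v 0 + p.1 * v 1) * (σ ^ 2 * v 1) * (σ⁻¹ * (v 2 + p.2 * v 1))| := by
      rw [← abs_mul, ← abs_mul]
      congr 1
      field_simp
    _ = _ := by simp [Fin.prod_univ_three]

/- The orbits of the lattices `zoomMatrix (σ k) (a k) ℤ³` accumulate on that of a single lattice;
one nonempty family of exceptions is needed for their recurrence to a compact set. -/
lemma exists_limit_mem_planarGapTimes (hε : 0 < ε) {α : Type*} {u : Ultrafilter α} {σ : α → ℝ}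
    (hσ : ∀ k, 0 < σ k) (hσu : Tendsto (fun k => (σ k)⁻¹) u atTop) (a : α → ℝ × ℝ) :
    ∃ g, ∀ (v : α → ℝ × ℝ) (w : ℝ × ℝ), Tendsto v u (𝓝 w) →
      (∀ᶠ k in (u : Filter α), a k + σ k ^ 3 • v k ∈ uniformExceptions ε) →
      w ∈ planarGapTimes ε g := by
  by_cases hex : ∃ (v₀ : α → ℝ × ℝ) (w₀ : ℝ × ℝ), Tendsto v₀ u (𝓝 w₀) ∧
    ∀ᶠ k in (u : Filter α), a k + σ k ^ 3 • v₀ k ∈ uniformExceptions ε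
  swap
  · exact ⟨0, fun v w hv hmem => absurd ⟨v, w, hv, hmem⟩ hex⟩
  obtain ⟨v₀, w₀, hv₀, hmem₀⟩ := hex
  obtain ⟨K₀, C, hred⟩ := exists_bounded_sameLattice_of_localNormGap (ι := Fin 3) hε
  have hbases : ∀ᶠ k in (u : Filter α), ∃ y,
      SameLattice (zoomMatrix (σ k) (a k + σ k ^ 3 • v₀ k)) y ∧ ∀ i j, |y i j| ≤ C := by
    filter_upwards [hmem₀, hσu.eventually_gt_atTop K₀] with k hk hK
    exact hred _ (zoomMatrix_mem_localNormGap (hσ k) hk hK)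
  obtain ⟨y, hy⟩ := hbases.choice
  obtain ⟨Y, -, hY⟩ := exists_mem_tendsto_ultrafilter (isCompact_setOf_forall_abs_le C) u
    (hy.mono fun k hk => hk.2)
  refine ⟨unipotent (-w₀.1) 0 (-w₀.2) * Y, fun v w hv hmem => ?_⟩
  rw [planarGapTimes, Set.mem_ofPred_eq, ← Matrix.mul_assoc, unipotent_mul_unipotent, add_zero,
    zero_mul, add_zero, ← sub_eq_add_neg, ← sub_eq_add_neg]
  refine mem_normGap_of_tendsto (tendsto_matrix_mul (tendsto_unipotent
    ((hv.sub hv₀).fst_nhds) tendsto_const_nhds ((hv.sub hv₀).snd_nhds)) hY) fun K => ?_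
  filter_upwards [hmem, hy, hσu.eventually_gt_atTop K] with k hk hyk hK
  have hsame := hyk.1.mul_left (abs_det_unipotent (v k - v₀ k).1 0 (v k - v₀ k).2)
  rw [unipotent_mul_zoomMatrix (hσ k), add_assoc, ← smul_add, add_sub_cancel] at hsame
  exact hsame.mem_localNormGap (zoomMatrix_mem_localNormGap (hσ k) hk hK)

lemma isCompact_unitSquare (w : ℤ × ℤ) : IsCompact (unitSquare w) :=
  isCompact_Icc.prod isCompact_Icc

lemma eventually_squaresMeeting_subset {α : Type*} {u : Ultrafilter α} {A : α → Set (ℝ × ℝ)}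
    {S : Set (ℝ × ℝ)} (hlim : ∀ (v : α → ℝ × ℝ) (w : ℝ × ℝ), Tendsto v u (𝓝 w) →
      (∀ᶠ k in (u : Filter α), v k ∈ A k) → w ∈ S) :
    ∀ᶠ k in (u : Filter α), squaresMeeting L (A k) ⊆ squaresMeeting L S := by
  have hgrid : ∀ z ∈ Set.Ico 0 (L : ℤ) ×ˢ Set.Ico 0 (L : ℤ), ∀ᶠ k in (u : Filter α),
      z ∈ squaresMeeting L (A k) → z ∈ squaresMeeting L S := by
    intro z hz
    rw [Ultrafilter.eventually_imp]
    intro hmeet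
    obtain ⟨v, hv⟩ := (hmeet.mono fun k hk => (mem_squaresMeeting.1 hk).2).choice
    obtain ⟨w, hw, hvw⟩ := exists_mem_tendsto_ultrafilter (isCompact_unitSquare z) u
      (hv.mono fun k hk => hk.1)
    exact Eventually.of_forall fun _ =>
      mem_squaresMeeting.2 ⟨hz, w, hw, hlim v w hvw (hv.mono fun k hk => hk.2)⟩
  filter_upwards [(eventually_all_finite ((Set.finite_Ico _ _).prod (Set.finite_Ico _ _))).2 hgrid]
    with k hk z hz
  exact hk z (mem_squaresMeeting.1 hz).1 hz

theorem exists_forall_card_squaresMeeting_uniformExceptions_le (hε : 0 < ε)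
    (hB : ∀ g, (#(squaresMeeting L (planarGapTimes ε g)) : ℝ) ≤ B) :
    ∃ δ₀ > 0, ∀ δ : ℝ, 0 < δ → δ ≤ δ₀ → ∀ a : ℝ × ℝ,
      (#(squaresMeeting L ((fun w => a + δ • w) ⁻¹' uniformExceptions ε)) : ℝ) ≤ B := by
  by_contra! hmany
  choose! δ hδ hδk a hcard using fun k : ℕ => hmany (1 / (k + 1)) Nat.one_div_pos_of_nat
  have hδ_inv : Tendsto (fun k => (δ k)⁻¹) atTop atTop := by
    refine tendsto_atTop_mono (fun k => ?_) tendsto_natCast_atTop_atTop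
    calc (k : ℝ) ≤ (1 / ((k : ℝ) + 1))⁻¹ := by simp
      _ ≤ (δ k)⁻¹ := inv_anti₀ (hδ k) (hδk k)
  have hcube (k : ℕ) : (δ k ^ (1 / 3 : ℝ)) ^ 3 = δ k := by
    rw [← Real.rpow_mul_natCast (hδ k).le]
    norm_num
  have hσ : Tendsto (fun k => (δ k ^ (1 / 3 : ℝ))⁻¹) (hyperfilter ℕ) atTop := by
    simpa only [Function.comp_def, ← Real.inv_rpow (hδ _).le] using
      ((tendsto_rpow_atTop (by norm_num : (0 : ℝ) < 1 / 3)).comp hδ_inv).mono_left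
        Nat.hyperfilter_le_atTop
  obtain ⟨g, hg⟩ := exists_limit_mem_planarGapTimes hε (fun k => Real.rpow_pos_of_pos (hδ k) _) hσ a
  simp only [hcube] at hg
  obtain ⟨k, hk⟩ := (eventually_squaresMeeting_subset (L := L)
    (A := fun k => (fun w => a k + δ k • w) ⁻¹' uniformExceptions ε) hg).exists
  exact ((hcard k).trans_le ((Nat.cast_le.2 (Finset.card_le_card hk)).trans (hB g))).false

end UniformExceptions

/-! ### Hausdorff dimension -/

section BoxCounting

lemma dimH_le_of_ncard_image_mul_rpow_le {X κ : Type*} [EMetricSpace X] {F : Set X}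
    {cell : ℕ → X → κ} {r : ℕ → ℝ≥0} {C d : ℝ≥0} (hr : Tendsto r atTop (𝓝 0))
    (hfin : ∀ m, (cell m '' F).Finite)
    (hdiam : ∀ m, ∀ p ∈ F, ∀ p' ∈ F, cell m p = cell m p' → edist p p' ≤ r m)
    (hcount : ∀ m, (cell m '' F).ncard * r m ^ (d : ℝ) ≤ C) : dimH F ≤ d := by
  borelize X
  have hfintype (m : ℕ) : Fintype (cell m '' F) := (hfin m).fintype
  have hediam (m : ℕ) (c : cell m '' F) : Metric.ediam {p ∈ F | cell m p = c} ≤ r m :=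
    Metric.ediam_le fun p hp p' hp' => hdiam m p hp.1 p' hp'.1 (hp.2.trans hp'.2.symm)
  refine dimH_le_of_hausdorffMeasure_ne_top (ne_top_of_le_ne_top (ENNReal.coe_ne_top (r := C))
    ((Measure.hausdorffMeasure_le_liminf_sum (d : ℝ) F (fun m => (r m : ℝ≥0∞))
      (ENNReal.tendsto_coe.2 hr) (fun m (c : cell m '' F) => {p ∈ F | cell m p = c})
      (Eventually.of_forall hediam) (Eventually.of_forall fun m p hp =>
        Set.mem_iUnion.2 ⟨⟨cell m p, p, hp, rfl⟩, hp, rfl⟩)).trans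
    (liminf_le_of_frequently_le' (Frequently.of_forall fun m => ?_))))
  calc
    ∑ c : cell m '' F, Metric.ediam {p ∈ F | cell m p = c} ^ (d : ℝ)
        ≤ ∑ _c : cell m '' F, (r m : ℝ≥0∞) ^ (d : ℝ) :=
      Finset.sum_le_sum fun c _ => ENNReal.rpow_le_rpow (hediam m c) d.coe_nonneg
    _ = ((cell m '' F).ncard * r m ^ (d : ℝ) : ℝ≥0) := by
      rw [Finset.sum_const, Finset.card_univ, ← Nat.card_eq_fintype_card, Nat.card_coe_set_eq,
        nsmul_eq_mul, ENNReal.coe_mul, ENNReal.coe_natCast,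
        ENNReal.coe_rpow_of_nonneg _ d.coe_nonneg]
    _ ≤ C := ENNReal.coe_le_coe.2 (hcount m)

variable {δ B : ℝ} {L : ℕ} {F : Set (ℝ × ℝ)} {p p' : ℝ × ℝ}

/-- The index of the half-open square of the grid of mesh `δ` that contains `p`. -/
noncomputable def gridCell (δ : ℝ) (p : ℝ × ℝ) : ℤ × ℤ := (⌊p.1 / δ⌋, ⌊p.2 / δ⌋)

lemma finite_image_gridCell (δ : ℝ) (hF : Bornology.IsBounded F) : (gridCell δ '' F).Finite := by
  obtain ⟨R, hR⟩ := hF.exists_norm_le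
  have hfloor (t : ℝ) (ht : |t| ≤ R) : ⌊t / δ⌋ ∈ Set.Icc ⌊-(R / |δ|)⌋ ⌊R / |δ|⌋ := by
    have habs : |t / δ| ≤ R / |δ| := by
      rw [abs_div]
      gcongr
    exact ⟨Int.floor_mono (abs_le.1 habs).1, Int.floor_mono (abs_le.1 habs).2⟩
  refine ((Set.finite_Icc ⌊-(R / |δ|)⌋ ⌊R / |δ|⌋).prod
    (Set.finite_Icc ⌊-(R / |δ|)⌋ ⌊R / |δ|⌋)).subset ?_
  rintro _ ⟨p, hp, rfl⟩
  exact ⟨hfloor _ ((norm_fst_le p).trans (hR p hp)), hfloor _ ((norm_snd_le p).trans (hR p hp))⟩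

lemma dist_le_of_gridCell_eq (hδ : 0 < δ) (h : gridCell δ p = gridCell δ p') : dist p p' ≤ δ := by
  have hcoord (s t : ℝ) (hst : ⌊s / δ⌋ = ⌊t / δ⌋) : dist s t ≤ δ := by
    have hlt := Int.abs_sub_lt_one_of_floor_eq_floor hst
    rw [← sub_div, abs_div, abs_of_pos hδ, div_lt_one hδ] at hlt
    exact hlt.le
  exact max_le (hcoord _ _ (congrArg Prod.fst h)) (hcoord _ _ (congrArg Prod.snd h))

lemma floor_mul_natCast_sub_mem_Ico (hL : 0 < L) (t : ℝ) :
    ⌊t * L⌋ - L * ⌊t⌋ ∈ Set.Ico 0 (L : ℤ) := by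
  have hL' : (0 : ℝ) < L := Nat.cast_pos.2 hL
  rw [Set.mem_Ico, sub_nonneg, sub_lt_iff_lt_add, Int.le_floor, Int.floor_lt]
  push_cast
  constructor <;> nlinarith [Int.floor_le t, Int.lt_floor_add_one t]

lemma gridCell_sub_mem_squaresMeeting (hδ : 0 < δ) (hL : 0 < L) (hp : p ∈ F) :
    gridCell (δ / L) p - (L : ℤ) • gridCell δ p ∈ squaresMeeting L
      ((fun w => δ • (((gridCell δ p).1 : ℝ), ((gridCell δ p).2 : ℝ)) + (δ / L) • w) ⁻¹' F) := by
  have hmem (t : ℝ) : ⌊t / (δ / L)⌋ - L * ⌊t / δ⌋ ∈ Set.Ico 0 (L : ℤ) := by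
    rw [div_div_eq_mul_div, mul_div_right_comm]
    exact floor_mul_natCast_sub_mem_Ico hL (t / δ)
  have hIcc (t : ℝ) (k : ℤ) : t / (δ / L) - L * k ∈
      Set.Icc ((⌊t / (δ / L)⌋ - L * k : ℤ) : ℝ) ((⌊t / (δ / L)⌋ - L * k : ℤ) + 1) := by
    push_cast
    constructor <;> linarith [Int.floor_le (t / (δ / L)), Int.lt_floor_add_one (t / (δ / L))]
  refine mem_squaresMeeting.2 ⟨⟨hmem p.1, hmem p.2⟩, (p.1 / (δ / L) - L * ⌊p.1 / δ⌋,
    p.2 / (δ / L) - L * ⌊p.2 / δ⌋), ⟨hIcc _ _, hIcc _ _⟩, ?_⟩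
  have hcancel (t k : ℝ) : δ * k + δ / L * (t / (δ / L) - L * k) = t := by
    field_simp
    ring
  exact Set.mem_preimage.2 (Set.mem_of_eq_of_mem (Prod.ext (hcancel p.1 _) (hcancel p.2 _)) hp)

lemma ncard_image_gridCell_div_le (hδ : 0 < δ) (hL : 0 < L) (hF : Bornology.IsBounded F)
    (hB : ∀ a, (#(squaresMeeting L ((fun w => a + (δ / L) • w) ⁻¹' F)) : ℝ) ≤ B) :
    ((gridCell (δ / L) '' F).ncard : ℝ) ≤ (gridCell δ '' F).ncard * B := by
  classical
  have hfin := finite_image_gridCell δ hF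
  let children (c : ℤ × ℤ) : Finset (ℤ × ℤ) := (squaresMeeting L
    ((fun w => δ • ((c.1 : ℝ), (c.2 : ℝ)) + (δ / L) • w) ⁻¹' F)).image ((L : ℤ) • c + ·)
  have hcover : gridCell (δ / L) '' F ⊆ hfin.toFinset.biUnion children := by
    rintro _ ⟨p, hp, rfl⟩
    exact Finset.mem_biUnion.2 ⟨gridCell δ p, hfin.mem_toFinset.2 ⟨p, hp, rfl⟩,
      Finset.mem_image.2 ⟨_, gridCell_sub_mem_squaresMeeting hδ hL hp, add_sub_cancel _ _⟩⟩
  calc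
    ((gridCell (δ / L) '' F).ncard : ℝ) ≤ #(hfin.toFinset.biUnion children) := by
      rw [← Set.ncard_coe_finset]
      exact_mod_cast Set.ncard_le_ncard hcover (Finset.finite_toSet _)
    _ ≤ ∑ c ∈ hfin.toFinset, (#(children c) : ℝ) := by exact_mod_cast Finset.card_biUnion_le
    _ ≤ #hfin.toFinset • B := Finset.sum_le_card_nsmul _ _ _ fun c _ =>
      (Nat.cast_le.2 Finset.card_image_le).trans (hB _)
    _ = (gridCell δ '' F).ncard * B := by
      rw [nsmul_eq_mul, Set.ncard_eq_toFinset_card _ hfin]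

lemma dimH_le_of_forall_card_squaresMeeting_le (hF : Bornology.IsBounded F) (hL : 2 ≤ L)
    {d δ₀ : ℝ≥0} (hδ₀ : 0 < δ₀) (hcount : ∀ δ : ℝ, 0 < δ → δ ≤ δ₀ → ∀ a : ℝ × ℝ,
      (#(squaresMeeting L ((fun w => a + δ • w) ⁻¹' F)) : ℝ) ≤ L ^ (d : ℝ)) : dimH F ≤ d := by
  set N : ℕ → ℕ := fun m => (gridCell (δ₀ / L ^ m) '' F).ncard
  have hL0 : 0 < L := by omega
  have hstep (m : ℕ) : (N (m + 1) : ℝ≥0) ≤ N m * L ^ (d : ℝ) := by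
    have h := ncard_image_gridCell_div_le (δ := δ₀ / L ^ m) (by positivity) hL0 hF
      (hcount _ (by positivity) (by
        rw [div_div, ← pow_succ]
        exact div_le_self δ₀.coe_nonneg (one_le_pow₀ (by exact_mod_cast hL0))))
    rw [div_div, ← pow_succ] at h
    exact NNReal.coe_le_coe.1 (by push_cast; exact h)
  have hN (m : ℕ) : (N m : ℝ≥0) ≤ N 0 * (L ^ (d : ℝ)) ^ m := by
    induction m with
    | zero => simp
    | succ m ih =>
      calc (N (m + 1) : ℝ≥0) ≤ N m * L ^ (d : ℝ) := hstep m
        _ ≤ N 0 * (L ^ (d : ℝ)) ^ m * L ^ (d : ℝ) := by gcongr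
        _ = N 0 * (L ^ (d : ℝ)) ^ (m + 1) := by rw [pow_succ, mul_assoc]
  have hr : Tendsto (fun m => δ₀ / (L : ℝ≥0) ^ m) atTop (𝓝 0) := by
    simpa [div_eq_mul_inv] using (NNReal.tendsto_pow_atTop_nhds_zero_of_lt_one
      (r := (L : ℝ≥0)⁻¹) (inv_lt_one_of_one_lt₀ (by exact_mod_cast hL))).const_mul δ₀
  refine dimH_le_of_ncard_image_mul_rpow_le (cell := fun m => gridCell (δ₀ / L ^ m))
    (C := N 0 * δ₀ ^ (d : ℝ)) hr (fun m => finite_image_gridCell _ hF)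
    (fun m p _ p' _ h => ?_) fun m => ?_
  · rw [edist_le_coe, ← NNReal.coe_le_coe, coe_nndist]
    exact_mod_cast dist_le_of_gridCell_eq (by positivity) h
  · calc N m * (δ₀ / (L : ℝ≥0) ^ m) ^ (d : ℝ)
        ≤ N 0 * (L ^ (d : ℝ)) ^ m * (δ₀ / (L : ℝ≥0) ^ m) ^ (d : ℝ) := by
          gcongr
          exact hN m
      _ = N 0 * δ₀ ^ (d : ℝ) := by
        rw [NNReal.div_rpow, ← NNReal.rpow_natCast, ← NNReal.rpow_natCast, ← NNReal.rpow_mul,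
          ← NNReal.rpow_mul, mul_comm (m : ℝ), mul_assoc, mul_div_cancel₀ _ (by positivity)]

theorem dimH_uniformExceptions {ε : ℝ} (hε : 0 < ε) : dimH (uniformExceptions ε) = 0 := by
  have hbounded (R : ℕ) : dimH (uniformExceptions ε ∩ Metric.closedBall 0 R) = 0 := by
    refine nonpos_iff_eq_zero.1 (ENNReal.le_of_forall_pos_le_add fun d hd _ => ?_)
    obtain ⟨L, hL, hgap⟩ := exists_forall_card_squaresMeeting_planarGapTimes_le hε
      (NNReal.coe_pos.2 hd)
    obtain ⟨δ₀, hδ₀, hcount⟩ := exists_forall_card_squaresMeeting_uniformExceptions_le hε hgap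
    lift δ₀ to ℝ≥0 using hδ₀.le
    rw [zero_add]
    refine dimH_le_of_forall_card_squaresMeeting_le
      (Metric.isBounded_closedBall.subset Set.inter_subset_right) hL (NNReal.coe_pos.1 hδ₀)
      fun δ hδ hδδ₀ a => (Nat.cast_le.2 (Finset.card_le_card (squaresMeeting_mono
        (Set.preimage_mono Set.inter_subset_left)))).trans (hcount δ hδ hδδ₀ a)
  rw [← Set.inter_univ (uniformExceptions ε), ← Metric.iUnion_closedBall_nat (0 : ℝ × ℝ),
    Set.inter_iUnion, dimH_iUnion]
  simp only [hbounded, iSup_const]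

end BoxCounting

end LittlewoodExceptions

/-- Einsiedler–Katok–Lindenstrauss: the set of exceptions `(α, β)` to
Littlewood's conjecture, i.e. of pairs with `liminf_{n→∞} n‖nα‖‖nβ‖ > 0`, has Hausdorff
dimension zero. -/
theorem littlewood_exceptions_hausdorff_dimension_zero :
    dimH {p : ℝ × ℝ |
      0 < Filter.atTop.liminf (fun n : ℕ =>
        ENNReal.ofReal ((n : ℝ) * distToInt (n * p.1) * distToInt (n * p.2)))} = 0 := by
  have hcover : {p : ℝ × ℝ | 0 < Filter.atTop.liminf (fun n : ℕ =>
      ENNReal.ofReal ((n : ℝ) * distToInt (n * p.1) * distToInt (n * p.2)))} ⊆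
      ⋃ m : ℕ, LittlewoodExceptions.uniformExceptions (1 / (m + 1)) := fun _ hp =>
    Set.mem_iUnion.2 (LittlewoodExceptions.exists_mem_uniformExceptions_of_liminf_pos hp)
  refine nonpos_iff_eq_zero.1 ((dimH_mono hcover).trans_eq ?_)
  rw [dimH_iUnion]
  exact ENNReal.iSup_eq_zero.2 fun m =>
    LittlewoodExceptions.dimH_uniformExceptions Nat.one_div_pos_of_nat
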